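/- For every integer s ≥ 1, the dimension over F_2 of the subspace of GL_4(F_2)-invariants of Q_n in degree n = 2(2^s − 1) + 2^s = 3·2^s − 2 equals 0 if s ∈ {1, 2, 4} and equals 1 if s ∉ {1, 2, 4}. -/

import Mathlib

/-!
Common setup: the polynomial algebra `P_4 = F_2[x_1,x_2,x_3,x_4]` (variables `X 0, ..., X 3`),
the Steenrod action, hit polynomials, the cohit spaces `Q_n`, and the (induced) actions of
`GL_4(F_2)` and of the symmetric group `Σ_4` on `Q_n`.
-/

open MvPolynomial

noncomputable section

abbrev kk : Type := ZMod 2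
abbrev P4 : Type := MvPolynomial (Fin 4) kk

/-- The total Steenrod square: the algebra endomorphism of `P4` with `X i ↦ X i + (X i)^2`.
For `g` homogeneous of degree `d`, `Sq^t g` is the degree-`d+t` homogeneous component
of `sqTotal g`. -/
def sqTotal : P4 →ₐ[kk] P4 := aeval fun i => X i + X i ^ 2

/-- The homogeneous polynomials of degree `n`, i.e. `(P_4)_n`, as a submodule. -/
def homog (n : ℕ) : Submodule kk P4 := homogeneousSubmodule (Fin 4) kk n

/-- The subspace `H_n` of hit polynomials of degree `n`: it is spanned by the elements
`Sq^{n-d}(g) = (sqTotal g)_n` for `g` homogeneous of degree `d < n`, i.e. by all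
`∑_{t>0} Sq^t(f_t)` with `f_t ∈ (P_4)_{n-t}`. -/
def hitSub (n : ℕ) : Submodule kk P4 :=
  Submodule.span kk
    {p | ∃ d, d < n ∧ ∃ g ∈ homog d, p = homogeneousComponent n (sqTotal g)}

/-- The cohit space `Q_n = (P_4)_n / H_n`. -/
abbrev Qn (n : ℕ) :=
  ↥(homog n) ⧸ ((hitSub n).comap (homog n).subtype)

/-- Projection of a polynomial onto its degree-`n` part, landing in `homog n`. -/
def toHomog (n : ℕ) : P4 →ₗ[kk] homog n :=
  (homogeneousComponent n).codRestrict (homog n) fun f => homogeneousComponent_mem n f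

/-- The class in `Q_n` of (the degree-`n` component of) a polynomial.  For `f`
homogeneous of degree `n` this is the class `[f]` of `f`. -/
def Qmk (n : ℕ) : P4 →ₗ[kk] Qn n :=
  ((hitSub n).comap (homog n).subtype).mkQ.comp (toHomog n)

/-- Substitution action of a matrix `M`: the algebra endomorphism `X i ↦ ∑ j M i j • X j`. -/
def substM (M : Matrix (Fin 4) (Fin 4) kk) : P4 →ₐ[kk] P4 :=
  aeval fun i => ∑ j, M i j • X j

/-- The set of invertible `4 × 4` matrices over `F_2`, i.e. `GL_4(F_2)`. -/
def glSet : Set (Matrix (Fin 4) (Fin 4) kk) := {M | IsUnit M}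

/-- The set of permutation matrices, i.e. `Σ_4 ⊆ GL_4(F_2)`. -/
def permSet : Set (Matrix (Fin 4) (Fin 4) kk) :=
  {M | ∃ σ : Equiv.Perm (Fin 4), M = σ.toPEquiv.toMatrix}

/-- Homogeneous polynomials of degree `n` whose class in `Q_n` is invariant under every
element of `G` (the action on classes being induced by `substM`): for every `M ∈ G`,
`M·f - f` is hit. -/
def invPre (n : ℕ) (G : Set (Matrix (Fin 4) (Fin 4) kk)) : Submodule kk P4 :=
  homog n ⊓ ⨅ M ∈ G, (hitSub n).comap ((substM M).toLinearMap - LinearMap.id)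

/-- The subspace `(Q_n)^G` of `G`-invariant classes in `Q_n`. -/
def QInv (n : ℕ) (G : Set (Matrix (Fin 4) (Fin 4) kk)) : Submodule kk (Qn n) :=
  (invPre n G).map (Qmk n)

/-- The `Σ_4`-submodule of `Q_n` generated by the classes of the polynomials in `S`:
the span of the classes of all the permuted polynomials `σ · f`, `σ ∈ Σ_4`, `f ∈ S`. -/
def permSpan (n : ℕ) (S : Set P4) : Submodule kk (Qn n) :=
  Submodule.span kk
    {c | ∃ σ : Equiv.Perm (Fin 4), ∃ f ∈ S, c = Qmk n (rename (⇑σ) f)}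

/-!
In degree `3 * 2 ^ s - 2`, congruences modulo hit polynomials turn every polynomial `f` into
`x₁x₂x₃x₄ * g ^ 2`, where `g` is the image of `f` under Kameko's map, plus a sum of words
`a₁ * (a₂ * (⋯ (aₛ * x ^ 2) ^ 2 ⋯) ^ 2) ^ 2` whose letters `aᵢ` are products of two variables and
whose tail `x` is a variable. In the target degree `3 * 2 ^ (s - 1) - 3` of Kameko's map, words in
products of three variables with cubic tails suffice. The class of a word depends only on its tail,
its length and its set of letters, so only finitely many cases have to be considered.

A spike occurs in no nontrivial Steenrod square, so taking its coefficient after a linear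
substitution gives a functional that vanishes on hit polynomials. On words these functionals are
products of `2 × 2` or `3 × 3` minors of the substitution, one factor for each letter, with a factor
for the tail. For pair words they depend on a plane and a vector in it, and for triple words on a
hyperplane and a vector in it. Ranks over the two-element field show which values they take and that
they detect all relations, apart from finitely many exceptional classes of triple words.

`GL_4` permutes these functionals transitively, so on an invariant class they all take the same
value. For pair words they are additive in the vector, so this value is `0`, and hence the
invariants in degree `3 * 2 ^ s - 2` with `s ≥ 3` are, through Kameko's map, those in degree
`3 * 2 ^ (s - 1) - 3`. For triple words with at least three letters the common value `1` is
attained, which gives one invariant class. With fewer letters it is not attained, and the invariants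
come from the exceptional classes: one class in degree `9`, which is invariant, and four classes in
degree `21`, no nonzero combination of which is invariant.
-/

/-- The polynomials whose component of degree `n` is hit. Working with this submodule of `P4`
instead of `hitSub n` means that congruences modulo hit polynomials can be stated without
homogeneity assumptions. -/
def hitAt (n : ℕ) : Submodule kk P4 := (hitSub n).comap (homogeneousComponent n)

theorem zmod_two_eq_zero_or_one (c : kk) : c = 0 ∨ c = 1 := by revert c; decide

theorem two_eq_zero : (2 : P4) = 0 := CharTwo.two_eq_zero

section HomogeneousComponents

variable {n d e : ℕ} {f g p : P4}

theorem homogeneousComponent_of_mem_homog (h : f ∈ homog n) : homogeneousComponent n f = f := by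
  rw [homogeneousComponent_of_mem h, if_pos rfl]

theorem homogeneousComponent_of_mem_homog_of_ne (h : f ∈ homog d) (hne : n ≠ d) :
    homogeneousComponent n f = 0 := by
  rw [homogeneousComponent_of_mem h, if_neg hne]

theorem X_mem_homog (i : Fin 4) : (X i : P4) ∈ homog 1 := isHomogeneous_X _ i

theorem one_mem_homog : (1 : P4) ∈ homog 0 := isHomogeneous_one _ _

theorem monomial_mem_homog (a : Fin 4 →₀ ℕ) : (monomial a (1 : kk)) ∈ homog a.degree :=
  isHomogeneous_monomial _ rfl

theorem mul_mem_homog (hp : p ∈ homog e) (hf : f ∈ homog d) : p * f ∈ homog (e + d) :=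
  IsHomogeneous.mul hp hf

theorem pow_mem_homog (hf : f ∈ homog d) (k : ℕ) : f ^ k ∈ homog (d * k) :=
  IsHomogeneous.pow hf k

theorem prod_X_mem_homog {ι : Type*} (v : ι → Fin 4) (A : Finset ι) :
    (∏ i ∈ A, X (v i) : P4) ∈ homog A.card := by
  have h := IsHomogeneous.prod A (fun i => (X (v i) : P4)) (fun _ => 1) fun i _ => X_mem_homog _
  rwa [Finset.sum_const, smul_eq_mul, mul_one] at h

/-- The product of the variables indexed by `A`. -/
def varProd (A : Finset (Fin 4)) : P4 := ∏ i ∈ A, X i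

theorem varProd_mem_homog (A : Finset (Fin 4)) : varProd A ∈ homog A.card :=
  prod_X_mem_homog id A

theorem homog_induction {motive : P4 → Prop} (homog : ∀ d, ∀ f ∈ homog d, motive f)
    (add : ∀ f g, motive f → motive g → motive (f + g)) (f : P4) : motive f := by
  rw [← sum_homogeneousComponent f]
  exact Finset.sum_induction _ motive add (homog 0 0 (zero_mem _)) fun i _ =>
    homog i _ (homogeneousComponent_mem i f)

theorem homogeneousComponent_mul_pow_two_pow (hp : p ∈ homog e) (k r : ℕ) (f : P4) :
    homogeneousComponent (e + k * 2 ^ r) (p * f ^ 2 ^ r) =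
      p * homogeneousComponent k f ^ 2 ^ r := by
  induction f using homog_induction with
  | homog d f hf =>
    have hpf := mul_mem_homog hp (pow_mem_homog hf (2 ^ r))
    obtain rfl | hk := eq_or_ne k d
    · rw [homogeneousComponent_of_mem_homog hpf, homogeneousComponent_of_mem_homog hf]
    · rw [homogeneousComponent_of_mem_homog_of_ne hpf (by simpa using hk),
        homogeneousComponent_of_mem_homog_of_ne hf hk]
      simp
  | add f g hf hg =>
    rw [add_pow_char_pow, mul_add, map_add, hf, hg, map_add, add_pow_char_pow, mul_add]

theorem homogeneousComponent_mul_pow_two_pow_of_ne (hp : p ∈ homog e) {r : ℕ} (f : P4)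
    (hn : ∀ k, n ≠ e + k * 2 ^ r) : homogeneousComponent n (p * f ^ 2 ^ r) = 0 := by
  induction f using homog_induction with
  | homog d f hf =>
    exact homogeneousComponent_of_mem_homog_of_ne
      (mul_mem_homog hp (pow_mem_homog hf (2 ^ r))) (hn d)
  | add f g hf hg => rw [add_pow_char_pow, mul_add, map_add, hf, hg, add_zero]

theorem homogeneousComponent_mul_sq (hp : p ∈ homog e) (k : ℕ) (f : P4) :
    homogeneousComponent (e + 2 * k) (p * f ^ 2) = p * homogeneousComponent k f ^ 2 := by
  simpa [mul_comm] using homogeneousComponent_mul_pow_two_pow hp k 1 f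

theorem homogeneousComponent_mul_sq_of_ne (hp : p ∈ homog e) (f : P4)
    (hn : ∀ k, n ≠ e + 2 * k) : homogeneousComponent n (p * f ^ 2) = 0 := by
  simpa using homogeneousComponent_mul_pow_two_pow_of_ne (r := 1) hp f
    (by simpa [mul_comm] using hn)

theorem homogeneousComponent_mul (hp : p ∈ homog e) (k : ℕ) (f : P4) :
    homogeneousComponent (e + k) (p * f) = p * homogeneousComponent k f := by
  simpa using homogeneousComponent_mul_pow_two_pow hp k 0 f

theorem homogeneousComponent_mul_of_lt (hp : p ∈ homog e) (hn : n < e) (f : P4) :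
    homogeneousComponent n (p * f) = 0 := by
  simpa using homogeneousComponent_mul_pow_two_pow_of_ne (r := 0) hp f (by omega)

end HomogeneousComponents

section TotalSquare

variable {d n : ℕ} {f : P4}

@[simp] theorem sqTotal_X (i : Fin 4) : sqTotal (X i) = X i + X i ^ 2 := by simp [sqTotal]

theorem exists_sqTotal_monomial_eq_mul (a : Fin 4 →₀ ℕ) (c : kk) :
    ∃ g, homogeneousComponent 0 g = 1 ∧ sqTotal (monomial a c) = monomial a c * g := by
  refine induction_on_monomial (motive := fun f : P4 =>
    ∃ g, homogeneousComponent 0 g = 1 ∧ sqTotal f = f * g) ?_ ?_ a c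
  · exact fun c => ⟨1, homogeneousComponent_of_mem_homog one_mem_homog, by
      rw [mul_one, sqTotal, aeval_C, algebraMap_eq]⟩
  · rintro p i ⟨g, hg, hp⟩
    refine ⟨g * (1 + X i), ?_, by rw [map_mul, hp, sqTotal_X]; ring⟩
    rw [mul_add, mul_one, map_add, hg, mul_comm,
      homogeneousComponent_mul_of_lt (X_mem_homog i) zero_lt_one, add_zero]

theorem homogeneousComponent_sqTotal (hf : f ∈ homog d) :
    (∀ m < d, homogeneousComponent m (sqTotal f) = 0) ∧
      homogeneousComponent d (sqTotal f) = f := by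
  have hdeg : ∀ a ∈ f.support, monomial a (coeff a f) ∈ homog d := fun a ha =>
    isHomogeneous_monomial _ (by
      rw [Finsupp.degree_eq_weight_one]; exact hf (mem_support_iff.1 ha))
  rw [← f.support_sum_monomial_coeff]
  simp only [map_sum]
  refine ⟨fun m hm => Finset.sum_eq_zero fun a ha => ?_, Finset.sum_congr rfl fun a ha => ?_⟩ <;>
    obtain ⟨g, hg, hsq⟩ := exists_sqTotal_monomial_eq_mul a (coeff a f) <;> rw [hsq]
  · exact homogeneousComponent_mul_of_lt (hdeg a ha) hm g
  · simpa [hg] using homogeneousComponent_mul (hdeg a ha) 0 g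

theorem homogeneousComponent_sqTotal_of_lt (hf : f ∈ homog d) (hn : n < d) :
    homogeneousComponent n (sqTotal f) = 0 :=
  (homogeneousComponent_sqTotal hf).1 n hn

theorem homogeneousComponent_sqTotal_self (hf : f ∈ homog d) :
    homogeneousComponent d (sqTotal f) = f :=
  (homogeneousComponent_sqTotal hf).2

end TotalSquare

section HitPolynomials

variable {n : ℕ} {f : P4}

theorem hitSub_le_homog (n : ℕ) : hitSub n ≤ homog n := by
  rw [hitSub, Submodule.span_le]
  rintro p ⟨d, _, g, _, rfl⟩
  exact homogeneousComponent_mem n _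

theorem mem_hitAt : f ∈ hitAt n ↔ homogeneousComponent n f ∈ hitSub n := Iff.rfl

theorem mem_hitAt_of_mem_hitSub (h : f ∈ hitSub n) : f ∈ hitAt n := by
  rwa [mem_hitAt, homogeneousComponent_of_mem_homog (hitSub_le_homog n h)]

theorem mem_hitSub_iff (hf : f ∈ homog n) : f ∈ hitSub n ↔ f ∈ hitAt n := by
  rw [mem_hitAt, homogeneousComponent_of_mem_homog hf]

theorem homogeneousComponent_mem_hitAt :
    homogeneousComponent n f ∈ hitAt n ↔ f ∈ hitAt n := by
  rw [mem_hitAt, mem_hitAt,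
    homogeneousComponent_of_mem_homog (homogeneousComponent_mem n f)]

theorem mem_hitAt_of_homogeneousComponent_eq_zero (h : homogeneousComponent n f = 0) :
    f ∈ hitAt n := by
  rw [mem_hitAt, h]
  exact zero_mem _

theorem homogeneousComponent_add_self_mem_hitAt (n : ℕ) (f : P4) :
    homogeneousComponent n f + f ∈ hitAt n :=
  mem_hitAt_of_homogeneousComponent_eq_zero <| by
    rw [map_add, homogeneousComponent_of_mem_homog (homogeneousComponent_mem n f),
      CharTwo.add_self_eq_zero]

theorem sqTotal_add_self_mem_hitAt (n : ℕ) (f : P4) : sqTotal f + f ∈ hitAt n := by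
  induction f using homog_induction with
  | homog d f hf =>
    rcases lt_trichotomy d n with h | rfl | h
    · rw [mem_hitAt, map_add, homogeneousComponent_of_mem_homog_of_ne hf h.ne', add_zero]
      exact Submodule.subset_span ⟨d, h, f, hf, rfl⟩
    · apply mem_hitAt_of_homogeneousComponent_eq_zero
      rw [map_add, homogeneousComponent_sqTotal_self hf, homogeneousComponent_of_mem_homog hf,
        CharTwo.add_self_eq_zero]
    · apply mem_hitAt_of_homogeneousComponent_eq_zero
      rw [map_add, homogeneousComponent_sqTotal_of_lt hf h,
        homogeneousComponent_of_mem_homog_of_ne hf h.ne, add_zero]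
  | add f g hf hg =>
    rw [map_add, add_add_add_comm]
    exact add_mem hf hg

theorem sqTotal_mul_pow_two_pow {ι : Type*} [Fintype ι] [DecidableEq ι] (v : ι → Fin 4) (r : ℕ)
    (h : P4) : sqTotal ((∏ i, X (v i)) * h ^ 2 ^ r) =
      ∑ A : Finset ι, (∏ i ∈ Aᶜ, X (v i)) * (∏ i ∈ A, X (v i)) ^ 2 * sqTotal h ^ 2 ^ r := by
  simp only [map_mul, map_pow, map_prod, sqTotal_X, add_comm (X _ : P4), Finset.prod_add,
    Finset.sum_mul, Finset.powerset_univ, ← Finset.compl_eq_univ_sdiff, Finset.prod_pow]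
  exact Finset.sum_congr rfl fun A _ => by ring

theorem prod_compl_mul_prod_sq_mem_homog {ι : Type*} [Fintype ι] [DecidableEq ι] (v : ι → Fin 4)
    (A : Finset ι) : ((∏ i ∈ Aᶜ, X (v i)) * (∏ i ∈ A, X (v i)) ^ 2 : P4) ∈
      homog (Fintype.card ι + A.card) := by
  have hcard : Aᶜ.card + A.card * 2 = Fintype.card ι + A.card := by
    rw [Finset.card_compl]
    have := A.card_le_univ
    omega
  rw [← hcard]
  exact mul_mem_homog (prod_X_mem_homog v Aᶜ) (pow_mem_homog (prod_X_mem_homog v A) 2)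

/- This is the Cartan formula: for `0 < j < 2 ^ r` the operation `Sq^j` vanishes on `2 ^ r`-th
powers, so only the linear factors contribute. -/
theorem homogeneousComponent_sqTotal_mul_pow_two_pow {ι : Type*} [Fintype ι] [DecidableEq ι]
    (v : ι → Fin 4) {d k r : ℕ} (hkr : k < 2 ^ r) {h : P4} (hh : h ∈ homog d) :
    homogeneousComponent (Fintype.card ι + k + d * 2 ^ r)
        (sqTotal ((∏ i, X (v i)) * h ^ 2 ^ r)) =
      ∑ A ∈ Finset.powersetCard k Finset.univ,
        (∏ i ∈ Aᶜ, X (v i)) * (∏ i ∈ A, X (v i)) ^ 2 * h ^ 2 ^ r := by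
  have hcoef (A : Finset ι) := prod_compl_mul_prod_sq_mem_homog v A
  rw [sqTotal_mul_pow_two_pow, map_sum]
  refine (Finset.sum_subset_zero_on_sdiff (Finset.subset_univ _) ?_ ?_).symm
  · intro A hA
    have hAk : A.card ≠ k := by simpa using hA
    by_cases hj : ∃ j, Fintype.card ι + k + d * 2 ^ r = Fintype.card ι + A.card + j * 2 ^ r
    · obtain ⟨j, hj⟩ := hj
      have hjd : j < d := by
        rcases lt_trichotomy j d with h | rfl | h
        · exact h
        · omega
        · nlinarith [Nat.mul_le_mul_right (2 ^ r) h]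
      rw [hj, homogeneousComponent_mul_pow_two_pow (hcoef A),
        homogeneousComponent_sqTotal_of_lt hh hjd, zero_pow (by positivity), mul_zero]
    · exact homogeneousComponent_mul_pow_two_pow_of_ne (hcoef A) _ (not_exists.1 hj)
  · intro A hA
    rw [← (Finset.mem_powersetCard.1 hA).2,
      homogeneousComponent_mul_pow_two_pow (hcoef A), homogeneousComponent_sqTotal_self hh]

theorem sum_powersetCard_mul_pow_mem_hitAt {ι : Type*} [Fintype ι] [DecidableEq ι]
    (v : ι → Fin 4) {k r : ℕ} (hk : 0 < k) (hkr : k < 2 ^ r) (n : ℕ) (h : P4) :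
    ∑ A ∈ Finset.powersetCard k Finset.univ,
      (∏ i ∈ Aᶜ, X (v i)) * (∏ i ∈ A, X (v i)) ^ 2 * h ^ 2 ^ r ∈ hitAt n := by
  induction h using homog_induction with
  | add f g hf hg =>
    simp only [add_pow_char_pow, mul_add, Finset.sum_add_distrib]
    exact add_mem hf hg
  | homog d h hh =>
    obtain rfl | hn := eq_or_ne n (Fintype.card ι + k + d * 2 ^ r)
    · rw [← homogeneousComponent_sqTotal_mul_pow_two_pow v hkr hh]
      exact mem_hitAt_of_mem_hitSub (Submodule.subset_span ⟨Fintype.card ι + d * 2 ^ r, by omega,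
        _, mul_mem_homog (prod_X_mem_homog v Finset.univ) (pow_mem_homog hh _), rfl⟩)
    · refine sum_mem fun A hA => mem_hitAt_of_homogeneousComponent_eq_zero
        (homogeneousComponent_of_mem_homog_of_ne
          (mul_mem_homog (prod_compl_mul_prod_sq_mem_homog v A) (pow_mem_homog hh (2 ^ r))) ?_)
      rwa [(Finset.mem_powersetCard.1 hA).2]

theorem sum_mul_sq_mem_hitAt {ι : Type*} [Fintype ι] [DecidableEq ι] (v : ι → Fin 4) (n : ℕ)
    (h : P4) : ∑ i, (∏ j ∈ {i}ᶜ, X (v j)) * (X (v i) * h) ^ 2 ∈ hitAt n := by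
  have := sum_powersetCard_mul_pow_mem_hitAt v one_pos (r := 1) one_lt_two n h
  simpa [Finset.powersetCard_one, mul_pow, mul_assoc] using this

theorem sq_mem_hitAt (hn : 0 < n) (f : P4) : f ^ 2 ∈ hitAt n := by
  induction f using MvPolynomial.induction_on with
  | C c =>
    exact mem_hitAt_of_homogeneousComponent_eq_zero (homogeneousComponent_of_mem_homog_of_ne
      (pow_mem_homog (isHomogeneous_C _ c) 2) (by omega))
  | add f g hf hg =>
    rw [CharTwo.add_sq]
    exact add_mem hf hg
  | mul_X f i _ =>
    simpa [mul_comm, show ({0}ᶜ : Finset (Fin 1)) = ∅ by decide] using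
      sum_mul_sq_mem_hitAt (fun _ : Fin 1 => i) n f

theorem mul_sq_mem_hitAt_of_parity {e : ℕ} {p : P4} (hp : p ∈ homog e) (h : n % 2 ≠ e % 2)
    (f : P4) : p * f ^ 2 ∈ hitAt n :=
  mem_hitAt_of_homogeneousComponent_eq_zero <|
    homogeneousComponent_mul_sq_of_ne hp f fun k hk => by omega

theorem sq1_two_mem_hitAt (n : ℕ) (i j : Fin 4) (h : P4) :
    X j * (X i * h) ^ 2 + X i * (X j * h) ^ 2 ∈ hitAt n := by
  have hc : ({0}ᶜ : Finset (Fin 2)) = {1} ∧ ({1}ᶜ : Finset (Fin 2)) = {0} := by decide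
  simpa [Fin.sum_univ_two, hc] using sum_mul_sq_mem_hitAt ![i, j] n h

theorem sq1_three_mem_hitAt (n : ℕ) (i j k : Fin 4) (h : P4) :
    X j * X k * (X i * h) ^ 2 + X i * X k * (X j * h) ^ 2 + X i * X j * (X k * h) ^ 2 ∈
      hitAt n := by
  have hc : ({0}ᶜ : Finset (Fin 3)) = {1, 2} ∧ ({1}ᶜ : Finset (Fin 3)) = {0, 2} ∧
    ({2}ᶜ : Finset (Fin 3)) = {0, 1} := by decide
  simpa [Fin.sum_univ_three, hc] using sum_mul_sq_mem_hitAt ![i, j, k] n h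

theorem sq1_four_mem_hitAt (n : ℕ) (i j k l : Fin 4) (h : P4) :
    X j * X k * X l * (X i * h) ^ 2 + X i * X k * X l * (X j * h) ^ 2
      + X i * X j * X l * (X k * h) ^ 2 + X i * X j * X k * (X l * h) ^ 2 ∈ hitAt n := by
  have hc : ({0}ᶜ : Finset (Fin 4)) = {1, 2, 3} ∧ ({1}ᶜ : Finset (Fin 4)) = {0, 2, 3} ∧
    ({2}ᶜ : Finset (Fin 4)) = {0, 1, 3} ∧ ({3}ᶜ : Finset (Fin 4)) = {0, 1, 2} := by decide
  simpa [Fin.sum_univ_four, hc, mul_assoc] using sum_mul_sq_mem_hitAt ![i, j, k, l] n h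

theorem sq2_three_mem_hitAt (n : ℕ) (i j k : Fin 4) (u : P4) :
    X k * (X i * X j * u ^ 2) ^ 2 + X j * (X i * X k * u ^ 2) ^ 2
      + X i * (X j * X k * u ^ 2) ^ 2 ∈ hitAt n := by
  have hp : Finset.powersetCard 2 (Finset.univ : Finset (Fin 3)) = {{0, 1}, {0, 2}, {1, 2}} ∧
    ({0, 1}ᶜ : Finset (Fin 3)) = {2} ∧ ({0, 2}ᶜ : Finset (Fin 3)) = {1} ∧
    ({1, 2}ᶜ : Finset (Fin 3)) = {0} := by decide
  have h := sum_powersetCard_mul_pow_mem_hitAt ![i, j, k] two_pos (r := 2) (by norm_num) n u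
  rw [hp.1, Finset.sum_insert (by decide), Finset.sum_pair (by decide), hp.2.1, hp.2.2.1,
    hp.2.2.2] at h
  convert h using 1
  simp
  ring

theorem sq2_four_mem_hitAt (n : ℕ) (i j k l : Fin 4) (u : P4) :
    X k * X l * (X i * X j * u ^ 2) ^ 2 + X j * X l * (X i * X k * u ^ 2) ^ 2
      + X j * X k * (X i * X l * u ^ 2) ^ 2 + X i * X l * (X j * X k * u ^ 2) ^ 2
      + X i * X k * (X j * X l * u ^ 2) ^ 2 + X i * X j * (X k * X l * u ^ 2) ^ 2 ∈ hitAt n := by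
  have hp : Finset.powersetCard 2 (Finset.univ : Finset (Fin 4)) =
      {{0, 1}, {0, 2}, {0, 3}, {1, 2}, {1, 3}, {2, 3}} ∧
    ({0, 1}ᶜ : Finset (Fin 4)) = {2, 3} ∧ ({0, 2}ᶜ : Finset (Fin 4)) = {1, 3} ∧
    ({0, 3}ᶜ : Finset (Fin 4)) = {1, 2} ∧ ({1, 2}ᶜ : Finset (Fin 4)) = {0, 3} ∧
    ({1, 3}ᶜ : Finset (Fin 4)) = {0, 2} ∧ ({2, 3}ᶜ : Finset (Fin 4)) = {0, 1} := by decide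
  have h := sum_powersetCard_mul_pow_mem_hitAt ![i, j, k, l] two_pos (r := 2) (by norm_num) n u
  convert h using 1
  rw [hp.1, Finset.sum_insert (by decide), Finset.sum_insert (by decide),
    Finset.sum_insert (by decide), Finset.sum_insert (by decide), Finset.sum_pair (by decide)]
  simp [hp]
  ring

end HitPolynomials

section Kameko

/-- The exponents `a i / 2` of the square part of the monomial with exponents `a`. -/
def halfExponents (a : Fin 4 →₀ ℕ) : Fin 4 →₀ ℕ := a.mapRange (· / 2) rfl

/-- The variables occurring to an odd power in the monomial with exponents `a`. -/
def oddVars (a : Fin 4 →₀ ℕ) : Finset (Fin 4) := Finset.univ.filter fun i => a i % 2 = 1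

/-- The Kameko-type map attached to a set `K` of variables: it sends `varProd A * q ^ 2` to `q`
if `A = K` and to `0` otherwise. Kameko's own map is the case `K = univ`. -/
def kameko (K : Finset (Fin 4)) : P4 →ₗ[kk] P4 :=
  (basisMonomials (Fin 4) kk).constr kk fun a =>
    if oddVars a = K then monomial (halfExponents a) 1 else 0

theorem kameko_monomial (K : Finset (Fin 4)) (a : Fin 4 →₀ ℕ) :
    kameko K (monomial a 1) = if oddVars a = K then monomial (halfExponents a) 1 else 0 := by
  rw [kameko, ← congrFun (coe_basisMonomials (Fin 4) kk) a, Module.Basis.constr_basis]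

theorem varProd_mul_monomial_sq (A : Finset (Fin 4)) (b : Fin 4 →₀ ℕ) :
    varProd A * monomial b (1 : kk) ^ 2 =
      monomial (∑ i ∈ A, Finsupp.single i 1 + 2 • b) 1 := by
  simp only [varProd, X, ← monomial_sum_one, monomial_pow, monomial_mul, one_pow, mul_one]

theorem sum_single_add_two_nsmul_apply (A : Finset (Fin 4)) (b : Fin 4 →₀ ℕ) (i : Fin 4) :
    (∑ j ∈ A, Finsupp.single j 1 + 2 • b : Fin 4 →₀ ℕ) i = (if i ∈ A then 1 else 0) + 2 * b i := by
  simp [Finsupp.single_apply]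

theorem varProd_oddVars_mul_monomial_halfExponents_sq (a : Fin 4 →₀ ℕ) :
    varProd (oddVars a) * monomial (halfExponents a) (1 : kk) ^ 2 = monomial a 1 := by
  rw [varProd_mul_monomial_sq]
  congr 2
  ext i
  rw [sum_single_add_two_nsmul_apply]
  simp only [oddVars, halfExponents, Finset.mem_filter_univ, Finsupp.mapRange_apply]
  split_ifs <;> omega

theorem monomial_one_induction {motive : P4 → Prop} (monomial : ∀ a, motive (monomial a 1))
    (zero : motive 0) (add : ∀ f g, motive f → motive g → motive (f + g)) (f : P4) :
    motive f := by
  induction f using MvPolynomial.induction_on' with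
  | add f g hf hg => exact add _ _ hf hg
  | monomial a c =>
    rcases zmod_two_eq_zero_or_one c with rfl | rfl
    · simpa using zero
    · exact monomial a

theorem varProd_mul_sq_induction {motive : P4 → Prop}
    (varProd_mul_sq : ∀ A q, motive (varProd A * q ^ 2))
    (add : ∀ f g, motive f → motive g → motive (f + g)) (f : P4) : motive f := by
  induction f using monomial_one_induction with
  | monomial a =>
    rw [← varProd_oddVars_mul_monomial_halfExponents_sq]
    exact varProd_mul_sq _ _
  | zero => simpa using varProd_mul_sq ∅ 0
  | add f g hf hg => exact add f g hf hg

theorem kameko_varProd_mul_sq (K A : Finset (Fin 4)) (q : P4) :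
    kameko K (varProd A * q ^ 2) = if A = K then q else 0 := by
  induction q using monomial_one_induction with
  | zero => simp
  | add f g hf hg =>
    rw [CharTwo.add_sq, mul_add, map_add, hf, hg]
    split_ifs <;> simp
  | monomial b =>
    have hodd : oddVars (∑ i ∈ A, Finsupp.single i 1 + 2 • b) = A := by
      ext i
      rw [oddVars, Finset.mem_filter_univ, sum_single_add_two_nsmul_apply]
      split_ifs with h <;> simp [h]
    have hhalf : halfExponents (∑ i ∈ A, Finsupp.single i 1 + 2 • b) = b := by
      ext i
      rw [halfExponents, Finsupp.mapRange_apply, sum_single_add_two_nsmul_apply]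
      split_ifs <;> omega
    rw [varProd_mul_monomial_sq, kameko_monomial, hodd, hhalf]

theorem kameko_homogeneousComponent (K : Finset (Fin 4)) (k : ℕ) (f : P4) :
    kameko K (homogeneousComponent (K.card + 2 * k) f) = homogeneousComponent k (kameko K f) := by
  induction f using varProd_mul_sq_induction with
  | add f g hf hg => simp only [map_add, hf, hg]
  | varProd_mul_sq A q =>
    obtain rfl | h := eq_or_ne A K
    · rw [homogeneousComponent_mul_sq (varProd_mem_homog A)]
      simp only [kameko_varProd_mul_sq, if_pos]
    rw [kameko_varProd_mul_sq, if_neg h, map_zero]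
    by_cases hj : ∃ j, K.card + 2 * k = A.card + 2 * j
    · obtain ⟨j, hj⟩ := hj
      rw [hj, homogeneousComponent_mul_sq (varProd_mem_homog A), kameko_varProd_mul_sq, if_neg h]
    · rw [homogeneousComponent_mul_sq_of_ne (varProd_mem_homog A) _ (not_exists.1 hj), map_zero]

theorem sqTotal_varProd_mul_sq (A : Finset (Fin 4)) (q : P4) :
    sqTotal (varProd A * q ^ 2) =
      ∑ B ∈ A.powerset, varProd (A \ B) * (varProd B * sqTotal q) ^ 2 := by
  simp only [varProd, map_mul, map_pow, map_prod, sqTotal_X, add_comm (X _ : P4),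
    Finset.prod_add, Finset.sum_mul, Finset.prod_pow]
  exact Finset.sum_congr rfl fun B _ => by ring

theorem kameko_sqTotal (K A : Finset (Fin 4)) (q : P4) :
    kameko K (sqTotal (varProd A * q ^ 2)) =
      ∑ B ∈ A.powerset, if A \ B = K then varProd B * sqTotal q else 0 := by
  rw [sqTotal_varProd_mul_sq, map_sum]
  simp only [kameko_varProd_mul_sq]

end Kameko

section SpikeFactors

variable {n : ℕ} {f : P4}

theorem varProd_pair {a b : Fin 4} (h : a ≠ b) : varProd {a, b} = X a * X b := Finset.prod_pair h

theorem varProd_univ_eq_of_ne {i j k l : Fin 4}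
    (h : i ≠ j ∧ i ≠ k ∧ i ≠ l ∧ j ≠ k ∧ j ≠ l ∧ k ≠ l) :
    varProd Finset.univ = X i * X j * X k * X l := by
  have huniv : (Finset.univ : Finset (Fin 4)) = {i, j, k, l} := by revert i j k l; decide
  obtain ⟨hij, hik, hil, hjk, hjl, hkl⟩ := h
  rw [huniv, varProd, Finset.prod_insert (by simp [hij, hik, hil]),
    Finset.prod_insert (by simp [hjk, hjl]), Finset.prod_pair hkl]
  ring

/-- The map `f ↦ p * f ^ 2`, which is linear over the field with two elements. -/
def mulSq (p : P4) : P4 →ₗ[kk] P4 where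
  toFun f := p * f ^ 2
  map_add' f g := by rw [CharTwo.add_sq, mul_add]
  map_smul' c f := by rcases zmod_two_eq_zero_or_one c with rfl | rfl <;> simp

theorem mul_sq_mem_of_sqTotal {V : Submodule kk P4} {e : ℕ} {p : P4} (hp : p ∈ homog e)
    (hV : hitAt (e + 2 * n) ≤ V) (h : ∀ u, (sqTotal p + p) * sqTotal u ^ 2 ∈ V)
    (hf : f ∈ hitAt n) : p * f ^ 2 ∈ V := by
  have hcomp (g : P4) : p * homogeneousComponent n g ^ 2 ∈ V ↔ p * g ^ 2 ∈ V := by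
    have hadd := hV (homogeneousComponent_add_self_mem_hitAt (e + 2 * n) (p * g ^ 2))
    rw [homogeneousComponent_mul_sq hp] at hadd
    exact ⟨(Submodule.add_mem_iff_right V · |>.1 hadd), (Submodule.add_mem_iff_left V · |>.1 hadd)⟩
  have hle : hitSub n ≤ V.comap (mulSq p) := by
    rw [hitSub, Submodule.span_le]
    rintro _ ⟨d, hd, g, hg, rfl⟩
    have hpg : p * g ^ 2 ∈ V :=
      (hcomp g).1 (by simp [homogeneousComponent_of_mem_homog_of_ne hg hd.ne'])
    refine (hcomp _).2 ?_
    convert add_mem (add_mem (hV (sqTotal_add_self_mem_hitAt _ (p * g ^ 2))) hpg) (h g) using 1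
    simp only [map_mul, map_pow]
    linear_combination -(sqTotal p * sqTotal g ^ 2 + p * g ^ 2) * two_eq_zero
  exact (hcomp f).1 (hle hf)

theorem X_mul_sq_mem_hitAt (i : Fin 4) (hf : f ∈ hitAt n) : X i * f ^ 2 ∈ hitAt (1 + 2 * n) := by
  refine mul_sq_mem_of_sqTotal (X_mem_homog i) le_rfl (fun u => ?_) hf
  generalize sqTotal u = u
  convert mul_sq_mem_hitAt_of_parity (n := 1 + 2 * n) one_mem_homog (by omega) (X i * u) using 1
  rw [sqTotal_X]
  linear_combination X i * u ^ 2 * two_eq_zero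

theorem X_mul_X_mem_homog (i j : Fin 4) : (X i * X j : P4) ∈ homog 2 :=
  mul_mem_homog (X_mem_homog i) (X_mem_homog j)

theorem X_mul_X_mul_X_mem_homog (i j k : Fin 4) : (X i * X j * X k : P4) ∈ homog 3 :=
  mul_mem_homog (X_mul_X_mem_homog i j) (X_mem_homog k)

theorem X_mul_X_mul_sq_mem_hitAt (i j : Fin 4) (hf : f ∈ hitAt n) :
    X i * X j * f ^ 2 ∈ hitAt (2 + 2 * n) := by
  refine mul_sq_mem_of_sqTotal (X_mul_X_mem_homog i j) le_rfl (fun u => ?_) hf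
  generalize sqTotal u = u
  have hi := mul_sq_mem_hitAt_of_parity (n := 2 + 2 * n) (X_mem_homog i) (by omega) (X j * u)
  have hj := mul_sq_mem_hitAt_of_parity (n := 2 + 2 * n) (X_mem_homog j) (by omega) (X i * u)
  have hij := sq_mem_hitAt (n := 2 + 2 * n) (by omega) (X i * X j * u)
  convert add_mem (add_mem hi hj) hij using 1
  simp only [map_mul, sqTotal_X]
  linear_combination X i * X j * u ^ 2 * two_eq_zero

end SpikeFactors

section Degrees

/-- The degree `3 * 2 ^ s - 2` of the theorem, which is also the degree of the polynomials
`a₁ * (a₂ * (⋯ (aₛ * x ^ 2) ^ 2 ⋯) ^ 2) ^ 2` in which every `aᵢ` is a product of two variables and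
`x` is a variable. -/
def pairDegree : ℕ → ℕ
  | 0 => 1
  | s + 1 => 2 + 2 * pairDegree s

/-- The degree `3 * 2 ^ s - 3`, into which Kameko's map carries degree `pairDegree (s + 1)`. -/
def tripleDegree : ℕ → ℕ
  | 0 => 0
  | s + 1 => 3 + 2 * tripleDegree s

theorem pairDegree_succ_eq (s : ℕ) : pairDegree (s + 1) = 4 + 2 * tripleDegree s := by
  induction s with
  | zero => rfl
  | succ s ih => rw [pairDegree, ih, tripleDegree]; ring

theorem tripleDegree_succ_eq (s : ℕ) : tripleDegree (s + 1) = 1 + 2 * pairDegree s := by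
  induction s with
  | zero => rfl
  | succ s ih => rw [tripleDegree, ih, pairDegree]; ring

theorem pairDegree_pos (s : ℕ) : 0 < pairDegree s := by cases s <;> simp [pairDegree]

theorem pairDegree_succ_mod_two (s : ℕ) : pairDegree (s + 1) % 2 = 0 := by simp [pairDegree]

theorem tripleDegree_succ_mod_two (s : ℕ) : tripleDegree (s + 1) % 2 = 1 := by
  rw [tripleDegree_succ_eq]; omega

theorem card_cases_even (A : Finset (Fin 4)) : A.card % 2 = 1 ∨ A = ∅ ∨
    (∃ a b, a ≠ b ∧ A = {a, b}) ∨ A = Finset.univ := by revert A; decide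

theorem card_cases_odd (A : Finset (Fin 4)) : A.card % 2 = 0 ∨
    (∃ a, A = {a}) ∨ ∃ a, A = {a}ᶜ := by revert A; decide

theorem exists_ne_three (i : Fin 4) :
    ∃ j k l : Fin 4, i ≠ j ∧ i ≠ k ∧ i ≠ l ∧ j ≠ k ∧ j ≠ l ∧ k ≠ l := by revert i; decide

theorem exists_ne_two {i j : Fin 4} (h : i ≠ j) :
    ∃ k l : Fin 4, i ≠ j ∧ i ≠ k ∧ i ≠ l ∧ j ≠ k ∧ j ≠ l ∧ k ≠ l := by revert i j; decide

theorem X_mul_pair_sq_mem_hitAt (n : ℕ) (i a b : Fin 4) (u : P4) :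
    X i * (X a * X b * u ^ 2) ^ 2 ∈ hitAt n := by
  have hsq2 := sq2_three_mem_hitAt n i a b u
  have ha := sq1_two_mem_hitAt n a i (X b * u ^ 2)
  have hb := sq1_two_mem_hitAt n b i (X a * u ^ 2)
  convert add_mem hsq2 (add_mem ha hb) using 1
  linear_combination -(X a * (X i * X b * u ^ 2) ^ 2 + X b * (X i * X a * u ^ 2) ^ 2
    + X i * (X a * X b * u ^ 2) ^ 2) * two_eq_zero

theorem X_mul_sq_mem_hitAt_tripleDegree (r : ℕ) (i : Fin 4) (f : P4) :
    X i * f ^ 2 ∈ hitAt (tripleDegree (r + 2)) := by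
  induction f using varProd_mul_sq_induction with
  | add f g hf hg => rw [CharTwo.add_sq, mul_add]; exact add_mem hf hg
  | varProd_mul_sq A q =>
    rcases card_cases_even A with h | rfl | ⟨a, b, hab, rfl⟩ | rfl
    · rw [tripleDegree_succ_eq]
      exact X_mul_sq_mem_hitAt i (mul_sq_mem_hitAt_of_parity (varProd_mem_homog A)
        (by rw [h, pairDegree_succ_mod_two]; decide) q)
    · rw [tripleDegree_succ_eq, varProd, Finset.prod_empty, one_mul]
      exact X_mul_sq_mem_hitAt i (sq_mem_hitAt (pairDegree_pos _) q)
    · rw [varProd_pair hab]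
      exact X_mul_pair_sq_mem_hitAt _ i a b q
    · obtain ⟨j, k, l, h⟩ := exists_ne_three i
      rw [varProd_univ_eq_of_ne h]
      convert sub_mem (sq1_two_mem_hitAt (tripleDegree (r + 2)) i j (X i * X k * X l * q ^ 2))
        (X_mul_pair_sq_mem_hitAt _ j k l (X i * q)) using 1
      ring

theorem X_mul_X_mul_X_mul_sq_mem_hitAt {r : ℕ} (i j k : Fin 4) {f : P4}
    (hf : f ∈ hitAt (tripleDegree (r + 1))) :
    X i * X j * X k * f ^ 2 ∈ hitAt (tripleDegree (r + 2)) := by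
  refine mul_sq_mem_of_sqTotal (X_mul_X_mul_X_mem_homog i j k) le_rfl (fun u => ?_) hf
  generalize sqTotal u = u
  have hpar {e : ℕ} {p : P4} (hp : p ∈ homog e) (he : e % 2 = 0) (v : P4) :
      p * v ^ 2 ∈ hitAt (tripleDegree (r + 2)) :=
    mul_sq_mem_hitAt_of_parity hp (by rw [tripleDegree_succ_mod_two, he]; decide) v
  have hone (a : Fin 4) := X_mul_sq_mem_hitAt_tripleDegree r a
  have htwo (a b : Fin 4) := hpar (X_mul_X_mem_homog a b) rfl
  convert add_mem (add_mem (htwo j k (X i * u)) (add_mem (htwo i k (X j * u))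
    (htwo i j (X k * u)))) (add_mem (hpar one_mem_homog rfl (X i * X j * X k * u))
    (add_mem (hone i (X j * X k * u)) (add_mem (hone j (X i * X k * u))
    (hone k (X i * X j * u))))) using 1
  simp only [map_mul, sqTotal_X]
  linear_combination X i * X j * X k * u ^ 2 * two_eq_zero

end Degrees

section Codes

variable {n : ℕ}

/-- The set of members of a list, encoded by the binary digits of a natural number. -/
def code (L : List (Fin n)) : ℕ := Nat.ofBits fun i => decide (i ∈ L)

/-- The increasing list of the members of the subset of `Fin n` encoded by `x`. -/
def digits (n x : ℕ) : List (Fin n) := (List.finRange n).filter fun i => x.testBit i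

theorem mem_digits {x : ℕ} {i : Fin n} : i ∈ digits n x ↔ x.testBit i = true := by
  simp [digits]

theorem testBit_code (L : List (Fin n)) (i : ℕ) :
    (code L).testBit i = true ↔ ∃ h : i < n, ⟨i, h⟩ ∈ L := by
  by_cases h : i < n
  · simp [code, h, Nat.testBit_ofBits_lt]
  · simp [code, h, Nat.testBit_ofBits_ge _ _ (not_lt.1 h)]

theorem code_lt (L : List (Fin n)) : code L < 2 ^ n := Nat.ofBits_lt_two_pow _

theorem code_eq_code_iff {L L' : List (Fin n)} :
    code L = code L' ↔ ∀ i, i ∈ L ↔ i ∈ L' := by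
  refine ⟨fun h i => ?_, fun h => congrArg Nat.ofBits (by simp [h])⟩
  have hi := testBit_code L i
  rw [h, testBit_code L' i] at hi
  simpa using hi.symm

theorem code_digits {x : ℕ} (hx : x < 2 ^ n) : code (digits n x) = x := by
  refine Nat.eq_of_testBit_eq fun i => Bool.eq_iff_iff.2 ?_
  simp only [testBit_code, mem_digits, exists_prop, and_iff_right_iff_imp]
  intro hi
  by_contra h
  rw [Nat.testBit_lt_two_pow (hx.trans_le (Nat.pow_le_pow_right two_pos (not_lt.1 h)))] at hi
  cases hi

theorem code_append (L L' : List (Fin n)) : code (L ++ L') = code L ||| code L' := by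
  refine Nat.eq_of_testBit_eq fun i => Bool.eq_iff_iff.2 ?_
  simp [testBit_code, Nat.testBit_or, exists_or]

theorem code_replicate {s : ℕ} (hs : s ≠ 0) (i : Fin n) : code (List.replicate s i) = code [i] :=
  code_eq_code_iff.2 (by simp [List.mem_replicate, hs])

/-- The set encoded by `x` is the set of members of some list of length `s`. -/
abbrev Fits (n s x : ℕ) : Prop := (digits n x).length ≤ s ∧ (digits n x = [] ↔ s = 0)

theorem exists_code_eq {s x : ℕ} (hx : x < 2 ^ n) (h : Fits n s x) :
    ∃ L : List (Fin n), L.length = s ∧ code L = x := by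
  obtain ⟨hlen, hnil⟩ := h
  rw [← code_digits hx]
  cases hd : digits n x with
  | nil => exact ⟨[], (hnil.1 hd).symm, rfl⟩
  | cons i l =>
    rw [hd] at hlen
    refine ⟨List.replicate (s - (i :: l).length) i ++ i :: l, ?_, ?_⟩
    · rw [List.length_append, List.length_replicate, Nat.sub_add_cancel hlen]
    · exact code_eq_code_iff.2 (by simp +contextual [List.mem_replicate])

theorem fits_code (L : List (Fin n)) : Fits n (min L.length n) (code L) := by
  have hnodup : (digits n (code L)).Nodup := (List.nodup_finRange n).filter _
  have hmem (i : Fin n) : i ∈ digits n (code L) ↔ i ∈ L := by simp [mem_digits, testBit_code]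
  have hnil : digits n (code L) = [] ↔ L = [] := by
    simp only [List.eq_nil_iff_forall_not_mem, hmem]
  refine ⟨le_min ?_ (by simpa using hnodup.length_le_card), hnil.trans ⟨?_, ?_⟩⟩
  · exact (hnodup.subperm fun i hi => (hmem i).1 hi).length_le
  · rintro rfl
    simp
  · rw [Nat.min_eq_zero_iff, List.length_eq_zero_iff]
    rintro (h | rfl)
    · exact h
    · exact List.eq_nil_iff_forall_not_mem.2 fun i => i.elim0

theorem Fits.mono {s s' x : ℕ} (h : Fits n s x) (hle : s ≤ s') (hzero : s = 0 ↔ s' = 0) :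
    Fits n s' x := ⟨h.1.trans hle, h.2.trans hzero⟩

end Codes

section Words

variable {ι κ : Type}

/-- The linear map sending `t` to `a i₁ * (a i₂ * (⋯ (a iₛ * t ^ 2) ^ 2 ⋯) ^ 2) ^ 2`, where
`i₁, …, iₛ` are the entries of the list. -/
def iterMulSq (a : ι → P4) : List ι → P4 →ₗ[kk] P4
  | [] => LinearMap.id
  | i :: L => mulSq (a i) ∘ₗ iterMulSq a L

theorem iterMulSq_nil (a : ι → P4) (t : P4) : iterMulSq a [] t = t := rfl

theorem iterMulSq_cons (a : ι → P4) (i : ι) (L : List ι) (t : P4) :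
    iterMulSq a (i :: L) t = a i * iterMulSq a L t ^ 2 := rfl

theorem iterMulSq_append (a : ι → P4) (L L' : List ι) (t : P4) :
    iterMulSq a (L ++ L') t = iterMulSq a L (iterMulSq a L' t) := by
  induction L with
  | nil => rfl
  | cons i L ih => rw [List.cons_append, iterMulSq_cons, ih, iterMulSq_cons]

/-- A family of letters and tails from which polynomials `iterMulSq letter L (tail k)` (words) are
built; `degree s` is the degree in which words of length `s` are considered. The two laws say that
prefixing a letter preserves hit polynomials, and that adjacent letters commute modulo hit
polynomials. -/
structure WordSystem (ι κ : Type) where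
  letter : ι → P4
  tail : κ → P4
  degree : ℕ → ℕ
  letter_mul_sq_mem : ∀ s i {f}, f ∈ hitAt (degree s) → letter i * f ^ 2 ∈ hitAt (degree (s + 1))
  letter_swap_mem : ∀ s i j f,
    letter i * (letter j * f ^ 2) ^ 2 + letter j * (letter i * f ^ 2) ^ 2 ∈ hitAt (degree (s + 2))

namespace WordSystem

variable (W : WordSystem ι κ) {L L' L'' : List ι} {i j : ι} {k : κ} {s : ℕ} {f : P4}

/-- The word with letters `L` and tail `k`. -/
def word (L : List ι) (k : κ) : P4 := iterMulSq W.letter L (W.tail k)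

/-- Two words with the same tail are congruent if they have the same length and agree modulo hit
polynomials. -/
def Congr (k : κ) (L L' : List ι) : Prop :=
  L.length = L'.length ∧ W.word L k + W.word L' k ∈ hitAt (W.degree L.length)

/-- The polynomials that are sums of words of length `s` modulo hit polynomials. -/
def wordSpan (s : ℕ) : Submodule kk P4 :=
  hitAt (W.degree s) ⊔ Submodule.span kk {f | ∃ L k, L.length = s ∧ f = W.word L k}

/-- In a word of length at least three, `a a b` may be replaced by `a b b`. -/
def Idempotent : Prop := ∀ k i j L, W.Congr k (i :: i :: j :: L) (i :: j :: j :: L)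

variable {W}

theorem iterMulSq_mem_hitAt (L : List ι) (hf : f ∈ hitAt (W.degree s)) :
    iterMulSq W.letter L f ∈ hitAt (W.degree (L.length + s)) := by
  induction L with
  | nil => simpa [iterMulSq_nil] using hf
  | cons i L ih =>
    rw [iterMulSq_cons, List.length_cons, add_right_comm]
    exact W.letter_mul_sq_mem _ i ih

theorem hitAt_le_wordSpan (s : ℕ) : hitAt (W.degree s) ≤ W.wordSpan s := le_sup_left

theorem word_mem_wordSpan (L : List ι) (k : κ) : W.word L k ∈ W.wordSpan L.length :=
  Submodule.mem_sup_right (Submodule.subset_span ⟨L, k, rfl, rfl⟩)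

theorem letter_mul_sq_mem_wordSpan (i : ι) (hf : f ∈ W.wordSpan s) :
    W.letter i * f ^ 2 ∈ W.wordSpan (s + 1) := by
  suffices W.wordSpan s ≤ (W.wordSpan (s + 1)).comap (mulSq (W.letter i)) from this hf
  refine sup_le (fun f hf => hitAt_le_wordSpan _ (W.letter_mul_sq_mem s i hf)) ?_
  rw [Submodule.span_le]
  rintro _ ⟨L, k, rfl, rfl⟩
  exact word_mem_wordSpan (i :: L) k

theorem Congr.refl (k : κ) (L : List ι) : W.Congr k L L :=
  ⟨rfl, by rw [CharTwo.add_self_eq_zero]; exact zero_mem _⟩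

theorem Congr.symm (h : W.Congr k L L') : W.Congr k L' L :=
  ⟨h.1.symm, by rw [← h.1, add_comm]; exact h.2⟩

theorem Congr.trans (h : W.Congr k L L') (h' : W.Congr k L' L'') : W.Congr k L L'' := by
  refine ⟨h.1.trans h'.1, ?_⟩
  convert add_mem h.2 (h.1 ▸ h'.2) using 1
  linear_combination -W.word L' k * two_eq_zero

theorem Congr.append_left (l : List ι) (h : W.Congr k L L') : W.Congr k (l ++ L) (l ++ L') := by
  refine ⟨by simp [h.1], ?_⟩
  rw [word, word, iterMulSq_append, iterMulSq_append, ← map_add, List.length_append]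
  exact iterMulSq_mem_hitAt l h.2

theorem congr_swap (k : κ) (i j : ι) (L : List ι) : W.Congr k (i :: j :: L) (j :: i :: L) :=
  ⟨rfl, W.letter_swap_mem L.length i j _⟩

theorem congr_of_perm (k : κ) (h : L.Perm L') : W.Congr k L L' := by
  induction h with
  | nil => exact .refl k _
  | cons i _ ih => exact ih.append_left [i]
  | swap i j L => exact congr_swap k j i L
  | trans _ _ h h' => exact h.trans h'

theorem congr_cons_cons_of_mem (hW : W.Idempotent) (k : κ) (hi : i ∈ L) (hj : j ∈ L) :
    W.Congr k (i :: L) (j :: L) := by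
  obtain rfl | hij := eq_or_ne i j
  · exact .refl k _
  classical
  have hL : L.Perm (i :: j :: (L.erase i).erase j) := (List.perm_cons_erase hi).trans
    ((List.perm_cons_erase ((List.mem_erase_of_ne hij.symm).2 hj)).cons i)
  exact (congr_of_perm k (hL.cons i)).trans ((hW k i j _).trans
    (congr_of_perm k ((List.Perm.swap j i _).trans (hL.symm.cons j))))

theorem exists_perm_cons_cons_of_not_nodup (h : ¬ L.Nodup) : ∃ i l, L.Perm (i :: i :: l) := by
  classical
  obtain ⟨i, hi⟩ := not_forall.1 (mt List.nodup_iff_count_le_one.2 h)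
  have hmem : i ∈ L := List.count_pos_iff.1 (by omega)
  have hmem' : i ∈ L.erase i := List.count_pos_iff.1 (by rw [List.count_erase_self]; omega)
  exact ⟨i, _, (List.perm_cons_erase hmem).trans ((List.perm_cons_erase hmem').cons i)⟩

theorem congr_of_mem_iff (hW : W.Idempotent) (k : κ) (hlen : L.length = L'.length)
    (hmem : ∀ i, i ∈ L ↔ i ∈ L') : W.Congr k L L' := by
  induction hn : L.length generalizing L L' with
  | zero =>
    rw [List.length_eq_zero_iff.1 hn, List.length_eq_zero_iff.1 (hlen.symm.trans hn)]
    exact .refl k _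
  | succ n ih =>
    by_cases hL : L.Nodup
    · exact congr_of_perm k ((hL.subperm fun i hi => (hmem i).1 hi).perm_of_length_le hlen.ge)
    have hL' : ¬ L'.Nodup := fun h => hL <|
      ((h.subperm fun i hi => (hmem i).2 hi).perm_of_length_le hlen.le).nodup_iff.1 h
    obtain ⟨i, l, hl⟩ := exists_perm_cons_cons_of_not_nodup hL
    obtain ⟨j, l', hl'⟩ := exists_perm_cons_cons_of_not_nodup hL'
    have hi : i ∈ j :: l' := by simpa using hl'.mem_iff.1 ((hmem i).1 (hl.mem_iff.2 (by simp)))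
    have htails : W.Congr k (i :: l) (j :: l') := by
      refine ih ?_ (fun c => ?_) ?_
      · simpa using (hl.length_eq.symm.trans hlen).trans hl'.length_eq
      · have hc : c ∈ i :: l ↔ c ∈ L := by rw [hl.mem_iff]; simp
        have hc' : c ∈ j :: l' ↔ c ∈ L' := by rw [hl'.mem_iff]; simp
        rw [hc, hc', hmem]
      · simpa [hn] using hl.length_eq.symm
    exact (congr_of_perm k hl).trans ((htails.append_left [i]).trans
      ((congr_cons_cons_of_mem hW k hi (by simp)).trans (congr_of_perm k hl'.symm)))

end WordSystem

end Words

section PairWords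

/-- The six two-element subsets of the variables, which index the letters of pair words. -/
def edge : Fin 6 → Fin 4 × Fin 4 := ![(0, 1), (0, 2), (0, 3), (1, 2), (1, 3), (2, 3)]

/-- The index in `edge` of the pair `{i, j}`; the value is `0` when `i = j`. -/
def edgeIndex (i j : Fin 4) : Fin 6 :=
  ![![0, 0, 1, 2], ![0, 0, 3, 4], ![1, 3, 0, 5], ![2, 4, 5, 0]] i j

/-- The product of the two variables of an edge. -/
def edgeProd (a : Fin 6) : P4 := X (edge a).1 * X (edge a).2

theorem edge_cases (a b : Fin 6) : a = b ∨
    (∃ i j k, i ≠ j ∧ i ≠ k ∧ j ≠ k ∧ a = edgeIndex i j ∧ b = edgeIndex i k) ∨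
    ∃ i j k l, (i ≠ j ∧ i ≠ k ∧ i ≠ l ∧ j ≠ k ∧ j ≠ l ∧ k ≠ l) ∧
      a = edgeIndex i j ∧ b = edgeIndex k l := by revert a b; decide

theorem edgeIndex_comm (i j : Fin 4) : edgeIndex i j = edgeIndex j i := by revert i j; decide

theorem edgeProd_edgeIndex {i j : Fin 4} (h : i ≠ j) : edgeProd (edgeIndex i j) = X i * X j := by
  have : edge (edgeIndex i j) = (i, j) ∨ edge (edgeIndex i j) = (j, i) := by
    revert i j; decide
  rcases this with h | h
  · rw [edgeProd, h]
  · rw [edgeProd, h, mul_comm]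

variable {i j k l : Fin 4}

theorem X_mul_X_mul_sq_mem_hitAt_pairDegree (i j : Fin 4) {s : ℕ} {f : P4}
    (hf : f ∈ hitAt (pairDegree s)) : X i * X j * f ^ 2 ∈ hitAt (pairDegree (s + 1)) :=
  X_mul_X_mul_sq_mem_hitAt i j hf

theorem adjacent_swap_mem_hitAt (s : ℕ) (i j k : Fin 4) (f : P4) :
    X i * X j * (X i * X k * f ^ 2) ^ 2 + X i * X k * (X i * X j * f ^ 2) ^ 2 ∈
      hitAt (pairDegree (s + 2)) := by
  convert sub_mem (sq1_three_mem_hitAt _ i j k (X i * f ^ 2))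
    (X_mul_X_mul_sq_mem_hitAt_pairDegree j k (sq_mem_hitAt (pairDegree_pos (s + 1)) (X i * f)))
    using 1
  ring

theorem opposite_swap_mem_hitAt (n : ℕ) (i j k l : Fin 4) (f : P4) :
    X i * X j * (X k * X l * f ^ 2) ^ 2 + X k * X l * (X i * X j * f ^ 2) ^ 2 ∈ hitAt n := by
  convert sub_mem (sq2_four_mem_hitAt n i j k l f) (add_mem
    (sq1_three_mem_hitAt n j k l (X i * f ^ 2)) (sq1_three_mem_hitAt n i k l (X j * f ^ 2))) using 1
  linear_combination X k * X l * (X i * X j * f ^ 2) ^ 2 * two_eq_zero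

/-- The words with pairs of variables as letters and single variables as tails. -/
def pairWords : WordSystem (Fin 6) (Fin 4) where
  letter := edgeProd
  tail := X
  degree := pairDegree
  letter_mul_sq_mem _ _ _ hf := X_mul_X_mul_sq_mem_hitAt_pairDegree _ _ hf
  letter_swap_mem s a b f := by
    rcases edge_cases a b with rfl | ⟨i, j, k, hij, hik, -, rfl, rfl⟩ |
      ⟨i, j, k, l, ⟨hij, -, -, -, -, hkl⟩, rfl, rfl⟩
    · rw [CharTwo.add_self_eq_zero]
      exact zero_mem _
    · rw [edgeProd_edgeIndex hij, edgeProd_edgeIndex hik]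
      exact adjacent_swap_mem_hitAt s i j k f
    · rw [edgeProd_edgeIndex hij, edgeProd_edgeIndex hkl]
      exact opposite_swap_mem_hitAt _ i j k l f

theorem pairWord_cons (h : i ≠ j) (L : List (Fin 6)) (t : Fin 4) :
    pairWords.word (edgeIndex i j :: L) t = X i * X j * pairWords.word L t ^ 2 := by
  rw [← edgeProd_edgeIndex h]
  rfl

theorem pairWord_nil (t : Fin 4) : pairWords.word [] t = X t := rfl

theorem exists_pairWord_replicate_eq (hij : i ≠ j) (hik : i ≠ k) (hjk : j ≠ k) (s : ℕ) :
    ∃ h : P4, pairWords.word (List.replicate s (edgeIndex j k)) i = X i * h ∧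
      pairWords.word (List.replicate s (edgeIndex i k)) j = X j * h ∧
      pairWords.word (List.replicate s (edgeIndex i j)) k = X k * h := by
  induction s with
  | zero => exact ⟨1, by simp [pairWord_nil]⟩
  | succ s ih =>
    obtain ⟨h, hi, hj, hk⟩ := ih
    refine ⟨X i * X j * X k * h ^ 2, ?_⟩
    simp only [List.replicate_succ, pairWord_cons hij, pairWord_cons hik, pairWord_cons hjk,
      hi, hj, hk]
    exact ⟨by ring, by ring, by ring⟩

theorem pairWord_replicate_tail_mem_hitAt (s : ℕ) (hij : i ≠ j) (hik : i ≠ k) (hjk : j ≠ k) :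
    pairWords.word (List.replicate (s + 1) (edgeIndex j k)) i
      + pairWords.word (List.replicate (s + 1) (edgeIndex i k)) j
      + pairWords.word (List.replicate (s + 1) (edgeIndex i j)) k ∈
        hitAt (pairDegree (s + 1)) := by
  obtain ⟨h, hi, hj, hk⟩ := exists_pairWord_replicate_eq hij hik hjk s
  simp only [List.replicate_succ, pairWord_cons hij, pairWord_cons hik, pairWord_cons hjk,
    hi, hj, hk]
  exact sq1_three_mem_hitAt _ i j k h

theorem pairWord_append_tail_mem_hitAt (L : List (Fin 6)) (hij : i ≠ j) (hik : i ≠ k)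
    (hjk : j ≠ k) :
    pairWords.word (L ++ [edgeIndex j k]) i + pairWords.word (L ++ [edgeIndex i k]) j
      + pairWords.word (L ++ [edgeIndex i j]) k ∈ hitAt (pairDegree (L.length + 1)) := by
  simp only [WordSystem.word, iterMulSq_append, ← map_add]
  exact WordSystem.iterMulSq_mem_hitAt (W := pairWords) (s := 1) L
    (pairWord_replicate_tail_mem_hitAt 0 hij hik hjk)

theorem pairWord_three_mem_hitAt (h : i ≠ j ∧ i ≠ k ∧ i ≠ l ∧ j ≠ k ∧ j ≠ l) :
    pairWords.word [edgeIndex j k, edgeIndex j k, edgeIndex j l] i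
      + pairWords.word [edgeIndex i k, edgeIndex i k, edgeIndex i l] j
      + (pairWords.word [edgeIndex i j, edgeIndex j k, edgeIndex j l] i
      + pairWords.word [edgeIndex i j, edgeIndex i k, edgeIndex i l] j) ∈
        hitAt (pairDegree 3) := by
  obtain ⟨hij, hik, hil, hjk, hjl⟩ := h
  simp only [pairWord_cons hij, pairWord_cons hik, pairWord_cons hil, pairWord_cons hjk,
    pairWord_cons hjl, pairWord_nil]
  convert sub_mem (sq1_three_mem_hitAt _ i j k (X i * X j * X k * (X i * X j * X l) ^ 2))
    (X_mul_X_mul_sq_mem_hitAt_pairDegree i j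
      (s := 2) (sq1_three_mem_hitAt _ i j k (X i * X j * X l))) using 1
  simp only [CharTwo.add_sq]
  linear_combination (X i * X j * (X j * X k * (X j * X l * X i ^ 2) ^ 2) ^ 2
    + X i * X j * (X i * X k * (X i * X l * X j ^ 2) ^ 2) ^ 2) * two_eq_zero

theorem pairWords_congr_adjacent (hij : i ≠ j) (hik : i ≠ k) (t : Fin 4) (L : List (Fin 6)) :
    pairWords.Congr t (edgeIndex i j :: edgeIndex i j :: edgeIndex i k :: L)
      (edgeIndex i j :: edgeIndex i k :: edgeIndex i k :: L) := by
  refine .trans (L' := edgeIndex i k :: edgeIndex i k :: edgeIndex i j :: L) ⟨rfl, ?_⟩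
    (WordSystem.congr_of_perm t ?_)
  · change _ ∈ hitAt (pairDegree (L.length + 3))
    simp only [pairWord_cons hij, pairWord_cons hik]
    set f := pairWords.word L t
    convert sub_mem (sq1_three_mem_hitAt _ i j k (X i * X j * X k * (X i * f ^ 2) ^ 2))
      (X_mul_X_mul_sq_mem_hitAt_pairDegree j k (X_mul_X_mul_sq_mem_hitAt_pairDegree j k
        (sq_mem_hitAt (pairDegree_pos (L.length + 1)) (X i * f)))) using 1
    ring
  · exact ((List.Perm.swap _ _ L).cons _).trans (.swap _ _ _)

theorem pairWords_congr_opposite (hij : i ≠ j) (hik : i ≠ k) (hil : i ≠ l) (hkl : k ≠ l) :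
    pairWords.Congr i [edgeIndex i j, edgeIndex i j, edgeIndex k l]
      [edgeIndex i j, edgeIndex k l, edgeIndex k l] := by
  refine ⟨rfl, ?_⟩
  change _ ∈ hitAt (pairDegree 3)
  have hsingle := pairWord_append_tail_mem_hitAt [edgeIndex i j, edgeIndex i j] hik hil hkl
  have hdouble := X_mul_X_mul_sq_mem_hitAt_pairDegree i j (s := 2)
    (pairWord_replicate_tail_mem_hitAt 1 hik hil hkl)
  have hk := (pairWords_congr_adjacent hij hil k []).2
  have hl := (pairWords_congr_adjacent hij hik l []).2
  have hsum : _ ∈ hitAt (pairDegree 3) := add_mem (add_mem hsingle hdouble) (add_mem hk hl)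
  convert hsum using 1
  simp only [List.cons_append, List.nil_append, List.replicate, CharTwo.add_sq, mul_add,
    ← pairWord_cons hij]
  linear_combination -(pairWords.word [edgeIndex i j, edgeIndex i j, edgeIndex i l] k
    + pairWords.word [edgeIndex i j, edgeIndex i j, edgeIndex i k] l
    + pairWords.word [edgeIndex i j, edgeIndex i l, edgeIndex i l] k
    + pairWords.word [edgeIndex i j, edgeIndex i k, edgeIndex i k] l) * two_eq_zero

theorem pairWords_idempotent : pairWords.Idempotent := by
  intro t a b L
  rcases edge_cases a b with rfl | ⟨i, j, k, hij, hik, -, rfl, rfl⟩ |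
    ⟨i, j, k, l, ⟨hij, hik, hil, hjk, hjl, hkl⟩, rfl, rfl⟩
  · exact .refl t _
  · exact pairWords_congr_adjacent hij hik t L
  have ht : t = i ∨ t = j ∨ t = k ∨ t = l := by
    clear L
    revert t i j k l; decide
  suffices pairWords.Congr t [edgeIndex i j, edgeIndex i j, edgeIndex k l]
      [edgeIndex i j, edgeIndex k l, edgeIndex k l] from
    (WordSystem.congr_of_perm t List.perm_append_comm).trans ((this.append_left L).trans
      (WordSystem.congr_of_perm t List.perm_append_comm))
  have reverse {a b : Fin 6} (h : pairWords.Congr t [b, b, a] [b, a, a]) :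
      pairWords.Congr t [a, a, b] [a, b, b] :=
    (WordSystem.congr_of_perm t (List.reverse_perm [b, a, a])).trans
      (h.symm.trans (WordSystem.congr_of_perm t (List.reverse_perm [b, b, a]).symm))
  obtain rfl | rfl | rfl | rfl := ht
  · exact pairWords_congr_opposite hij hik hil hkl
  · rw [edgeIndex_comm]
    exact pairWords_congr_opposite hij.symm hjk hjl hkl
  · exact reverse (pairWords_congr_opposite hkl hik.symm hjk.symm hij)
  · rw [edgeIndex_comm k]
    exact reverse (pairWords_congr_opposite hkl.symm hil.symm hjl.symm hij)

end PairWords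

section Spanning

variable {V : Submodule kk P4} {p : P4} {e k : ℕ}

theorem mul_sq_mem_of_homog_le_span {S : Set P4} (hp : p ∈ homog e)
    (hV : hitAt (e + 2 * k) ≤ V) (hS : homog k ≤ Submodule.span kk S)
    (h : ∀ g ∈ S, p * g ^ 2 ∈ V) (f : P4) : p * f ^ 2 ∈ V := by
  have hspan : Submodule.span kk S ≤ V.comap (mulSq p) := Submodule.span_le.2 h
  have hcomp : p * homogeneousComponent k f ^ 2 ∈ V :=
    hspan (hS (homogeneousComponent_mem k f))
  rw [← homogeneousComponent_mul_sq hp] at hcomp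
  convert add_mem (hV (homogeneousComponent_add_self_mem_hitAt _ (p * f ^ 2))) hcomp using 1
  linear_combination -homogeneousComponent (e + 2 * k) (p * f ^ 2) * two_eq_zero

theorem mul_sq_mem_of_forall_X (hp : p ∈ homog e) (hV : hitAt (e + 2) ≤ V)
    (h : ∀ t, p * X t ^ 2 ∈ V) (f : P4) : p * f ^ 2 ∈ V :=
  mul_sq_mem_of_homog_le_span (k := 1) hp hV homogeneousSubmodule_one_eq_span_X.le
    (by rintro _ ⟨t, rfl⟩; exact h t) f

theorem mul_sq_mem_of_one (hp : p ∈ homog e) (hV : hitAt e ≤ V) (h : p ∈ V) (f : P4) :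
    p * f ^ 2 ∈ V := by
  refine mul_sq_mem_of_homog_le_span (k := 0) (S := {1}) hp hV ?_ ?_ f
  · rw [homog, homogeneousSubmodule_zero, Submodule.one_eq_span]
  · rintro _ rfl
    simpa using h

theorem X_mul_X_mul_sq_mem_wordSpan (s : ℕ) (i j : Fin 4) (f : P4) :
    X i * X j * f ^ 2 ∈ pairWords.wordSpan (s + 1) := by
  obtain rfl | hij := eq_or_ne i j
  · refine WordSystem.hitAt_le_wordSpan _ ?_
    rw [← pow_two, ← mul_pow]
    exact sq_mem_hitAt (pairDegree_pos (s + 1)) _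
  induction s generalizing i j f with
  | zero =>
    refine mul_sq_mem_of_forall_X (X_mul_X_mem_homog i j)
      (WordSystem.hitAt_le_wordSpan (W := pairWords) 1) (fun t => ?_) f
    have hword := WordSystem.word_mem_wordSpan (W := pairWords) [edgeIndex i j] t
    rwa [pairWord_cons hij, pairWord_nil] at hword
  | succ s ih =>
    have hpair {a b : Fin 4} (hab : a ≠ b) {i j : Fin 4} (hij : i ≠ j) (u : P4) :
        X i * X j * (X a * X b * u ^ 2) ^ 2 ∈ pairWords.wordSpan (s + 2) := by
      rw [← edgeProd_edgeIndex hij]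
      exact WordSystem.letter_mul_sq_mem_wordSpan (W := pairWords) _ (ih a b u hab)
    have hhit {f : P4} (hf : f ∈ hitAt (pairDegree (s + 1))) :
        X i * X j * f ^ 2 ∈ pairWords.wordSpan (s + 2) :=
      WordSystem.hitAt_le_wordSpan _ (X_mul_X_mul_sq_mem_hitAt_pairDegree i j hf)
    induction f using varProd_mul_sq_induction with
    | add f g hf hg =>
      rw [CharTwo.add_sq, mul_add]
      exact add_mem hf hg
    | varProd_mul_sq A q =>
      rcases card_cases_even A with h | rfl | ⟨a, b, hab, rfl⟩ | rfl
      · exact hhit (mul_sq_mem_hitAt_of_parity (varProd_mem_homog A)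
          (by rw [h, pairDegree_succ_mod_two]; decide) q)
      · rw [varProd, Finset.prod_empty, one_mul]
        exact hhit (sq_mem_hitAt (pairDegree_pos _) q)
      · rw [varProd_pair hab]
        exact hpair hab hij q
      · obtain ⟨k, l, h⟩ := exists_ne_two hij
        rw [varProd_univ_eq_of_ne h]
        obtain ⟨-, hik, hil, hjk, hjl, -⟩ := h
        convert sub_mem (WordSystem.hitAt_le_wordSpan (W := pairWords) _
            (sq1_three_mem_hitAt _ i j k (X i * X j * X l * q ^ 2)))
          (add_mem (hpair hjl hjk (X i * q)) (hpair hil hik (X j * q))) using 1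
        ring

theorem add_varProd_univ_mul_kameko_sq_mem_wordSpan (s : ℕ) (f : P4) :
    f + varProd Finset.univ * kameko Finset.univ f ^ 2 ∈ pairWords.wordSpan (s + 1) := by
  induction f using varProd_mul_sq_induction with
  | add f g hf hg =>
    convert add_mem hf hg using 1
    rw [map_add, CharTwo.add_sq]
    ring
  | varProd_mul_sq A q =>
    rw [kameko_varProd_mul_sq]
    split_ifs with hA
    · rw [hA, CharTwo.add_self_eq_zero]
      exact zero_mem _
    rw [zero_pow two_ne_zero, mul_zero, add_zero]
    rcases card_cases_even A with h | rfl | ⟨a, b, hab, rfl⟩ | rfl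
    · exact WordSystem.hitAt_le_wordSpan _ (mul_sq_mem_hitAt_of_parity (varProd_mem_homog A)
        (by rw [h]; exact (pairDegree_succ_mod_two s).trans_ne zero_ne_one) q)
    · rw [varProd, Finset.prod_empty, one_mul]
      exact WordSystem.hitAt_le_wordSpan _ (sq_mem_hitAt (pairDegree_pos _) q)
    · rw [varProd_pair hab]
      exact X_mul_X_mul_sq_mem_wordSpan s a b q
    · exact absurd rfl hA

end Spanning

section TripleWords

/-- A cubic monomial with given support; all cubic monomials with that support agree modulo hit
polynomials. The supports of size `0` and `4`, which do not occur, are given the value `0`. -/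
def cubic : List (Fin 4) → P4
  | [a] => X a * X a * X a
  | [a, b] => X a * X a * X b
  | [a, b, c] => X a * X b * X c
  | _ => 0

/-- The code of the set `{a, b, c}`. -/
def support (a b c : Fin 4) : Fin 16 := Fin.ofNat 16 (2 ^ a.val ||| 2 ^ b.val ||| 2 ^ c.val)

theorem digits_support (a b c : Fin 4) : (a = b ∧ b = c ∧ digits 4 (support a b c) = [a]) ∨
    (∃ i j, ([a, b, c].Perm [i, i, j] ∨ [a, b, c].Perm [j, j, i]) ∧
      digits 4 (support a b c) = [i, j]) ∨ [a, b, c].Perm (digits 4 (support a b c)) := by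
  revert a b c; decide

theorem X_mul_X_mul_X_add_cubic_mem_hitAt (a b c : Fin 4) :
    X a * X b * X c + cubic (digits 4 (support a b c)) ∈ hitAt 3 := by
  have hprod {l l' : List (Fin 4)} (h : l.Perm l') :
      (l.map X).prod = ((l'.map X).prod : P4) := (h.map X).prod_eq
  rcases digits_support a b c with ⟨rfl, rfl, h⟩ | ⟨i, j, hp | hp, h⟩ | hp
  · rw [h, cubic, CharTwo.add_self_eq_zero]
    exact zero_mem _
  · have := hprod hp
    simp only [List.map_cons, List.map_nil, List.prod_cons, List.prod_nil, mul_one] at this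
    rw [h, cubic, mul_assoc, this, mul_assoc, CharTwo.add_self_eq_zero]
    exact zero_mem _
  · have := hprod hp
    simp only [List.map_cons, List.map_nil, List.prod_cons, List.prod_nil, mul_one] at this
    rw [h, cubic, mul_assoc, this]
    convert sq1_two_mem_hitAt 3 i j 1 using 1
    ring
  · obtain ⟨x, y, z, h⟩ := List.length_eq_three.1 hp.length_eq.symm
    have := hprod hp
    simp only [h, List.map_cons, List.map_nil, List.prod_cons, List.prod_nil, mul_one] at this
    rw [h, cubic, mul_assoc, this, mul_assoc, CharTwo.add_self_eq_zero]
    exact zero_mem _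

theorem varProd_compl_singleton {i j k l : Fin 4}
    (h : i ≠ j ∧ i ≠ k ∧ i ≠ l ∧ j ≠ k ∧ j ≠ l ∧ k ≠ l) : varProd {i}ᶜ = X j * X k * X l := by
  have hset : ({i}ᶜ : Finset (Fin 4)) = {j, k, l} := by revert i j k l; decide
  obtain ⟨-, -, -, hjk, hjl, hkl⟩ := h
  rw [hset, varProd, Finset.prod_insert (by simp [hjk, hjl]), Finset.prod_pair hkl, mul_assoc]

theorem exists_ne_pairs {i j : Fin 4} (h : i ≠ j) :
    ∃ k l, (i ≠ j ∧ i ≠ k ∧ i ≠ l ∧ j ≠ k ∧ j ≠ l ∧ k ≠ l) ∧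
      j ≠ i ∧ j ≠ k ∧ j ≠ l ∧ i ≠ k ∧ i ≠ l ∧ k ≠ l := by revert i j; decide

theorem varProd_compl_mul_sq_mem_hitAt (i : Fin 4) {s : ℕ} {f : P4}
    (hf : f ∈ hitAt (tripleDegree (s + 1))) :
    varProd {i}ᶜ * f ^ 2 ∈ hitAt (tripleDegree (s + 2)) := by
  obtain ⟨j, k, l, h⟩ := exists_ne_three i
  rw [varProd_compl_singleton h]
  exact X_mul_X_mul_X_mul_sq_mem_hitAt j k l hf

theorem varProd_compl_swap_mem_hitAt (s : ℕ) (i j : Fin 4) (f : P4) :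
    varProd {i}ᶜ * (varProd {j}ᶜ * f ^ 2) ^ 2 + varProd {j}ᶜ * (varProd {i}ᶜ * f ^ 2) ^ 2 ∈
      hitAt (tripleDegree (s + 3)) := by
  obtain rfl | hij := eq_or_ne i j
  · rw [CharTwo.add_self_eq_zero]
    exact zero_mem _
  obtain ⟨k, l, h, h'⟩ := exists_ne_pairs hij
  rw [varProd_compl_singleton h, varProd_compl_singleton h']
  convert sub_mem (sq1_four_mem_hitAt _ i j k l (X k * X l * f ^ 2))
    (add_mem (X_mul_X_mul_X_mul_sq_mem_hitAt i j l
      (X_mul_sq_mem_hitAt_tripleDegree s l (X k * f)))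
    (X_mul_X_mul_X_mul_sq_mem_hitAt i j k
      (X_mul_sq_mem_hitAt_tripleDegree s k (X l * f)))) using 1
  ring

theorem varProd_compl_idempotent_mem_hitAt (s : ℕ) {i j : Fin 4} (hij : i ≠ j) (f : P4) :
    varProd {i}ᶜ * (varProd {i}ᶜ * (varProd {j}ᶜ * f ^ 2) ^ 2) ^ 2
      + varProd {j}ᶜ * (varProd {j}ᶜ * (varProd {i}ᶜ * f ^ 2) ^ 2) ^ 2 ∈
        hitAt (tripleDegree (s + 4)) := by
  obtain ⟨k, l, h, h'⟩ := exists_ne_pairs hij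
  rw [varProd_compl_singleton h, varProd_compl_singleton h']
  have htwo (a b : Fin 4) (q : P4) :
      X i * X j * X a * (X i * X j * X a * (X b * q ^ 2) ^ 2) ^ 2 ∈
        hitAt (tripleDegree (s + 4)) :=
    X_mul_X_mul_X_mul_sq_mem_hitAt i j a (X_mul_X_mul_X_mul_sq_mem_hitAt i j a
      (X_mul_sq_mem_hitAt_tripleDegree s b q))
  convert sub_mem
    (sq1_four_mem_hitAt _ i j k l (X i * X j * X k * X l * (X k * X l * f ^ 2) ^ 2))
    (add_mem (htwo l l (X k * f)) (htwo k k (X l * f))) using 1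
  ring

/-- The words with triples of variables as letters and cubic monomials as tails. -/
def tripleWords : WordSystem (Fin 4) (Fin 16) where
  letter i := varProd {i}ᶜ
  tail t := cubic (digits 4 t)
  degree s := tripleDegree (s + 1)
  letter_mul_sq_mem _ i _ hf := varProd_compl_mul_sq_mem_hitAt i hf
  letter_swap_mem s i j f := varProd_compl_swap_mem_hitAt s i j f

theorem tripleWord_cons (i : Fin 4) (L : List (Fin 4)) (t : Fin 16) :
    tripleWords.word (i :: L) t = varProd {i}ᶜ * tripleWords.word L t ^ 2 := rfl

theorem tripleWords_idempotent : tripleWords.Idempotent := by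
  intro t i j L
  obtain rfl | hij := eq_or_ne i j
  · exact .refl t _
  refine .trans (L' := j :: j :: i :: L) ⟨rfl, ?_⟩
    (WordSystem.congr_of_perm t (((List.Perm.swap _ _ L).cons _).trans (.swap _ _ _)))
  simp only [tripleWord_cons]
  exact varProd_compl_idempotent_mem_hitAt L.length hij (tripleWords.word L t)

theorem X_mul_X_mul_X_mem_wordSpan (a b c : Fin 4) :
    X a * X b * X c ∈ tripleWords.wordSpan 0 := by
  convert add_mem (WordSystem.hitAt_le_wordSpan (W := tripleWords) 0
    (X_mul_X_mul_X_add_cubic_mem_hitAt a b c))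
    (WordSystem.word_mem_wordSpan [] (support a b c)) using 1
  rw [WordSystem.word, iterMulSq_nil, tripleWords, add_assoc, CharTwo.add_self_eq_zero, add_zero]

theorem mem_wordSpan_tripleWords_zero (f : P4) : f ∈ tripleWords.wordSpan 0 := by
  have hhit : hitAt 3 ≤ tripleWords.wordSpan 0 :=
    WordSystem.hitAt_le_wordSpan (W := tripleWords) 0
  induction f using varProd_mul_sq_induction with
  | add f g hf hg => exact add_mem hf hg
  | varProd_mul_sq A q =>
    rcases card_cases_odd A with h | ⟨a, rfl⟩ | ⟨a, rfl⟩
    · exact hhit (mul_sq_mem_hitAt_of_parity (varProd_mem_homog A) (by rw [h]; decide) q)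
    · rw [varProd, Finset.prod_singleton]
      refine mul_sq_mem_of_forall_X (X_mem_homog a) hhit (fun t => ?_) q
      rw [pow_two, ← mul_assoc]
      exact X_mul_X_mul_X_mem_wordSpan a t t
    · obtain ⟨j, k, l, h⟩ := exists_ne_three a
      rw [varProd_compl_singleton h]
      exact mul_sq_mem_of_one (X_mul_X_mul_X_mem_homog j k l) hhit
        (X_mul_X_mul_X_mem_wordSpan j k l) q

theorem mem_wordSpan_tripleWords (s : ℕ) (f : P4) : f ∈ tripleWords.wordSpan s := by
  induction s generalizing f with
  | zero => exact mem_wordSpan_tripleWords_zero f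
  | succ s ih =>
    have hhit : hitAt (tripleDegree (s + 2)) ≤ tripleWords.wordSpan (s + 1) :=
      WordSystem.hitAt_le_wordSpan (W := tripleWords) (s + 1)
    induction f using varProd_mul_sq_induction with
    | add f g hf hg => exact add_mem hf hg
    | varProd_mul_sq A q =>
      rcases card_cases_odd A with h | ⟨a, rfl⟩ | ⟨a, rfl⟩
      · exact hhit (mul_sq_mem_hitAt_of_parity (varProd_mem_homog A)
          (by rw [h, tripleDegree_succ_mod_two]; decide) q)
      · rw [varProd, Finset.prod_singleton]
        exact hhit (X_mul_sq_mem_hitAt_tripleDegree s a q)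
      · exact WordSystem.letter_mul_sq_mem_wordSpan (W := tripleWords) a (ih q)

theorem exists_tripleWord_replicate_add_mem_hitAt (n : ℕ) (b c : Fin 4) : ∃ h : P4, ∀ a,
    X a * h + tripleWords.word (List.replicate n a) (support a b c) ∈
      hitAt (tripleDegree (n + 1)) := by
  induction n with
  | zero =>
    refine ⟨X b * X c, fun a => ?_⟩
    rw [← mul_assoc]
    exact X_mul_X_mul_X_add_cubic_mem_hitAt a b c
  | succ n ih =>
    obtain ⟨h, hh⟩ := ih
    refine ⟨varProd Finset.univ * h ^ 2, fun a => ?_⟩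
    convert varProd_compl_mul_sq_mem_hitAt a (hh a) using 1
    have huniv : varProd Finset.univ = X a * varProd {a}ᶜ :=
      Fintype.prod_eq_mul_prod_compl a _
    rw [List.replicate_succ, tripleWord_cons, huniv, CharTwo.add_sq]
    ring

theorem tripleWord_replicate_tail_mem_hitAt (n : ℕ) (b c : Fin 4) :
    ∑ a, tripleWords.word (List.replicate (n + 1) a) (support a b c) ∈
      hitAt (tripleDegree (n + 2)) := by
  obtain ⟨h, hh⟩ := exists_tripleWord_replicate_add_mem_hitAt n b c
  convert sub_mem (Submodule.sum_mem _ fun a (_ : a ∈ Finset.univ) =>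
    varProd_compl_mul_sq_mem_hitAt a (hh a)) (sum_mul_sq_mem_hitAt id _ h) using 1
  simp only [CharTwo.add_sq, mul_add, Finset.sum_add_distrib, varProd, id, add_sub_cancel_left]
  rfl

theorem tripleWord_append_tail_mem_hitAt (L : List (Fin 4)) (b c : Fin 4) :
    ∑ a, tripleWords.word (L ++ [a]) (support a b c) ∈
      hitAt (tripleDegree (L.length + 2)) := by
  simp only [WordSystem.word, iterMulSq_append, ← map_sum]
  exact WordSystem.iterMulSq_mem_hitAt (W := tripleWords) (s := 1) L
    (tripleWord_replicate_tail_mem_hitAt 0 b c)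

end TripleWords

section Substitution

/-- Square matrices acting on the four variables. -/
abbrev Mat : Type := Matrix (Fin 4) (Fin 4) kk

/-- Coefficient vectors of linear forms in the dual variables. -/
abbrev Vec : Type := Fin 4 → kk

variable {n : ℕ} {f : P4} (M N : Mat)

@[simp] theorem substM_X (i : Fin 4) : substM M (X i) = ∑ j, M i j • X j := aeval_X _ i

theorem substM_sqTotal (f : P4) : substM M (sqTotal f) = sqTotal (substM M f) := by
  suffices h : (substM M).comp sqTotal = sqTotal.comp (substM M) from DFunLike.congr_fun h f
  refine algHom_ext fun i => ?_
  simp only [AlgHom.comp_apply, sqTotal_X, map_add, map_pow, substM_X, map_sum, map_smul,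
    CharTwo.sum_sq, smul_add, Finset.sum_add_distrib, smul_pow, ZMod.pow_card]

theorem substM_substM (f : P4) : substM N (substM M f) = substM (M * N) f := by
  suffices h : (substM N).comp (substM M) = substM (M * N) from DFunLike.congr_fun h f
  refine algHom_ext fun i => ?_
  simp only [AlgHom.comp_apply, substM_X, map_sum, map_smul, Matrix.mul_apply, Finset.smul_sum,
    Finset.sum_smul, smul_smul]
  exact Finset.sum_comm

theorem substM_one (f : P4) : substM 1 f = f := by
  suffices h : substM 1 = AlgHom.id kk P4 from DFunLike.congr_fun h f
  refine algHom_ext fun i => ?_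
  simp [Matrix.one_apply]

theorem substM_mem_homog (hf : f ∈ homog n) : substM M f ∈ homog n := by
  have h : ∀ i, (∑ j, M i j • (X j : P4)).IsHomogeneous 1 := fun i =>
    sum_mem fun j _ => (homog 1).smul_mem _ (X_mem_homog j)
  rw [← one_mul n]
  exact IsHomogeneous.aeval (S := kk) hf _ h

theorem homogeneousComponent_substM (n : ℕ) (f : P4) :
    homogeneousComponent n (substM M f) = substM M (homogeneousComponent n f) := by
  induction f using homog_induction with
  | homog d f hf =>
    obtain rfl | h := eq_or_ne n d
    · rw [homogeneousComponent_of_mem_homog hf,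
        homogeneousComponent_of_mem_homog (substM_mem_homog M hf)]
    · rw [homogeneousComponent_of_mem_homog_of_ne hf h,
        homogeneousComponent_of_mem_homog_of_ne (substM_mem_homog M hf) h, map_zero]
  | add f g hf hg => simp only [map_add, hf, hg]

theorem map_mem_hitAt {m : ℕ} {T : P4 →ₗ[kk] P4} (hsq : ∀ f, T (sqTotal f) = sqTotal (T f))
    (hcomp : ∀ f, T (homogeneousComponent n f) = homogeneousComponent m (T f))
    (hf : f ∈ hitAt n) : T f ∈ hitAt m := by
  have hle : hitSub n ≤ (hitAt m).comap T := by
    rw [hitSub, Submodule.span_le]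
    rintro _ ⟨d, hd, g, hg, rfl⟩
    have hTg : T g ∈ hitAt m := mem_hitAt_of_homogeneousComponent_eq_zero <| by
      rw [← hcomp, homogeneousComponent_of_mem_homog_of_ne hg hd.ne', map_zero]
    rw [SetLike.mem_coe, Submodule.mem_comap, hcomp, homogeneousComponent_mem_hitAt, hsq]
    exact (Submodule.add_mem_iff_left _ hTg).1 (sqTotal_add_self_mem_hitAt m (T g))
  rw [← homogeneousComponent_mem_hitAt, ← hcomp]
  exact hle hf

theorem substM_mem_hitAt (hf : f ∈ hitAt n) : substM M f ∈ hitAt n :=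
  map_mem_hitAt (T := (substM M).toLinearMap) (substM_sqTotal M)
    (fun f => (homogeneousComponent_substM M n f).symm) hf

theorem substM_transvection_X_self (i j : Fin 4) :
    substM (Matrix.transvection i j 1) (X i) = X i + X j := by
  simp [Matrix.transvection, Matrix.one_apply, Matrix.single_apply, add_smul, ite_smul,
    Finset.sum_add_distrib]

theorem substM_transvection_X_of_ne {i k : Fin 4} (j : Fin 4) (h : k ≠ i) :
    substM (Matrix.transvection i j 1) (X k) = X k := by
  simp [Matrix.transvection, Matrix.one_apply, h.symm]

theorem substM_transvection_varProd_of_notMem {i : Fin 4} (j : Fin 4) {A : Finset (Fin 4)}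
    (h : i ∉ A) : substM (Matrix.transvection i j 1) (varProd A) = varProd A := by
  rw [varProd, map_prod]
  exact Finset.prod_congr rfl fun k hk =>
    substM_transvection_X_of_ne j (ne_of_mem_of_not_mem hk h)

theorem substM_transvection_varProd_of_mem {i : Fin 4} (j : Fin 4) {A : Finset (Fin 4)}
    (h : i ∈ A) : substM (Matrix.transvection i j 1) (varProd A) =
      varProd A + X j * varProd (A.erase i) := by
  have hsplit : varProd A = X i * varProd (A.erase i) := (Finset.mul_prod_erase A _ h).symm
  rw [hsplit, map_mul, substM_transvection_X_self,
    substM_transvection_varProd_of_notMem j (Finset.notMem_erase i A), add_mul]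

end Substitution

section KamekoEquivariance

variable {K : Finset (Fin 4)}

theorem kameko_X_mul (j : Fin 4) (f : P4) :
    kameko K (X j * f) =
      if j ∈ K then kameko (K.erase j) f else X j * kameko (insert j K) f := by
  induction f using varProd_mul_sq_induction with
  | add f g hf hg => rw [mul_add, map_add, hf, hg]; split_ifs <;> simp only [map_add, mul_add]
  | varProd_mul_sq A q =>
    by_cases hA : j ∈ A
    · have hsq : X j * (varProd A * q ^ 2) = varProd (A.erase j) * (X j * q) ^ 2 := by
        rw [varProd, varProd, ← Finset.mul_prod_erase A _ hA]; ring
      have hiff : j ∉ K → (A.erase j = K ↔ A = insert j K) := fun hK =>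
        ⟨fun h => h ▸ (Finset.insert_erase hA).symm, fun h => h ▸ Finset.erase_insert hK⟩
      rw [hsq, kameko_varProd_mul_sq, kameko_varProd_mul_sq, kameko_varProd_mul_sq]
      split_ifs <;> grind
    · have hprod : X j * (varProd A * q ^ 2) = varProd (insert j A) * q ^ 2 := by
        rw [varProd, varProd, Finset.prod_insert hA, mul_assoc]
      rw [hprod, kameko_varProd_mul_sq, kameko_varProd_mul_sq, kameko_varProd_mul_sq]
      split_ifs <;> grind

theorem kameko_transvection {i j : Fin 4} (hi : i ∈ K) (hij : i ≠ j) (f : P4) :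
    kameko K (substM (Matrix.transvection i j 1) f) =
      substM (Matrix.transvection i j 1) (kameko K f) := by
  induction f using varProd_mul_sq_induction with
  | add f g hf hg => simp only [map_add, hf, hg]
  | varProd_mul_sq A q =>
    set q' := substM (Matrix.transvection i j 1) q
    rw [kameko_varProd_mul_sq, map_mul (substM _), map_pow, apply_ite (substM _), map_zero]
    by_cases hA : i ∈ A
    · have herase : i ∉ A.erase i := Finset.notMem_erase i A
      have hzero : kameko K (X j * (varProd (A.erase i) * q' ^ 2)) = 0 := by
        rw [kameko_X_mul, kameko_varProd_mul_sq, kameko_varProd_mul_sq]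
        have h₁ : A.erase i ≠ K.erase j := fun h => herase (h ▸ Finset.mem_erase.2 ⟨hij, hi⟩)
        have h₂ : A.erase i ≠ insert j K := fun h => herase (h ▸ Finset.mem_insert_of_mem hi)
        simp [h₁, h₂]
      rw [substM_transvection_varProd_of_mem j hA, add_mul, map_add, mul_assoc (X j), hzero,
        add_zero, kameko_varProd_mul_sq]
    · rw [substM_transvection_varProd_of_notMem j hA, kameko_varProd_mul_sq]

end KamekoEquivariance

section StableFunctionals

/-- A functional on `P4` is stable in degree `n` if it only sees the degree-`n` component and is
invariant under the total square. Such functionals are the primitives dual to the hit problem. -/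
structure IsStable (n : ℕ) (φ : P4 →ₗ[kk] kk) : Prop where
  map_sqTotal : ∀ f, φ (sqTotal f) = φ f
  map_homogeneousComponent : ∀ f, φ (homogeneousComponent n f) = φ f

namespace IsStable

variable {n : ℕ} {φ : P4 →ₗ[kk] kk} {f : P4}

theorem eq_zero_of_mem_hitAt (h : IsStable n φ) (hf : f ∈ hitAt n) : φ f = 0 := by
  have hle : hitSub n ≤ LinearMap.ker φ := by
    rw [hitSub, Submodule.span_le]
    rintro _ ⟨d, hd, g, hg, rfl⟩
    rw [SetLike.mem_coe, LinearMap.mem_ker, h.map_homogeneousComponent, h.map_sqTotal,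
      ← h.map_homogeneousComponent, homogeneousComponent_of_mem_homog_of_ne hg hd.ne', map_zero]
  rw [← h.map_homogeneousComponent]
  exact hle hf

theorem comp_substM (h : IsStable n φ) (M : Mat) : IsStable n (φ ∘ₗ (substM M).toLinearMap) where
  map_sqTotal f := by simp [substM_sqTotal, h.map_sqTotal]
  map_homogeneousComponent f := by
    simp [← homogeneousComponent_substM, h.map_homogeneousComponent]

theorem sum {ι : Type*} {s : Finset ι} {φ : ι → P4 →ₗ[kk] kk} (h : ∀ i ∈ s, IsStable n (φ i)) :
    IsStable n (∑ i ∈ s, φ i) where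
  map_sqTotal f := by
    simp only [LinearMap.sum_apply]
    exact Finset.sum_congr rfl fun i hi => (h i hi).map_sqTotal f
  map_homogeneousComponent f := by
    simp only [LinearMap.sum_apply]
    exact Finset.sum_congr rfl fun i hi => (h i hi).map_homogeneousComponent f

theorem comp_kameko (h : IsStable n φ) {K : Finset (Fin 4)}
    (hφ : ∀ j ∉ K, ∀ g, φ (X j * g) = 0) : IsStable (K.card + 2 * n) (φ ∘ₗ kameko K) where
  map_homogeneousComponent f := by
    rw [LinearMap.comp_apply, kameko_homogeneousComponent, h.map_homogeneousComponent,
      LinearMap.comp_apply]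
  map_sqTotal f := by
    induction f using varProd_mul_sq_induction with
    | add f g hf hg => simp only [map_add, hf, hg]
    | varProd_mul_sq A q =>
      rw [LinearMap.comp_apply, kameko_sqTotal, LinearMap.comp_apply, kameko_varProd_mul_sq,
        map_sum, Finset.sum_eq_single_of_mem ∅ (Finset.empty_mem_powerset A)]
      · rw [Finset.sdiff_empty, varProd, Finset.prod_empty, one_mul]
        split_ifs
        exacts [h.map_sqTotal q, rfl]
      · intro B _ hne
        split_ifs with hK
        · obtain ⟨j, hj⟩ := Finset.nonempty_iff_ne_empty.2 hne
          rw [varProd, ← Finset.mul_prod_erase B _ hj, mul_assoc]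
          exact hφ j (hK ▸ fun h => (Finset.mem_sdiff.1 h).2 hj) _
        · exact map_zero φ

end IsStable

/-- The coefficient of the monomial `varProd K₀ * varProd K₁ ^ 2 * varProd K₂ ^ 4 * ⋯`, for the
list `K₀, K₁, K₂, …` of sets of variables. -/
def spikeCoeff : List (Finset (Fin 4)) → P4 →ₗ[kk] kk
  | [] => lcoeff kk 0
  | K :: l => spikeCoeff l ∘ₗ kameko K

/-- The degree of the monomial read off by `spikeCoeff`. -/
def spikeDegree (l : List (Finset (Fin 4))) : ℕ := l.foldr (fun K n => K.card + 2 * n) 0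

theorem spikeCoeff_X_mul {l : List (Finset (Fin 4))} {j : Fin 4} (h : ∀ K ∈ l, j ∉ K) (f : P4) :
    spikeCoeff l (X j * f) = 0 := by
  induction l generalizing f with
  | nil => simp [spikeCoeff, coeff_X_mul']
  | cons K l ih =>
    obtain ⟨hK, hl⟩ := List.forall_mem_cons.1 h
    rw [spikeCoeff, LinearMap.comp_apply, kameko_X_mul, if_neg hK, ih hl]

theorem isStable_lcoeff_zero : IsStable 0 (lcoeff kk (0 : Fin 4 →₀ ℕ)) where
  map_sqTotal f := by
    suffices h : (constantCoeff (R := kk)).comp sqTotal.toRingHom = constantCoeff from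
      DFunLike.congr_fun h f
    refine ringHom_ext (fun r => ?_) fun i => ?_
    · simp [sqTotal]
    · simp
  map_homogeneousComponent f := by simp

/-- Monomials whose lists of variable sets decrease are spikes; they occur in no nontrivial
Steenrod square. -/
theorem isStable_spikeCoeff {l : List (Finset (Fin 4))} (h : l.Pairwise fun K L => L ⊆ K) :
    IsStable (spikeDegree l) (spikeCoeff l) := by
  induction h with
  | nil => exact isStable_lcoeff_zero
  | cons hK _ ih =>
    exact ih.comp_kameko fun j hj => spikeCoeff_X_mul fun L hL hjL => hj (hK L hL hjL)

end StableFunctionals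

section PairFunctionals

/-- The substitution sending `X i` to `v i • X 0 + w i • X 1 + u i • X 2 + d i • X 3`. -/
def ofColumns (v w u d : Vec) : Mat := Matrix.of fun i => ![v i, w i, u i, d i]

theorem mul_ofColumns (M : Mat) (v w u d : Vec) :
    M * ofColumns v w u d =
      ofColumns (M.mulVec v) (M.mulVec w) (M.mulVec u) (M.mulVec d) := by
  ext i j
  fin_cases j <;> rfl

theorem substM_ofColumns_X (v w u d : Vec) (i : Fin 4) :
    substM (ofColumns v w u d) (X i) = v i • X 0 + w i • X 1 + u i • X 2 + d i • X 3 := by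
  simp [ofColumns, Fin.sum_univ_four]

theorem kameko_X_mul_X_mul_sq {K : Finset (Fin 4)} (hK : K.card = 2) (i j : Fin 4) (q : P4) :
    kameko K (X i * X j * q ^ 2) = if {i, j} = K then q else 0 := by
  obtain rfl | hij := eq_or_ne i j
  · have h : X i * X i * q ^ 2 = varProd ∅ * (X i * q) ^ 2 := by rw [varProd]; ring
    rw [h, kameko_varProd_mul_sq, if_neg, if_neg]
    all_goals rintro rfl; simp at hK
  · rw [← varProd_pair hij, kameko_varProd_mul_sq]

theorem kameko_linear_mul_linear_mul_sq (a b a' b' : kk) (q : P4) :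
    kameko {0, 1} ((a • X 0 + b • X 1) * (a' • X 0 + b' • X 1) * q ^ 2) =
      (a * b' + a' * b) • q := by
  have h (i : Fin 4) : ({i} : Finset (Fin 4)) ≠ {0, 1} := by revert i; decide
  have h' : ({1, 0} : Finset (Fin 4)) = {0, 1} := by decide
  simp only [add_mul, mul_add, smul_mul_assoc, mul_smul_comm, map_add, map_smul,
    kameko_X_mul_X_mul_sq (K := {0, 1}) rfl, Finset.pair_eq_singleton, if_neg (h _), if_pos h',
    if_true, smul_zero]
  module

theorem kameko_X_mul_X_mul_X_mul_sq {K : Finset (Fin 4)} (hK : K.card = 3) (i j k : Fin 4)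
    (q : P4) : kameko K (X i * X j * X k * q ^ 2) = if {i, j, k} = K then q else 0 := by
  have hsq {a b : Fin 4} : kameko K (varProd {b} * (X a * q) ^ 2) = 0 := by
    rw [kameko_varProd_mul_sq, if_neg]
    rintro rfl
    simp at hK
  by_cases h : i ≠ j ∧ i ≠ k ∧ j ≠ k
  · obtain ⟨hij, hik, hjk⟩ := h
    have hprod : varProd {i, j, k} = X i * X j * X k := by
      rw [varProd, Finset.prod_insert (by simp [hij, hik]), Finset.prod_pair hjk, mul_assoc]
    rw [← hprod, kameko_varProd_mul_sq]
  · have hcard : ({i, j, k} : Finset (Fin 4)) ≠ K := by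
      clear hsq
      rintro rfl
      revert i j k
      decide
    rw [if_neg hcard]
    obtain rfl | rfl | rfl : i = j ∨ i = k ∨ j = k := by tauto
    · exact hsq (a := i) (b := k) ▸ congrArg _ (by rw [varProd, Finset.prod_singleton]; ring)
    · exact hsq (a := i) (b := j) ▸ congrArg _ (by rw [varProd, Finset.prod_singleton]; ring)
    · exact hsq (a := j) (b := i) ▸ congrArg _ (by rw [varProd, Finset.prod_singleton]; ring)

theorem kameko_linear_mul_linear_mul_linear_mul_sq (a b c a' b' c' a'' b'' c'' : kk) (q : P4) :
    kameko {0, 1, 2} ((a • X 0 + b • X 1 + c • X 2) * (a' • X 0 + b' • X 1 + c' • X 2) *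
      (a'' • X 0 + b'' • X 1 + c'' • X 2) * q ^ 2) =
      (a * (b' * c'' + b'' * c') + a' * (b * c'' + b'' * c) + a'' * (b * c' + b' * c)) • q := by
  simp only [add_mul, mul_add, smul_mul_assoc, mul_smul_comm, map_add, map_smul,
    kameko_X_mul_X_mul_X_mul_sq (K := {0, 1, 2}) rfl]
  simp (decide := true) only [if_true, if_false, smul_zero, add_zero, zero_add]
  module

theorem kameko_singleton_X (i j : Fin 4) : kameko {i} (X j) = if j = i then 1 else 0 := by
  simpa [varProd] using kameko_varProd_mul_sq {i} {j} 1

/-- The coefficient of the spike `X 0 ^ (2 ^ (s + 1) - 1) * X 1 ^ (2 ^ s - 1)` after the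
substitution `X i ↦ v i • X 0 + w i • X 1`. -/
def pairFunctional (s : ℕ) (v w : Vec) : P4 →ₗ[kk] kk :=
  spikeCoeff (List.replicate s {0, 1} ++ [{0}]) ∘ₗ (substM (ofColumns v w 0 0)).toLinearMap

variable (s : ℕ) (v w : Vec)

theorem isStable_pairFunctional : IsStable (pairDegree s) (pairFunctional s v w) := by
  have hdeg : spikeDegree (List.replicate s {0, 1} ++ [{0}]) = pairDegree s := by
    induction s with
    | zero => rfl
    | succ s ih => exact congrArg (2 + 2 * ·) ih
  rw [← hdeg]
  refine (isStable_spikeCoeff ?_).comp_substM _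
  simp only [List.pairwise_append, List.pairwise_replicate, List.mem_replicate]
  simp

theorem pairFunctional_substM (M : Mat) (f : P4) :
    pairFunctional s v w (substM M f) = pairFunctional s (M.mulVec v) (M.mulVec w) f := by
  simp only [pairFunctional, LinearMap.comp_apply, AlgHom.toLinearMap_apply, substM_substM,
    mul_ofColumns, Matrix.mulVec_zero]

/-- The Plücker coordinates of the plane spanned by `v` and `w`. -/
def pluecker (v w : Vec) (a : Fin 6) : kk :=
  v (edge a).1 * w (edge a).2 + v (edge a).2 * w (edge a).1

theorem pairFunctional_edgeProd_mul_sq (a : Fin 6) (q : P4) :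
    pairFunctional (s + 1) v w (edgeProd a * q ^ 2) =
      pluecker v w a * pairFunctional s v w q := by
  simp only [pairFunctional, LinearMap.comp_apply, AlgHom.toLinearMap_apply, edgeProd, map_mul,
    map_pow, substM_ofColumns_X, Pi.zero_apply, zero_smul, add_zero, List.replicate_succ,
    List.cons_append, spikeCoeff, kameko_linear_mul_linear_mul_sq, map_smul, smul_eq_mul, pluecker]

theorem pairFunctional_zero_X (k : Fin 4) : pairFunctional 0 v w (X k) = v k := by
  simp only [pairFunctional, LinearMap.comp_apply, AlgHom.toLinearMap_apply, substM_ofColumns_X,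
    List.replicate_zero, List.nil_append, spikeCoeff, map_add, map_smul, kameko_singleton_X]
  simp

theorem pairFunctional_word (L : List (Fin 6)) (k : Fin 4) :
    pairFunctional L.length v w (pairWords.word L k) = (L.map (pluecker v w)).prod * v k := by
  induction L with
  | nil =>
    rw [List.length_nil, pairWord_nil, pairFunctional_zero_X, List.map_nil, List.prod_nil, one_mul]
  | cons a L ih =>
    rw [List.length_cons, List.map_cons, List.prod_cons, mul_assoc, ← ih]
    exact pairFunctional_edgeProd_mul_sq L.length v w a _

theorem spikeCoeff_singleton_substM (M : Mat) (k : Fin 4) (f : P4) :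
    spikeCoeff [{k}] (substM M f) = ∑ i, M i k * spikeCoeff [{i}] f := by
  have hstable (i : Fin 4) : IsStable 1 (spikeCoeff [{i}]) :=
    isStable_spikeCoeff (l := [{i}]) (List.pairwise_singleton _ _)
  have hX (i j : Fin 4) : spikeCoeff [{i}] (X j) = if j = i then 1 else 0 := by
    rw [spikeCoeff, LinearMap.comp_apply, kameko_singleton_X]
    split_ifs <;> simp [spikeCoeff]
  have hle : homog 1 ≤ LinearMap.eqLocus (spikeCoeff [{k}] ∘ₗ (substM M).toLinearMap)
      (∑ i, M i k • spikeCoeff [{i}]) := by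
    rw [homog, homogeneousSubmodule_one_eq_span_X, Submodule.span_le]
    rintro _ ⟨j, rfl⟩
    simp [hX]
  rw [← (hstable k).map_homogeneousComponent, homogeneousComponent_substM]
  simpa [(hstable _).map_homogeneousComponent] using hle (homogeneousComponent_mem 1 f)

theorem spikeCoeff_replicate_append_singleton_transvection {K : Finset (Fin 4)} {i j : Fin 4}
    (hi : i ∈ K) (hij : i ≠ j) (k : Fin 4) (f : P4) :
    spikeCoeff (List.replicate s K ++ [{k}]) (substM (Matrix.transvection i j 1) f) =
      spikeCoeff (List.replicate s K ++ [{k}]) f +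
        if j = k then spikeCoeff (List.replicate s K ++ [{i}]) f else 0 := by
  induction s generalizing f with
  | zero =>
    simp [spikeCoeff_singleton_substM, Matrix.transvection, Matrix.one_apply, Matrix.single_apply,
      add_mul, Finset.sum_add_distrib, ite_and]
  | succ s ih =>
    simp only [List.replicate_succ, List.cons_append, spikeCoeff, LinearMap.comp_apply,
      kameko_transvection hi hij, ih]

theorem ofColumns_mul_transvection_zero_one :
    ofColumns v w 0 0 * Matrix.transvection 0 1 1 = ofColumns v (v + w) 0 0 := by
  ext i j
  fin_cases j <;> simp [ofColumns, Matrix.transvection, mul_add, add_comm]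

theorem ofColumns_mul_transvection_one_zero :
    ofColumns v w 0 0 * Matrix.transvection 1 0 1 = ofColumns (v + w) w 0 0 := by
  ext i j
  fin_cases j <;> simp [ofColumns, Matrix.transvection, mul_add]

theorem pairFunctional_add_right (f : P4) :
    pairFunctional s v (v + w) f = pairFunctional s v w f := by
  have h := spikeCoeff_replicate_append_singleton_transvection s (K := {0, 1}) (i := 0) (j := 1)
    (by simp) (by simp) 0 (substM (ofColumns v w 0 0) f)
  simpa [pairFunctional, substM_substM, ofColumns_mul_transvection_zero_one] using h

theorem pairFunctional_add_left (f : P4) :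
    pairFunctional s (v + w) w f = pairFunctional s v w f + pairFunctional s w v f := by
  have hadd (v w : Vec) : pairFunctional s (v + w) w f = pairFunctional s v w f +
      spikeCoeff (List.replicate s {0, 1} ++ [{1}]) (substM (ofColumns v w 0 0) f) := by
    have h := spikeCoeff_replicate_append_singleton_transvection s (K := {0, 1}) (i := 1) (j := 0)
      (by simp) (by simp) 0 (substM (ofColumns v w 0 0) f)
    simpa [pairFunctional, substM_substM, ofColumns_mul_transvection_one_zero] using h
  have h₁ : spikeCoeff (List.replicate s {0, 1} ++ [{1}]) (substM (ofColumns v (v + w) 0 0) f) =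
      spikeCoeff (List.replicate s {0, 1} ++ [{1}]) (substM (ofColumns v w 0 0) f) +
        pairFunctional s v w f := by
    have h := spikeCoeff_replicate_append_singleton_transvection s (K := {0, 1}) (i := 0) (j := 1)
      (by simp) (by simp) 1 (substM (ofColumns v w 0 0) f)
    simpa [pairFunctional, substM_substM, ofColumns_mul_transvection_zero_one] using h
  -- The columns `w, v` arise from `v, w` by three transvections.
  have hw : pairFunctional s w v f = pairFunctional s (v + (v + w)) (v + w) f := by
    rw [CharTwo.add_cancel_left, add_comm v w, pairFunctional_add_right]
  rw [hw, hadd, hadd, h₁, pairFunctional_add_right]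
  linear_combination -pairFunctional s v w f * (CharTwo.two_eq_zero (R := kk))

end PairFunctionals

section TripleFunctionals

/-- The coefficient of the spike
`X 0 ^ (2 ^ (n + 2) - 1) * X 1 ^ (2 ^ n - 1) * X 2 ^ (2 ^ n - 1)` after the substitution
`X i ↦ v i • X 0 + w i • X 1 + u i • X 2`. -/
def tripleFunctional (n : ℕ) (v w u : Vec) : P4 →ₗ[kk] kk :=
  spikeCoeff (List.replicate n {0, 1, 2} ++ [{0}, {0}]) ∘ₗ
    (substM (ofColumns v w u 0)).toLinearMap

variable (n : ℕ) (v w u : Vec)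

theorem isStable_tripleFunctional :
    IsStable (tripleDegree (n + 1)) (tripleFunctional n v w u) := by
  have hdeg : spikeDegree (List.replicate n {0, 1, 2} ++ [{0}, {0}]) = tripleDegree (n + 1) := by
    induction n with
    | zero => rfl
    | succ n ih => exact congrArg (3 + 2 * ·) ih
  rw [← hdeg]
  refine (isStable_spikeCoeff ?_).comp_substM _
  simp only [List.pairwise_append, List.pairwise_replicate, List.mem_replicate]
  simp

theorem tripleFunctional_substM (M : Mat) (f : P4) :
    tripleFunctional n v w u (substM M f) =
      tripleFunctional n (M.mulVec v) (M.mulVec w) (M.mulVec u) f := by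
  simp only [tripleFunctional, LinearMap.comp_apply, AlgHom.toLinearMap_apply, substM_substM,
    mul_ofColumns, Matrix.mulVec_zero]

/-- The `3 × 3` minors of the matrix with columns `v`, `w`, `u`: the coefficient vector of the
linear form that vanishes on their span. -/
def minor (v w u : Vec) (i : Fin 4) : kk :=
  let (a, b, c) := (i.succAbove 0, i.succAbove 1, i.succAbove 2)
  v a * (w b * u c + w c * u b) + v b * (w a * u c + w c * u a) + v c * (w a * u b + w b * u a)

theorem det_ofColumns (d : Vec) : (ofColumns v w u d).det = ∑ i, minor v w u i * d i := by
  rw [Matrix.det_succ_column _ 3]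
  simp [Fin.sum_univ_four, minor, ofColumns, Matrix.det_fin_three, Fin.succAbove,
    CharTwo.sub_eq_add, CharTwo.neg_eq]
  ring

theorem sum_minor_mul_left : ∑ i, minor v w u i * v i = 0 := by
  rw [← det_ofColumns]
  exact Matrix.det_zero_of_column_eq (i := 0) (j := 3) (by decide) fun _ => rfl

theorem tripleFunctional_X_mul_X_mul_X_mul_sq (i j k : Fin 4) (q : P4) :
    tripleFunctional (n + 1) v w u (X i * X j * X k * q ^ 2) =
      (v i * (w j * u k + w k * u j) + v j * (w i * u k + w k * u i) +
        v k * (w i * u j + w j * u i)) * tripleFunctional n v w u q := by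
  simp only [tripleFunctional, LinearMap.comp_apply, AlgHom.toLinearMap_apply, map_mul,
    map_pow, substM_ofColumns_X, Pi.zero_apply, zero_smul, add_zero, List.replicate_succ,
    List.cons_append, spikeCoeff, kameko_linear_mul_linear_mul_linear_mul_sq, map_smul,
    smul_eq_mul]

theorem tripleFunctional_varProd_compl_mul_sq (i : Fin 4) (q : P4) :
    tripleFunctional (n + 1) v w u (varProd {i}ᶜ * q ^ 2) =
      minor v w u i * tripleFunctional n v w u q := by
  have hprod : varProd {i}ᶜ = X (i.succAbove 0) * X (i.succAbove 1) * X (i.succAbove 2) :=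
    varProd_compl_singleton (by revert i; decide)
  rw [hprod, tripleFunctional_X_mul_X_mul_X_mul_sq, minor]

theorem tripleFunctional_word (L : List (Fin 4)) (t : Fin 16) :
    tripleFunctional L.length v w u (tripleWords.word L t) =
      (L.map (minor v w u)).prod * tripleFunctional 0 v w u (cubic (digits 4 t)) := by
  induction L with
  | nil => rw [List.map_nil, List.prod_nil, one_mul]; rfl
  | cons i L ih =>
    rw [List.length_cons, List.map_cons, List.prod_cons, mul_assoc, ← ih]
    exact tripleFunctional_varProd_compl_mul_sq L.length v w u i _

theorem tripleFunctional_zero_X_mul_X_mul_X (a b c : Fin 4) :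
    tripleFunctional 0 v w u (X a * X b * X c) = v a * v b * v c := by
  have hX {j : Fin 4} (hj : j ≠ 0) (g : P4) : spikeCoeff [{0}, {0}] (X j * g) = 0 :=
    spikeCoeff_X_mul (by simp [hj]) g
  have hlin (i : Fin 4) (g : P4) :
      spikeCoeff [{0}, {0}] (substM (ofColumns v w u 0) (X i) * g) =
        v i * spikeCoeff [{0}, {0}] (X 0 * g) := by
    simp [substM_ofColumns_X, add_mul, hX, -substM_X]
  have hspike : spikeCoeff [{0}, {0}] (X 0 * (X 0 * X 0)) = 1 := by
    have hX0 : kameko ∅ (kameko {0} (X 0)) = (1 : P4) := by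
      simpa [kameko_singleton_X, varProd] using kameko_varProd_mul_sq ∅ ∅ 1
    simp [spikeCoeff, kameko_X_mul, hX0]
  have hlast : spikeCoeff [{0}, {0}] (X 0 * (X 0 * substM (ofColumns v w u 0) (X c))) = v c := by
    rw [← mul_assoc, mul_comm, hlin, mul_left_comm, hspike, mul_one]
  rw [tripleFunctional, LinearMap.comp_apply, AlgHom.toLinearMap_apply, List.replicate_zero,
    List.nil_append, map_mul (substM _), map_mul (substM _), mul_assoc, hlin, mul_left_comm, hlin,
    hlast, mul_assoc]

theorem tripleFunctional_zero_cubic (l : List (Fin 4)) :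
    tripleFunctional 0 v w u (cubic l) =
      if l = [] ∨ 3 < l.length then 0 else (l.map v).prod := by
  have hmul (a : kk) : a * a = a := by rw [← pow_two, ZMod.pow_card]
  match l with
  | [] => simp [cubic]
  | [a] => rw [cubic, tripleFunctional_zero_X_mul_X_mul_X]; simp [hmul]
  | [a, b] => rw [cubic, tripleFunctional_zero_X_mul_X_mul_X]; simp [hmul]
  | [a, b, c] => rw [cubic, tripleFunctional_zero_X_mul_X_mul_X]; simp [mul_assoc]
  | _ :: _ :: _ :: _ :: _ => simp [cubic]

theorem tripleFunctional_congr {v w u w' u' : Vec} (h : minor v w u = minor v w' u') (f : P4) :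
    tripleFunctional n v w u f = tripleFunctional n v w' u' f := by
  suffices hle : tripleWords.wordSpan n ≤
      LinearMap.eqLocus (tripleFunctional n v w u) (tripleFunctional n v w' u') from
    hle (mem_wordSpan_tripleWords n f)
  refine sup_le (fun g hg => ?_) (Submodule.span_le.2 ?_)
  · rw [LinearMap.mem_eqLocus, (isStable_tripleFunctional n v w u).eq_zero_of_mem_hitAt hg,
      (isStable_tripleFunctional n v w' u').eq_zero_of_mem_hitAt hg]
  · rintro _ ⟨L, t, rfl, rfl⟩
    rw [SetLike.mem_coe, LinearMap.mem_eqLocus, tripleFunctional_word, tripleFunctional_word, h,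
      tripleFunctional_zero_cubic, tripleFunctional_zero_cubic]

theorem minor_mulVec_ne_zero {M : Mat} (hM : IsUnit M) {v w u : Vec} (h : minor v w u ≠ 0) :
    minor (M.mulVec v) (M.mulVec w) (M.mulVec u) ≠ 0 := by
  intro h0
  obtain ⟨i, hi⟩ := Function.ne_iff.1 h
  have hdet := congrArg Matrix.det (mul_ofColumns M v w u (Pi.single i 1))
  rw [Matrix.det_mul, det_ofColumns, det_ofColumns, h0] at hdet
  have hMdet : M.det ≠ 0 := ((Matrix.isUnit_iff_isUnit_det M).1 hM).ne_zero
  have hmul : M.det * minor v w u i = 0 := by simpa [Pi.single_apply] using hdet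
  exact hi ((mul_eq_zero.1 hmul).resolve_left hMdet)

theorem exists_isUnit_mulVec_single {v w u : Vec} (h : minor v w u ≠ 0) :
    ∃ M : Mat, IsUnit M ∧ M.mulVec (Pi.single 0 1) = v ∧ M.mulVec (Pi.single 1 1) = w ∧
      M.mulVec (Pi.single 2 1) = u := by
  obtain ⟨i, hi⟩ := Function.ne_iff.1 h
  refine ⟨ofColumns v w u (Pi.single i 1), ?_, ?_, ?_, ?_⟩
  · rw [Matrix.isUnit_iff_isUnit_det, det_ofColumns, isUnit_iff_ne_zero]
    simpa [Pi.single_apply] using hi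
  all_goals rw [Matrix.mulVec_single_one]; rfl

end TripleFunctionals

section XorRank

/-- The vector over the two-element field whose entries are the first `N` binary digits of `x`. -/
def bits (N x : ℕ) : Fin N → kk := fun i => if x.testBit i then 1 else 0

theorem bits_zero (N : ℕ) : bits N 0 = 0 := by
  ext
  simp [bits]

theorem bits_xor (N x y : ℕ) : bits N (x ^^^ y) = bits N x + bits N y := by
  ext i
  simp only [bits, Nat.testBit_xor, Pi.add_apply]
  cases x.testBit i <;> cases y.testBit i <;> decide

theorem bits_two_pow {N : ℕ} (i : Fin N) : bits N (2 ^ i.val) = Pi.single i 1 := by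
  ext j
  simp [bits, Nat.testBit_two_pow, Pi.single_apply, Fin.ext_iff, eq_comm]

/-- The number of pivots found by at most `n` steps of Gaussian elimination over the two-element
field on the vectors whose entries are the binary digits of the members of the list. -/
def pivotCount : ℕ → List ℕ → ℕ
  | 0, _ => 0
  | _ + 1, [] => 0
  | n + 1, x :: l =>
    if x = 0 then pivotCount n l else pivotCount n (l.map fun y => min y (y ^^^ x)) + 1

/-- The rank over the two-element field of the vectors whose entries are the first `N` binary
digits of the members of the list. -/
def xorRank (N : ℕ) (l : List ℕ) : ℕ := pivotCount l.length (l.map (· % 2 ^ N))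

theorem testBit_log2_min_xor {x : ℕ} (hx : x ≠ 0) (y : ℕ) :
    (min y (y ^^^ x)).testBit x.log2 = false := by
  have hlog : x.testBit x.log2 = true := Nat.testBit_log2 hx
  have hhigh (j : ℕ) (hj : x.log2 < j) : x.testBit j = false :=
    Nat.testBit_lt_two_pow ((Nat.log2_lt hx).1 hj)
  cases hy : y.testBit x.log2
  · have hlt : y < y ^^^ x := Nat.lt_of_testBit x.log2 hy (by simp [hy, hlog])
      fun j hj => by simp [hhigh j hj]
    rwa [min_eq_left hlt.le]
  · have hlt : y ^^^ x < y := Nat.lt_of_testBit x.log2 (by simp [hy, hlog]) hy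
      fun j hj => by simp [hhigh j hj]
    simp [min_eq_right hlt.le, hy, hlog]

theorem pivotCount_le_finrank {N : ℕ} (n : ℕ) {l : List ℕ} {S : Submodule kk (Fin N → kk)}
    (hl : ∀ x ∈ l, x < 2 ^ N ∧ bits N x ∈ S) : pivotCount n l ≤ Module.finrank kk S := by
  induction n generalizing l S with
  | zero => exact Nat.zero_le _
  | succ n ih =>
    cases l with
    | nil => exact Nat.zero_le _
    | cons x l =>
      obtain ⟨⟨hxN, hxS⟩, hl⟩ := List.forall_mem_cons.1 hl
      rw [pivotCount]
      split_ifs with hx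
      · exact ih hl
      let π : (Fin N → kk) →ₗ[kk] kk := LinearMap.proj ⟨x.log2, (Nat.log2_lt hx).2 hxN⟩
      have hlt : S ⊓ LinearMap.ker π < S := by
        refine inf_le_left.lt_of_not_ge fun h => ?_
        simpa [π, bits, Nat.testBit_log2 hx] using (h hxS).2
      refine Nat.succ_le_of_lt ((ih ?_).trans_lt (Submodule.finrank_lt_finrank_of_lt hlt))
      rw [List.forall_mem_map]
      intro y hy
      refine ⟨(min_le_left _ _).trans_lt (hl y hy).1, ?_, ?_⟩
      · rcases min_choice y (y ^^^ x) with h | h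
        · rw [h]
          exact (hl y hy).2
        · rw [h, bits_xor]
          exact add_mem (hl y hy).2 hxS
      · simp [π, bits, testBit_log2_min_xor hx]

theorem xorRank_le_finrank {N : ℕ} {l : List ℕ} {S : Submodule kk (Fin N → kk)}
    (hl : ∀ x ∈ l, bits N x ∈ S) : xorRank N l ≤ Module.finrank kk S := by
  refine pivotCount_le_finrank _ (List.forall_mem_map.2 fun x hx => ?_)
  refine ⟨Nat.mod_lt _ (Nat.two_pow_pos N), ?_⟩
  convert hl x hx using 1
  ext i
  simp [bits, Nat.testBit_mod_two_pow]

theorem exists_lt_bits_eq {N : ℕ} (v : Fin N → kk) : ∃ x < 2 ^ N, bits N x = v := by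
  refine ⟨Nat.ofBits fun i => decide (v i = 1), Nat.ofBits_lt_two_pow _, funext fun i => ?_⟩
  rw [bits, Nat.testBit_ofBits_lt _ _ i.isLt]
  rcases zmod_two_eq_zero_or_one (v i) with h | h <;> simp [h]

/-- The matrix whose rows are the first `N` binary digits of the members of the list. -/
def bitMatrix (N : ℕ) (l : List ℕ) : Matrix (Fin l.length) (Fin N) kk :=
  Matrix.of fun i => bits N l[i]

theorem xorRank_le_rank_bitMatrix (N : ℕ) (l : List ℕ) : xorRank N l ≤ (bitMatrix N l).rank := by
  rw [Matrix.rank_eq_finrank_span_row]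
  refine xorRank_le_finrank fun x hx => Submodule.subset_span ?_
  obtain ⟨i, hi, rfl⟩ := List.getElem_of_mem hx
  exact ⟨⟨i, hi⟩, rfl⟩

variable {N : ℕ} {α : Type*}

theorem mem_of_forall_bits_dotProduct_eq_zero {rel ev : List ℕ}
    (hrank : N ≤ xorRank N rel + xorRank N ev) {U : Submodule kk (Fin N → kk)}
    (hrel : ∀ x ∈ rel, bits N x ∈ U) (hU : ∀ u ∈ U, ∀ x ∈ ev, bits N x ⬝ᵥ u = 0)
    {u : Fin N → kk} (hu : ∀ x ∈ ev, bits N x ⬝ᵥ u = 0) : u ∈ U := by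
  have hker {u : Fin N → kk} (hu : ∀ x ∈ ev, bits N x ⬝ᵥ u = 0) :
      u ∈ LinearMap.ker (bitMatrix N ev).mulVecLin :=
    funext fun i => hu _ (List.getElem_mem i.isLt)
  have hnullity := (bitMatrix N ev).mulVecLin.finrank_range_add_finrank_ker
  rw [Module.finrank_fin_fun, ← Matrix.rank] at hnullity
  have hev := xorRank_le_rank_bitMatrix N ev
  have hrelU := xorRank_le_finrank hrel
  rw [Submodule.eq_of_le_of_finrank_le (fun u h => hker (hU u h)) (by omega)]
  exact hker hu

theorem exists_forall_bits_dotProduct_eq {pts : List α} {ev : α → ℕ}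
    (h : xorRank N (pts.map ev) = pts.length) (y : α → kk) :
    ∃ u, ∀ p ∈ pts, bits N (ev p) ⬝ᵥ u = y p := by
  have hrank := h ▸ xorRank_le_rank_bitMatrix N (pts.map ev)
  have htop : LinearMap.range (bitMatrix N (pts.map ev)).mulVecLin = ⊤ :=
    Submodule.eq_top_of_finrank_eq <| (Submodule.finrank_le _).antisymm <| by
      rw [Module.finrank_fin_fun]
      exact (List.length_map ev).trans_le hrank
  obtain ⟨u, hu⟩ := LinearMap.range_eq_top.1 htop fun i => y (pts[i]'(by simpa using i.isLt))
  refine ⟨u, fun p hp => ?_⟩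
  obtain ⟨i, hi, rfl⟩ := List.getElem_of_mem hp
  simpa [bitMatrix, Matrix.mulVec] using congrFun hu ⟨i, by simpa using hi⟩

end XorRank

section Detection

namespace WordSystem

variable {q r : ℕ} (W : WordSystem (Fin q) (Fin r)) {s x : ℕ} {t : Fin r} {α : Type*}

open Classical in
/-- A word of length `s` whose set of letters is encoded by `x`, or `0` if there is none. For an
idempotent word system the choice of the word is irrelevant modulo hit polynomials. -/
def setWord (s x : ℕ) (t : Fin r) : P4 :=
  if h : ∃ L : List (Fin q), L.length = s ∧ code L = x then W.word h.choose t else 0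

/-- The linear combination of words whose coefficient at the word with letters encoded by `x` and
tail `t` is the coordinate of index `t + r * x`. -/
def realize (s : ℕ) : (Fin (2 ^ q * r) → kk) →ₗ[kk] P4 :=
  Fintype.linearCombination kk fun i => W.setWord s i.divNat i.modNat

/-- The code of a sum of words, each given by the code of its letters and by its tail. -/
def wordCode : List (ℕ × Fin r) → ℕ
  | [] => 0
  | w :: ws => 2 ^ (w.2 + r * w.1) ^^^ wordCode ws

theorem bits_wordCode {ws : List (ℕ × Fin r)} (hws : ws.Nodup) (i : Fin (2 ^ q * r)) :
    bits _ (wordCode ws) i = if (i.divNat.val, i.modNat) ∈ ws then 1 else 0 := by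
  induction ws with
  | nil => simp [wordCode, bits]
  | cons w ws ih =>
    have hw : w.2 + r * w.1 = i ↔ (i.divNat.val, i.modNat) = w := by
      have hr : 0 < r := w.2.pos
      rw [Prod.ext_iff, Fin.ext_iff, Fin.coe_divNat, Fin.coe_modNat]
      constructor
      · intro h
        simp [← h, Nat.add_mul_div_left _ _ hr, Nat.mod_eq_of_lt]
      · rintro ⟨hdiv, hmod⟩
        rw [← hdiv, ← hmod, Nat.mod_add_div]
    obtain ⟨hmem, hws⟩ := List.nodup_cons.1 hws
    rw [wordCode, bits_xor, Pi.add_apply, ih hws]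
    simp only [bits, Nat.testBit_two_pow, decide_eq_true_iff, hw, List.mem_cons]
    by_cases h : (i.divNat.val, i.modNat) = w
    · simp only [h, hmem, if_true, if_false, true_or, add_zero]
    · simp only [h, if_false, false_or, zero_add]

/-- The code of the functional on words of length at least `m` whose value is the product of the
digits of `A` at the letters and of the digit of `T` at the tail. -/
def evalCode (q r m A T : ℕ) : ℕ := wordCode
  (((List.range (2 ^ q)).filter fun x => x &&& A = x ∧ Fits q m x) ×ˢ digits r T)

/-- On words of length `s` the functional `φ` is the product of the digits of `A` at the letters
and of the digit of `T` at the tail. -/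
def EvaluatesTo (s : ℕ) (φ : P4 →ₗ[kk] kk) (A T : ℕ) : Prop :=
  ∀ (L : List (Fin q)) t, L.length = s →
    φ (W.word L t) = (L.map (bits q A)).prod * bits r T t

variable {W}

theorem setWord_eq_zero (h : ¬ Fits q (min s q) x) : W.setWord s x t = 0 := by
  refine dif_neg ?_
  rintro ⟨L, rfl, rfl⟩
  exact h (fits_code L)

theorem exists_setWord_eq_word [NeZero q] (hx : x < 2 ^ q) (h : Fits q (min s q) x)
    (t : Fin r) : ∃ L : List (Fin q), L.length = s ∧ code L = x ∧ W.setWord s x t = W.word L t := by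
  have hL : ∃ L : List (Fin q), L.length = s ∧ code L = x :=
    exists_code_eq hx (h.mono (min_le_left s q) (by simp [NeZero.ne q]))
  exact ⟨hL.choose, hL.choose_spec.1, hL.choose_spec.2, dif_pos hL⟩

theorem setWord_add_word_mem_hitAt (hW : W.Idempotent) (L : List (Fin q)) (t : Fin r) :
    W.setWord L.length (code L) t + W.word L t ∈ hitAt (W.degree L.length) := by
  have hL : ∃ L' : List (Fin q), L'.length = L.length ∧ code L' = code L := ⟨L, rfl, rfl⟩
  rw [setWord, dif_pos hL]
  have h := (congr_of_mem_iff hW t hL.choose_spec.1 (code_eq_code_iff.1 hL.choose_spec.2)).2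
  rwa [hL.choose_spec.1] at h

theorem realize_two_pow (s : ℕ) (hx : x < 2 ^ q) (t : Fin r) :
    W.realize s (bits _ (2 ^ (t + r * x))) = W.setWord s x t := by
  let i := finProdFinEquiv ((⟨x, hx⟩ : Fin (2 ^ q)), t)
  have hi : (i.divNat, i.modNat) = (⟨x, hx⟩, t) := finProdFinEquiv.symm_apply_apply _
  rw [Prod.mk.injEq] at hi
  change W.realize s (bits _ (2 ^ i.val)) = _
  rw [bits_two_pow, realize, Fintype.linearCombination_apply_single, hi.1, hi.2, one_smul]

theorem realize_wordCode_add_mem_hitAt (hW : W.Idempotent) {ws : List (List (Fin q) × Fin r)}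
    (hs : ∀ w ∈ ws, w.1.length = s) :
    W.realize s (bits _ (wordCode (ws.map fun w => (code w.1, w.2))))
      + (ws.map fun w => W.word w.1 w.2).sum ∈ hitAt (W.degree s) := by
  induction ws with
  | nil =>
    simp [wordCode, bits_zero]
  | cons w ws ih =>
    obtain ⟨rfl, hs⟩ := List.forall_mem_cons.1 hs
    rw [List.map_cons, wordCode, bits_xor, map_add, realize_two_pow _ (code_lt _), List.map_cons,
      List.sum_cons, add_add_add_comm]
    exact add_mem (setWord_add_word_mem_hitAt hW w.1 w.2) (ih hs)

theorem realize_wordCode_mem_iff (hW : W.Idempotent) {H : Submodule kk P4}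
    (hH : hitAt (W.degree s) ≤ H) {ws : List (List (Fin q) × Fin r)}
    (hs : ∀ w ∈ ws, w.1.length = s) :
    W.realize s (bits _ (wordCode (ws.map fun w => (code w.1, w.2)))) ∈ H ↔
      (ws.map fun w => W.word w.1 w.2).sum ∈ H := by
  have h := hH (realize_wordCode_add_mem_hitAt hW hs)
  exact ⟨fun h' => (add_mem_cancel_left h').1 h, fun h' => (add_mem_cancel_right h').1 h⟩

theorem exists_realize_eq_add (hW : W.Idempotent) {f : P4} (hf : f ∈ W.wordSpan s) :
    ∃ g ∈ hitAt (W.degree s), ∃ u, f = g + W.realize s u := by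
  suffices W.wordSpan s ≤ hitAt (W.degree s) ⊔ LinearMap.range (W.realize s) by
    obtain ⟨g, hg, _, ⟨u, rfl⟩, rfl⟩ := Submodule.mem_sup.1 (this hf)
    exact ⟨g, hg, u, rfl⟩
  refine sup_le le_sup_left (Submodule.span_le.2 ?_)
  rintro _ ⟨L, t, rfl, rfl⟩
  have h := Submodule.mem_sup_left (T := LinearMap.range (W.realize L.length))
    (setWord_add_word_mem_hitAt hW L t)
  refine (add_mem_cancel_left (Submodule.mem_sup_right ?_)).1 h
  exact ⟨_, realize_two_pow _ (code_lt L) t⟩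

theorem realize_mem_wordSpan [NeZero q] (s : ℕ) (u : Fin (2 ^ q * r) → kk) :
    W.realize s u ∈ W.wordSpan s := by
  rw [realize, Fintype.linearCombination_apply]
  refine Submodule.sum_mem _ fun i _ => Submodule.smul_mem _ _ ?_
  by_cases h : Fits q (min s q) i.divNat
  · obtain ⟨L, rfl, -, hL⟩ := exists_setWord_eq_word (W := W) i.divNat.isLt h i.modNat
    rw [hL]
    exact word_mem_wordSpan L _
  · rw [setWord_eq_zero h]
    exact zero_mem _

theorem prod_map_bits (A : ℕ) (L : List (Fin q)) :
    (L.map (bits q A)).prod = if ∀ i ∈ L, A.testBit i then 1 else 0 := by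
  induction L with
  | nil => simp
  | cons i L ih => by_cases h : A.testBit i <;> simp [ih, bits, h]

theorem bits_evalCode (m A T : ℕ) (i : Fin (2 ^ q * r)) : bits _ (evalCode q r m A T) i =
    if Fits q m i.divNat ∧ (∀ j ∈ digits q i.divNat, A.testBit j) ∧ T.testBit i.modNat
      then 1 else 0 := by
  have hsub : i.divNat.val &&& A = i.divNat ↔ ∀ j ∈ digits q i.divNat, A.testBit j := by
    refine ⟨fun h j hj => ?_, fun h => Nat.eq_of_testBit_eq fun j => ?_⟩
    · rw [mem_digits, ← h, Nat.testBit_and] at hj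
      exact (Bool.and_eq_true_iff.1 hj).2
    · rw [Nat.testBit_and]
      cases hj : i.divNat.val.testBit j with
      | false => rfl
      | true =>
        exact h ⟨j, (Nat.pow_lt_pow_iff_right one_lt_two).1
          ((Nat.ge_two_pow_of_testBit hj).trans_lt i.divNat.isLt)⟩ (mem_digits.2 hj)
  have hnodup : (digits r T).Nodup := (List.nodup_finRange r).filter _
  rw [evalCode, bits_wordCode ((List.nodup_range.filter _).product hnodup)]
  refine if_congr ?_ rfl rfl
  simp only [List.mem_product, List.mem_filter, List.mem_range, Fin.is_lt, decide_eq_true_iff, hsub,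
    mem_digits, true_and, and_comm, and_left_comm]

theorem EvaluatesTo.apply_setWord [NeZero q] {φ : P4 →ₗ[kk] kk} {A T : ℕ}
    (hφ : W.EvaluatesTo s φ A T) (i : Fin (2 ^ q * r)) :
    φ (W.setWord s i.divNat i.modNat) = bits _ (evalCode q r (min s q) A T) i := by
  rw [bits_evalCode]
  by_cases h : Fits q (min s q) i.divNat
  · obtain ⟨L, hs, hcode, hL⟩ := exists_setWord_eq_word (W := W) i.divNat.isLt h i.modNat
    have hmem (j : Fin q) : j ∈ digits q i.divNat ↔ j ∈ L := by
      rw [mem_digits, ← hcode, testBit_code]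
      simp
    simp only [hL, hφ L _ hs, prod_map_bits, h, hmem, bits, if_true, ite_and, ite_mul, one_mul,
      zero_mul]
  · rw [setWord_eq_zero h, map_zero, if_neg fun h' => h h'.1]

theorem EvaluatesTo.apply_realize [NeZero q] {φ : P4 →ₗ[kk] kk} {A T : ℕ}
    (hφ : W.EvaluatesTo s φ A T) (u : Fin (2 ^ q * r) → kk) :
    φ (W.realize s u) = bits _ (evalCode q r (min s q) A T) ⬝ᵥ u := by
  rw [realize, Fintype.linearCombination_apply, map_sum]
  refine Finset.sum_congr rfl fun i _ => ?_
  rw [map_smul, hφ.apply_setWord, smul_eq_mul, mul_comm]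

variable {pts : List α} {φ : α → P4 →ₗ[kk] kk} {A T : α → ℕ}

theorem mem_of_forall_apply_eq_zero [NeZero q] (hW : W.Idempotent) {H : Submodule kk P4}
    (hH : hitAt (W.degree s) ≤ H) {rel : List ℕ}
    (hrel : ∀ x ∈ rel, W.realize s (bits _ x) ∈ H)
    (hφ : ∀ p ∈ pts, W.EvaluatesTo s (φ p) (A p) (T p)) (hφH : ∀ p ∈ pts, ∀ f ∈ H, φ p f = 0)
    (hrank : 2 ^ q * r ≤ xorRank (2 ^ q * r) rel +
      xorRank (2 ^ q * r) (pts.map fun p => evalCode q r (min s q) (A p) (T p)))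
    {f : P4} (hf : f ∈ W.wordSpan s) (h : ∀ p ∈ pts, φ p f = 0) : f ∈ H := by
  obtain ⟨g, hg, u, rfl⟩ := exists_realize_eq_add hW hf
  suffices u ∈ H.comap (W.realize s) from add_mem (hH hg) this
  refine mem_of_forall_bits_dotProduct_eq_zero hrank hrel (fun u hu => ?_) ?_
  · rw [List.forall_mem_map]
    intro p hp
    rw [← (hφ p hp).apply_realize]
    exact hφH p hp _ hu
  · rw [List.forall_mem_map]
    intro p hp
    rw [← (hφ p hp).apply_realize, ← h p hp, map_add, hφH p hp g (hH hg), zero_add]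

theorem exists_mem_wordSpan_forall_apply_eq [NeZero q]
    (hφ : ∀ p ∈ pts, W.EvaluatesTo s (φ p) (A p) (T p))
    (hrank : xorRank (2 ^ q * r) (pts.map fun p => evalCode q r (min s q) (A p) (T p)) =
      pts.length) (y : α → kk) :
    ∃ f ∈ W.wordSpan s, ∀ p ∈ pts, φ p f = y p := by
  obtain ⟨u, hu⟩ := exists_forall_bits_dotProduct_eq hrank y
  exact ⟨_, realize_mem_wordSpan s u, fun p hp => (hφ p hp).apply_realize u ▸ hu p hp⟩

theorem sum_apply_eq_dotProduct [NeZero q] (u : Fin (2 ^ q * r) → kk)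
    (hφ : ∀ p ∈ pts, W.EvaluatesTo s (φ p) (A p) (T p)) :
    (pts.map fun p => φ p (W.realize s u)).sum =
      bits _ ((pts.map fun p => evalCode q r (min s q) (A p) (T p)).foldr (· ^^^ ·) 0) ⬝ᵥ u := by
  induction pts with
  | nil => simp [bits, dotProduct]
  | cons p pts ih =>
    obtain ⟨hp, hφ⟩ := List.forall_mem_cons.1 hφ
    simp only [List.map_cons, List.sum_cons, List.foldr_cons, bits_xor, add_dotProduct,
      hp.apply_realize, ih hφ]

end WordSystem

end Detection

section PairDetection

/-- The code of the relation `pairWord_append_tail_mem_hitAt`, for letters encoded by `x`. -/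
def pairTailCode (x : ℕ) (i j k : Fin 4) : ℕ :=
  WordSystem.wordCode
    [(x ||| code [edgeIndex j k], i), (x ||| code [edgeIndex i k], j),
      (x ||| code [edgeIndex i j], k)]

/-- The code of the relation `pairWord_three_mem_hitAt`. -/
def pairThreeCode (i j k l : Fin 4) : ℕ :=
  WordSystem.wordCode
    [(code [edgeIndex j k, edgeIndex j k, edgeIndex j l], i),
      (code [edgeIndex i k, edgeIndex i k, edgeIndex i l], j),
      (code [edgeIndex i j, edgeIndex j k, edgeIndex j l], i),
      (code [edgeIndex i j, edgeIndex i k, edgeIndex i l], j)]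

/-- The codes of the relations between pair words whose number of letters, cut off at `6`,
is `m`. -/
def pairRelations (m : ℕ) : List ℕ :=
  ((List.range 64).filter fun x => ¬ Fits 6 m x).flatMap
      (fun x => (List.finRange 4).map fun t => 2 ^ (t.val + 4 * x)) ++
    ((List.range 64).filter fun x => x = 0 ∨ Fits 6 (m - 1) x).flatMap
      (fun x => [pairTailCode x 0 1 2, pairTailCode x 0 1 3, pairTailCode x 0 2 3,
        pairTailCode x 1 2 3]) ++
    if m = 3 then [pairThreeCode 0 1 2 3, pairThreeCode 0 2 1 3, pairThreeCode 0 3 1 2,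
      pairThreeCode 1 2 0 3, pairThreeCode 1 3 0 2, pairThreeCode 2 3 0 1] else []

/-- One pair of codes of generators for each two-dimensional subspace. -/
def planes : List (ℕ × ℕ) :=
  ((List.range 16).product (List.range 16)).filter fun p =>
    0 < p.1 ∧ p.1 < p.2 ∧ p.2 < p.1 ^^^ p.2

/-- Two ordered pairs of codes of generators for each two-dimensional subspace. -/
def planePairs : List (ℕ × ℕ) := planes ++ planes.map Prod.swap

/-- The code of the pair functional on words with `m` letters attached to the vectors with codes
`p.1` and `p.2`. -/
def pairEvalCode (m : ℕ) (p : ℕ × ℕ) : ℕ :=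
  WordSystem.evalCode 6 4 m (Nat.ofBits fun a => decide (pluecker (bits 4 p.1) (bits 4 p.2) a = 1))
    p.1

theorem xorRank_pairEvalCode : ∀ m ∈ Finset.Icc 1 6,
    xorRank (2 ^ 6 * 4) (planePairs.map (pairEvalCode m)) = [0, 20, 56].getD m 70 := by
  decide +kernel

theorem xorRank_pairRelations : ∀ m ∈ Finset.Icc 1 6,
    2 ^ 6 * 4 ≤ xorRank (2 ^ 6 * 4) (pairRelations m) + [0, 20, 56].getD m 70 := by
  decide +kernel

theorem realize_pairTailCode_mem_hitAt {s x : ℕ} (hx : x < 2 ^ 6)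
    (h : x = 0 ∨ Fits 6 (min (s + 1) 6 - 1) x) {i j k : Fin 4} (hij : i ≠ j) (hik : i ≠ k)
    (hjk : j ≠ k) :
    pairWords.realize (s + 1) (bits _ (pairTailCode x i j k)) ∈ hitAt (pairDegree (s + 1)) := by
  suffices ∃ L : Fin 6 → List (Fin 6), (∀ a, (L a).length = s + 1) ∧
      (∀ a, code (L a) = x ||| code [a]) ∧
      pairWords.word (L (edgeIndex j k)) i + pairWords.word (L (edgeIndex i k)) j
        + pairWords.word (L (edgeIndex i j)) k ∈ hitAt (pairDegree (s + 1)) by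
    obtain ⟨L, hlen, hcode, hL⟩ := this
    have hmem := (WordSystem.realize_wordCode_mem_iff pairWords_idempotent
      (H := hitAt (pairDegree (s + 1))) le_rfl
      (ws := [(L (edgeIndex j k), i), (L (edgeIndex i k), j), (L (edgeIndex i j), k)])
      (s := s + 1) (by simp [hlen])).2 (by simpa [add_assoc] using hL)
    simpa only [List.map_cons, List.map_nil, hcode, pairTailCode] using hmem
  rcases h with rfl | h
  · exact ⟨fun a => List.replicate (s + 1) a, by simp, fun a => by simp [code_replicate],
      pairWord_replicate_tail_mem_hitAt s hij hik hjk⟩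
  · obtain ⟨L, rfl, rfl⟩ := exists_code_eq hx (h.mono (s' := s) (by omega) (by omega))
    exact ⟨fun a => L ++ [a], by simp, fun a => code_append L [a],
      pairWord_append_tail_mem_hitAt L hij hik hjk⟩

theorem realize_pairThreeCode_mem_hitAt {i j k l : Fin 4}
    (h : i ≠ j ∧ i ≠ k ∧ i ≠ l ∧ j ≠ k ∧ j ≠ l) :
    pairWords.realize 3 (bits _ (pairThreeCode i j k l)) ∈ hitAt (pairDegree 3) := by
  refine (WordSystem.realize_wordCode_mem_iff pairWords_idempotent
    (H := hitAt (pairDegree 3)) le_rfl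
    (ws := [([edgeIndex j k, edgeIndex j k, edgeIndex j l], i),
      ([edgeIndex i k, edgeIndex i k, edgeIndex i l], j),
      ([edgeIndex i j, edgeIndex j k, edgeIndex j l], i),
      ([edgeIndex i j, edgeIndex i k, edgeIndex i l], j)]) (s := 3) (by simp)).2 ?_
  simpa [add_assoc] using pairWord_three_mem_hitAt h

theorem realize_pairRelations_mem_hitAt {s : ℕ} {x : ℕ}
    (hx : x ∈ pairRelations (min (s + 1) 6)) :
    pairWords.realize (s + 1) (bits _ x) ∈ hitAt (pairDegree (s + 1)) := by
  simp only [pairRelations, List.mem_append, List.mem_flatMap, List.mem_filter, List.mem_range,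
    decide_eq_true_eq] at hx
  obtain (⟨y, ⟨hy, hfits⟩, hx⟩ | ⟨y, ⟨hy, hfits⟩, hx⟩) | hx := hx
  · obtain ⟨t, -, rfl⟩ := List.mem_map.1 hx
    rw [WordSystem.realize_two_pow (W := pairWords) (s + 1) hy t, WordSystem.setWord_eq_zero hfits]
    exact zero_mem _
  · simp only [List.mem_cons, List.not_mem_nil, or_false] at hx
    obtain rfl | rfl | rfl | rfl := hx <;>
      exact realize_pairTailCode_mem_hitAt hy hfits (by decide) (by decide) (by decide)
  · split_ifs at hx with hs
    · obtain rfl : s = 2 := by omega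
      simp only [List.mem_cons, List.not_mem_nil, or_false] at hx
      obtain rfl | rfl | rfl | rfl | rfl | rfl := hx <;>
        exact realize_pairThreeCode_mem_hitAt (by decide)
    · cases hx

theorem pairFunctional_evaluatesTo (s x y : ℕ) :
    pairWords.EvaluatesTo s (pairFunctional s (bits 4 x) (bits 4 y))
      (Nat.ofBits fun a => decide (pluecker (bits 4 x) (bits 4 y) a = 1)) x := by
  rintro L t rfl
  rw [pairFunctional_word]
  congr 3
  ext a
  rw [bits, Nat.testBit_ofBits_lt _ _ a.isLt]
  rcases zmod_two_eq_zero_or_one (pluecker (bits 4 x) (bits 4 y) a) with h | h <;> simp [h]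

theorem pluecker_ne_zero_of_mem_planePairs :
    ∀ p ∈ planePairs, pluecker (bits 4 p.1) (bits 4 p.2) ≠ 0 := by
  decide +kernel

theorem mem_planePairs_of_pluecker_ne_zero : ∀ x ∈ Finset.range 16, ∀ y ∈ Finset.range 16,
    pluecker (bits 4 x) (bits 4 y) ≠ 0 → (x, y) ∈ planePairs ∨ (x, x ^^^ y) ∈ planePairs ∨
      (x ^^^ y, y) ∈ planePairs ∧ (y, x ^^^ y) ∈ planePairs := by
  decide +kernel

theorem pairFunctional_eq_of_forall_mem_planePairs {s : ℕ} {f g : P4}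
    (h : ∀ p ∈ planePairs, pairFunctional s (bits 4 p.1) (bits 4 p.2) f =
      pairFunctional s (bits 4 p.1) (bits 4 p.2) g) {v w : Vec} (hvw : pluecker v w ≠ 0) :
    pairFunctional s v w f = pairFunctional s v w g := by
  obtain ⟨x, hx, rfl⟩ := exists_lt_bits_eq v
  obtain ⟨y, hy, rfl⟩ := exists_lt_bits_eq w
  obtain hxy | hxy | ⟨hxy, hyx⟩ := mem_planePairs_of_pluecker_ne_zero x
    (Finset.mem_range.2 hx) y (Finset.mem_range.2 hy) hvw
  · exact h (x, y) hxy
  · simpa only [bits_xor, pairFunctional_add_right] using h _ hxy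
  · have hx : bits 4 x = bits 4 (x ^^^ y) + bits 4 y := by rw [← bits_xor, Nat.xor_xor_cancel_right]
    rw [hx, pairFunctional_add_left, pairFunctional_add_left, h (x ^^^ y, y) hxy,
      h (y, x ^^^ y) hyx]

theorem mem_hitAt_of_forall_pairFunctional_eq_zero {s : ℕ} {f : P4}
    (hf : f ∈ pairWords.wordSpan (s + 1))
    (h : ∀ v w, pluecker v w ≠ 0 → pairFunctional (s + 1) v w f = 0) :
    f ∈ hitAt (pairDegree (s + 1)) := by
  have hm : min (s + 1) 6 ∈ Finset.Icc 1 6 := Finset.mem_Icc.2 (by omega)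
  have hrank := xorRank_pairRelations _ hm
  rw [← xorRank_pairEvalCode _ hm] at hrank
  have hrel := fun x => realize_pairRelations_mem_hitAt (s := s) (x := x)
  have hφ := fun p (_ : p ∈ planePairs) => pairFunctional_evaluatesTo (s + 1) p.1 p.2
  exact WordSystem.mem_of_forall_apply_eq_zero (s := s + 1) (H := hitAt (pairDegree (s + 1)))
    pairWords_idempotent le_rfl hrel hφ
    (fun p _ f hf => (isStable_pairFunctional _ _ _).eq_zero_of_mem_hitAt hf) hrank hf
    fun p hp => h _ _ (pluecker_ne_zero_of_mem_planePairs p hp)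

theorem exists_mem_wordSpan_forall_pairFunctional_eq {s : ℕ} (hs : 3 ≤ s) (f : P4) :
    ∃ g ∈ pairWords.wordSpan s,
      ∀ v w, pluecker v w ≠ 0 → pairFunctional s v w g = pairFunctional s v w f := by
  have hrank : [0, 20, 56].getD (min s 6) 70 = planePairs.length := by
    rw [List.getD_eq_default _ _ (by simp; omega)]
    decide +kernel
  obtain ⟨g, hg, heq⟩ := WordSystem.exists_mem_wordSpan_forall_apply_eq (pts := planePairs)
    (fun p _ => pairFunctional_evaluatesTo s p.1 p.2)
    ((xorRank_pairEvalCode _ (Finset.mem_Icc.2 (by omega))).trans hrank)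
    fun p => pairFunctional s (bits 4 p.1) (bits 4 p.2) f
  exact ⟨g, hg, fun v w => pairFunctional_eq_of_forall_mem_planePairs heq⟩

end PairDetection

section TripleDetection

/-- The sum of the words with letters `L ++ [a]` and tail `a`. For short lists `L` the sums are not
hit although all triple functionals vanish on them. -/
def exceptional (L : List (Fin 4)) : P4 := ∑ a, tripleWords.word (L ++ [a]) (support a a a)

/-- The lists whose exceptional sums have `n` letters and are not hit. -/
def exceptionalLists : ℕ → List (List (Fin 4))
  | 1 => [[]]
  | 2 => [[0], [1], [2], [3]]
  | _ => []

/-- The code of the sum of the words with letters encoded by `x ∪ {a}` and with tail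
`{a, b, c}`. -/
def tripleTailCode (x : ℕ) (b c : Fin 4) : ℕ :=
  WordSystem.wordCode ((List.finRange 4).map fun a => (x ||| code [a], support a b c))

/-- The code of `exceptional L`. -/
def exceptionalCode (L : List (Fin 4)) : ℕ :=
  WordSystem.wordCode ((List.finRange 4).map fun a => (code (L ++ [a]), support a a a))

/-- The codes of the relations between triple words whose number of letters, cut off at `4`, is
`m`, modulo exceptional sums. -/
def tripleRelations (m : ℕ) : List ℕ :=
  ((List.range 16 ×ˢ List.finRange 16).filter fun p => ¬ Fits 4 m p.1 ∨ p.2 = 0 ∨ p.2 = 15).map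
      (fun p => 2 ^ (p.2.val + 16 * p.1)) ++
    ((List.range 16).filter fun x => m ≠ 0 ∧ (x = 0 ∨ Fits 4 (m - 1) x)).flatMap
      (fun x => ((List.finRange 4 ×ˢ List.finRange 4).filter fun p => p.2 ≤ p.1).map fun p =>
        tripleTailCode x p.1 p.2) ++
    (exceptionalLists m).map exceptionalCode

/-- The pairs consisting of a nonzero linear form and a nonzero vector in its kernel, by their
codes. -/
def flags : List (ℕ × ℕ) := (List.range 16 ×ˢ List.range 16).filter fun p =>
  0 < p.1 ∧ 0 < p.2 ∧ bits 4 p.1 ⬝ᵥ bits 4 p.2 = 0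

/-- The code of the values of a triple functional with first vector encoded by `a` at the cubic
monomials. -/
def cubicCode (a : ℕ) : ℕ := Nat.ofBits fun t : Fin 16 =>
  decide (digits 4 t ≠ [] ∧ (digits 4 t).length ≤ 3 ∧ ∀ i ∈ digits 4 t, a.testBit i)

/-- The code of the triple functional on words with `m` letters attached to the flag `p`. -/
def tripleEvalCode (m : ℕ) (p : ℕ × ℕ) : ℕ := WordSystem.evalCode 4 16 m p.1 (cubicCode p.2)

theorem xorRank_tripleEvalCode : ∀ m ∈ Finset.range 5,
    xorRank (2 ^ 4 * 16) (flags.map (tripleEvalCode m)) = [14, 45, 90].getD m 105 := by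
  decide +kernel

theorem xorRank_tripleRelations : ∀ m ∈ Finset.range 5,
    2 ^ 4 * 16 ≤ xorRank (2 ^ 4 * 16) (tripleRelations m) + [14, 45, 90].getD m 105 := by
  decide +kernel

theorem foldr_xor_tripleEvalCode : ∀ m ∈ Finset.range 3,
    (flags.map (tripleEvalCode m)).foldr (· ^^^ ·) 0 = 0 := by
  decide +kernel

theorem exceptionalLists_min_four : ∀ n, exceptionalLists (min n 4) = exceptionalLists n
  | 0 | 1 | 2 | 3 => rfl
  | n + 4 => by rw [Nat.min_eq_right (Nat.le_add_left 4 n)]; rfl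

theorem length_of_mem_exceptionalLists {n : ℕ} {L : List (Fin 4)} (hL : L ∈ exceptionalLists n) :
    L.length + 1 = n := by
  match n with
  | 0 | n + 3 => cases hL
  | 1 => rw [List.mem_singleton.1 hL]; rfl
  | 2 => revert L; decide

/-- The polynomials congruent modulo hit polynomials to sums of the exceptional polynomials of
degree `tripleDegree (n + 1)`. All triple functionals vanish exactly on this space. -/
def exceptionalSpan (n : ℕ) : Submodule kk P4 :=
  hitAt (tripleDegree (n + 1)) ⊔ Submodule.span kk {f | ∃ L ∈ exceptionalLists n, f = exceptional L}

theorem hitAt_le_exceptionalSpan (n : ℕ) : hitAt (tripleDegree (n + 1)) ≤ exceptionalSpan n :=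
  le_sup_left

theorem realize_sum_mem_iff {n : ℕ} {H : Submodule kk P4} (hH : hitAt (tripleDegree (n + 1)) ≤ H)
    {L : Fin 4 → List (Fin 4)} (hlen : ∀ a, (L a).length = n) (t : Fin 4 → Fin 16) :
    tripleWords.realize n (bits _
        (WordSystem.wordCode ((List.finRange 4).map fun a => (code (L a), t a)))) ∈ H ↔
      ∑ a, tripleWords.word (L a) (t a) ∈ H := by
  have h := WordSystem.realize_wordCode_mem_iff tripleWords_idempotent hH (s := n)
    (ws := (List.finRange 4).map fun a => (L a, t a)) (by simp [hlen])
  simpa only [List.map_map, Function.comp_def, Fin.sum_univ_def] using h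

theorem realize_tripleTailCode_mem_hitAt {n x : ℕ} (hx : x < 2 ^ 4)
    (h : x = 0 ∨ Fits 4 (min (n + 1) 4 - 1) x) (b c : Fin 4) :
    tripleWords.realize (n + 1) (bits _ (tripleTailCode x b c)) ∈ hitAt (tripleDegree (n + 2)) := by
  suffices ∃ L : Fin 4 → List (Fin 4), (∀ a, (L a).length = n + 1) ∧
      (∀ a, code (L a) = x ||| code [a]) ∧
      ∑ a, tripleWords.word (L a) (support a b c) ∈ hitAt (tripleDegree (n + 2)) by
    obtain ⟨L, hlen, hcode, hL⟩ := this
    simpa only [tripleTailCode, hcode] using (realize_sum_mem_iff le_rfl hlen _).2 hL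
  rcases h with rfl | h
  · exact ⟨fun a => List.replicate (n + 1) a, by simp, fun a => by simp [code_replicate],
      tripleWord_replicate_tail_mem_hitAt n b c⟩
  · obtain ⟨L, rfl, rfl⟩ := exists_code_eq hx (h.mono (s' := n) (by omega) (by omega))
    exact ⟨fun a => L ++ [a], by simp, fun a => code_append L [a],
      tripleWord_append_tail_mem_hitAt L b c⟩

theorem tripleWord_eq_zero {t : Fin 16} (ht : t = 0 ∨ t = 15) (L : List (Fin 4)) :
    tripleWords.word L t = 0 := by
  have hcubic : cubic (digits 4 t) = 0 := by
    obtain rfl | rfl := ht <;> rfl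
  rw [WordSystem.word, show tripleWords.tail t = 0 from hcubic, map_zero]

theorem realize_tripleRelations_mem {n x : ℕ} (hx : x ∈ tripleRelations (min n 4)) :
    tripleWords.realize n (bits _ x) ∈ exceptionalSpan n := by
  simp only [tripleRelations, List.mem_append, List.mem_flatMap, List.mem_map, List.mem_filter,
    List.mem_range, Prod.exists, decide_eq_true_eq] at hx
  obtain (⟨y, t, ⟨hy, h⟩, rfl⟩ | ⟨y, ⟨hy, hn, hfits⟩, b, c, -, rfl⟩) | ⟨L, hL, rfl⟩ := hx
  · have hy := List.mem_range.1 (List.mem_product.1 hy).1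
    rw [WordSystem.realize_two_pow (W := tripleWords) n hy t, WordSystem.setWord]
    split_ifs with hex
    · obtain hfits | ht := h
      · obtain ⟨L, rfl, rfl⟩ := hex
        exact absurd (fits_code L) hfits
      · rw [tripleWord_eq_zero ht]
        exact zero_mem _
    · exact zero_mem _
  · obtain ⟨n, rfl⟩ := Nat.exists_eq_succ_of_ne_zero (show n ≠ 0 by rintro rfl; exact hn rfl)
    exact hitAt_le_exceptionalSpan _ (realize_tripleTailCode_mem_hitAt hy hfits b c)
  · rw [exceptionalLists_min_four] at hL
    obtain rfl := length_of_mem_exceptionalLists hL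
    refine (realize_sum_mem_iff (hitAt_le_exceptionalSpan _) (by simp) _).2 ?_
    exact Submodule.mem_sup_right (Submodule.subset_span ⟨L, hL, rfl⟩)

theorem tripleFunctional_exceptional (L : List (Fin 4)) (v w u : Vec) :
    tripleFunctional (L.length + 1) v w u (exceptional L) = 0 := by
  have hdigits (a : Fin 4) : digits 4 (support a a a) = [a] := by revert a; decide
  have hword (a : Fin 4) : tripleFunctional (L.length + 1) v w u
      (tripleWords.word (L ++ [a]) (support a a a)) =
        (L.map (minor v w u)).prod * (minor v w u a * v a) := by
    have h := tripleFunctional_word v w u (L ++ [a]) (support a a a)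
    rw [List.length_append, hdigits, tripleFunctional_zero_cubic] at h
    simpa [mul_assoc] using h
  rw [exceptional, map_sum, Finset.sum_congr rfl fun a _ => hword a, ← Finset.mul_sum,
    sum_minor_mul_left, mul_zero]

theorem tripleFunctional_eq_zero_of_mem_exceptionalSpan {n : ℕ} {f : P4}
    (hf : f ∈ exceptionalSpan n) (v w u : Vec) : tripleFunctional n v w u f = 0 := by
  suffices exceptionalSpan n ≤ LinearMap.ker (tripleFunctional n v w u) from this hf
  refine sup_le (fun g hg => (isStable_tripleFunctional n v w u).eq_zero_of_mem_hitAt hg) ?_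
  rw [Submodule.span_le]
  rintro _ ⟨L, hL, rfl⟩
  obtain rfl := length_of_mem_exceptionalLists hL
  exact tripleFunctional_exceptional L v w u

theorem tripleFunctional_evaluatesTo (n a l : ℕ) {w u : Vec} (h : minor (bits 4 a) w u = bits 4 l) :
    tripleWords.EvaluatesTo n (tripleFunctional n (bits 4 a) w u) l (cubicCode a) := by
  rintro L t rfl
  rw [tripleFunctional_word, h, tripleFunctional_zero_cubic, WordSystem.prod_map_bits a, bits,
    cubicCode, Nat.testBit_ofBits_lt _ _ t.isLt]
  simp only [decide_eq_true_iff]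
  congr 1
  by_cases hnil : digits 4 t = []
  · simp only [hnil, ne_eq, not_true, true_or, false_and, if_true, if_false]
  · simp only [hnil, ne_eq, not_false_iff, false_or, true_and, ← not_lt, ite_not, ite_and]

theorem exists_minor_bits_eq : ∀ p ∈ flags, ∃ x ∈ Finset.range 16, ∃ y ∈ Finset.range 16,
    minor (bits 4 p.2) (bits 4 x) (bits 4 y) = bits 4 p.1 := by
  decide +kernel

theorem exists_forall_minor_eq : ∃ w u : ℕ × ℕ → Vec, ∀ p ∈ flags,
    minor (bits 4 p.2) (w p) (u p) = bits 4 p.1 := by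
  choose! x _ y _ h using exists_minor_bits_eq
  exact ⟨fun p => bits 4 (x p), fun p => bits 4 (y p), h⟩

theorem bits_ne_zero_of_mem_flags : ∀ p ∈ flags, bits 4 p.1 ≠ 0 := by
  decide +kernel

theorem exists_mem_flags {v w u : Vec} (h : minor v w u ≠ 0) :
    ∃ p ∈ flags, bits 4 p.1 = minor v w u ∧ bits 4 p.2 = v := by
  obtain ⟨l, hl, hminor⟩ := exists_lt_bits_eq (minor v w u)
  obtain ⟨a, ha, rfl⟩ := exists_lt_bits_eq v
  have hl0 : 0 < l := Nat.pos_of_ne_zero fun h0 => h (by rw [← hminor, h0, bits_zero])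
  have ha0 : 0 < a := Nat.pos_of_ne_zero fun h0 => h (by
    ext i
    simp [h0, bits_zero, minor])
  refine ⟨(l, a), List.mem_filter.2 ⟨List.mem_product.2 ⟨List.mem_range.2 hl, List.mem_range.2 ha⟩,
    decide_eq_true ⟨hl0, ha0, ?_⟩⟩, hminor, rfl⟩
  rw [hminor]
  exact sum_minor_mul_left _ _ _

theorem mem_exceptionalSpan_of_forall_tripleFunctional_eq_zero {n : ℕ} {f : P4}
    (h : ∀ v w u, minor v w u ≠ 0 → tripleFunctional n v w u f = 0) : f ∈ exceptionalSpan n := by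
  have hm : min n 4 ∈ Finset.range 5 := Finset.mem_range.2 (by omega)
  have hrank := xorRank_tripleRelations _ hm
  rw [← xorRank_tripleEvalCode _ hm] at hrank
  obtain ⟨w, u, hwu⟩ := exists_forall_minor_eq
  have hrel := fun x => realize_tripleRelations_mem (n := n) (x := x)
  have hφ := fun p (hp : p ∈ flags) => tripleFunctional_evaluatesTo n p.2 p.1 (hwu p hp)
  exact WordSystem.mem_of_forall_apply_eq_zero (s := n) (H := exceptionalSpan n)
    tripleWords_idempotent (hitAt_le_exceptionalSpan n) hrel hφ
    (fun p _ f hf => tripleFunctional_eq_zero_of_mem_exceptionalSpan hf _ _ _) hrank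
    (mem_wordSpan_tripleWords n f)
    fun p hp => h _ _ _ ((hwu p hp).trans_ne (bits_ne_zero_of_mem_flags p hp))

theorem exists_forall_tripleFunctional_eq_one {n : ℕ} (hn : 3 ≤ n) :
    ∃ f, ∀ v w u, minor v w u ≠ 0 → tripleFunctional n v w u f = 1 := by
  obtain ⟨w, u, hwu⟩ := exists_forall_minor_eq
  have hrank : [14, 45, 90].getD (min n 4) 105 = flags.length := by
    rw [List.getD_eq_default _ _ (by simp; omega)]
    decide +kernel
  obtain ⟨f, -, hf⟩ := WordSystem.exists_mem_wordSpan_forall_apply_eq (pts := flags)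
    (fun p hp => tripleFunctional_evaluatesTo n p.2 p.1 (hwu p hp))
    ((xorRank_tripleEvalCode _ (Finset.mem_range.2 (by omega))).trans hrank) fun _ => 1
  refine ⟨f, fun v w' u' h => ?_⟩
  obtain ⟨p, hp, hminor, rfl⟩ := exists_mem_flags h
  exact (tripleFunctional_congr n (hminor.symm.trans (hwu p hp).symm) f).trans (hf p hp)

theorem eq_zero_of_forall_tripleFunctional_eq {n : ℕ} (hn : n ≤ 2) {f : P4} {c : kk}
    (h : ∀ v w u, minor v w u ≠ 0 → tripleFunctional n v w u f = c) : c = 0 := by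
  obtain ⟨w, u, hwu⟩ := exists_forall_minor_eq
  obtain ⟨g, hg, y, rfl⟩ := WordSystem.exists_realize_eq_add tripleWords_idempotent
    (mem_wordSpan_tripleWords n f)
  have hsum := WordSystem.sum_apply_eq_dotProduct (pts := flags) y
    fun p hp => tripleFunctional_evaluatesTo n p.2 p.1 (hwu p hp)
  have hxor : (flags.map fun p => WordSystem.evalCode 4 16 (min n 4) p.1 (cubicCode p.2)).foldr
      (· ^^^ ·) 0 = 0 := by
    rw [Nat.min_eq_left (by omega)]
    exact foldr_xor_tripleEvalCode n (Finset.mem_range.2 (by omega))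
  have hval : ∀ p ∈ flags,
      tripleFunctional n (bits 4 p.2) (w p) (u p) (tripleWords.realize n y) = c := by
    intro p hp
    rw [← h _ _ _ ((hwu p hp).trans_ne (bits_ne_zero_of_mem_flags p hp)), map_add,
      (isStable_tripleFunctional _ _ _ _).eq_zero_of_mem_hitAt hg, zero_add]
  have hodd : (flags.length : kk) = 1 := by decide +kernel
  rw [hxor, bits_zero, zero_dotProduct, List.map_congr_left hval, List.map_const',
    List.sum_replicate, nsmul_eq_mul, hodd] at hsum
  exact (one_mul c).symm.trans hsum

end TripleDetection

section ExceptionalFunctionals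

/-- The functional whose value at `varProd {i}ᶜ * f ^ 2` is `φ i f` for every letter of the triple
words. -/
def assemble (φ : Fin 4 → P4 →ₗ[kk] kk) : P4 →ₗ[kk] kk := ∑ i, φ i ∘ₗ kameko {i}ᶜ

theorem assemble_apply (φ : Fin 4 → P4 →ₗ[kk] kk) (f : P4) :
    assemble φ f = ∑ i, φ i (kameko {i}ᶜ f) := by
  simp only [assemble, LinearMap.sum_apply, LinearMap.comp_apply]

theorem assemble_varProd_compl_mul_sq (φ : Fin 4 → P4 →ₗ[kk] kk) (i : Fin 4) (f : P4) :
    assemble φ (varProd {i}ᶜ * f ^ 2) = φ i f := by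
  rw [assemble_apply, Finset.sum_eq_single i]
  · rw [kameko_varProd_mul_sq, if_pos rfl]
  · intro j _ hj
    rw [kameko_varProd_mul_sq, if_neg (by simpa using hj.symm), map_zero]
  · simp

theorem kameko_compl_singleton_sqTotal (i : Fin 4) (A : Finset (Fin 4)) (q : P4) :
    kameko {i}ᶜ (sqTotal (varProd A * q ^ 2)) =
      if A = Finset.univ then X i * sqTotal q else sqTotal (kameko {i}ᶜ (varProd A * q ^ 2)) := by
  have hfilter : (A.powerset.filter fun B => A \ B = {i}ᶜ) =
      if A = Finset.univ then {{i}} else if A = {i}ᶜ then {∅} else ∅ := by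
    revert A i
    decide +kernel
  rw [kameko_sqTotal, ← Finset.sum_filter, hfilter, kameko_varProd_mul_sq]
  split_ifs <;> simp [varProd]

theorem isStable_assemble {n : ℕ} {φ : Fin 4 → P4 →ₗ[kk] kk}
    (hφ : ∀ i, IsStable (tripleDegree n) (φ i)) (hsum : ∀ f, ∑ i, φ i (X i * f) = 0) :
    IsStable (tripleDegree (n + 1)) (assemble φ) where
  map_sqTotal f := by
    induction f using varProd_mul_sq_induction with
    | add f g hf hg => simp only [map_add, hf, hg]
    | varProd_mul_sq A q =>
      simp only [assemble_apply, kameko_compl_singleton_sqTotal]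
      split_ifs with hA
      · refine (hsum _).trans (Finset.sum_eq_zero fun i _ => ?_).symm
        rw [hA, kameko_varProd_mul_sq, if_neg (by revert i; decide), map_zero]
      · simp only [(hφ _).map_sqTotal]
  map_homogeneousComponent f := by
    simp only [assemble_apply]
    refine Finset.sum_congr rfl fun i _ => ?_
    have hcard : ({i}ᶜ : Finset (Fin 4)).card = 3 := by revert i; decide
    rw [tripleDegree, ← hcard, kameko_homogeneousComponent, (hφ i).map_homogeneousComponent]

theorem sum_sum_eq_sum_diag {ι R : Type*} [Fintype ι] [Ring R] [CharP R 2] {f : ι → ι → R}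
    (hf : ∀ i j, f i j = f j i) : ∑ i, ∑ j, f i j = ∑ i, f i i := by
  classical
  rw [← sub_eq_zero, ← Finset.sum_sub_distrib]
  have hrow (i : ι) : ∑ j, f i j - f i i = ∑ j, if i = j then 0 else f i j := by
    rw [← Finset.add_sum_erase _ _ (Finset.mem_univ i), add_sub_cancel_left,
      ← Finset.add_sum_erase _ _ (Finset.mem_univ i), if_pos rfl, zero_add]
    exact Finset.sum_congr rfl fun j hj => (if_neg (Finset.ne_of_mem_erase hj).symm).symm
  rw [Finset.sum_congr rfl fun i _ => hrow i, ← Fintype.sum_prod_type']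
  refine Finset.sum_involution (fun p _ => p.swap) (fun p _ => ?_) (fun p _ hp hswap => hp ?_)
    (fun _ _ => Finset.mem_univ _) fun p _ => p.swap_swap
  · simp only [Prod.fst_swap, Prod.snd_swap, hf p.2 p.1, eq_comm (a := p.2),
      CharTwo.add_self_eq_zero]
  · exact if_pos (congrArg Prod.snd hswap)

theorem sum_assemble_X_mul {φ : Fin 4 → Fin 4 → P4 →ₗ[kk] kk} (hφ : ∀ i j, φ i j = φ j i)
    (hdiag : ∀ f, ∑ i, φ i i (X i * f) = 0) (f : P4) : ∑ i, assemble (φ i) (X i * f) = 0 := by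
  simp only [assemble_apply]
  rw [sum_sum_eq_sum_diag]
  · simpa [kameko_X_mul, ← Finset.compl_erase] using hdiag (kameko Finset.univ f)
  · intro i j
    obtain rfl | hij := eq_or_ne i j
    · rfl
    have herase : ({j}ᶜ : Finset (Fin 4)).erase i = ({i}ᶜ : Finset (Fin 4)).erase j := by
      revert i j; decide
    rw [kameko_X_mul, if_pos (by simpa using hij), kameko_X_mul, if_pos (by simpa using hij.symm),
      hφ, herase]

theorem exists_monomial_eq_X_mul_X {a : Fin 4 →₀ ℕ} (ha : a.degree = 2) :
    ∃ i j, monomial a 1 = (X i * X j : P4) := by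
  obtain ⟨i, j, hij⟩ := Multiset.card_eq_two.1 ((Finsupp.card_toMultiset a).trans ha)
  have hsum : a = Finsupp.single i 1 + Finsupp.single j 1 :=
    (Finsupp.toMultiset_eq_iff.1 hij).trans <| by simp [← Multiset.singleton_add]
  exact ⟨i, j, by rw [X, X, monomial_mul, hsum, one_mul]⟩

/-- The sum of the values of the degree-`3` component at the vectors `v` with `v k = 0` whose
coordinates after the `i`-th vanish. -/
def flagFunctional (k i : Fin 4) : P4 →ₗ[kk] kk :=
  ∑ v : Vec with v k = 0 ∧ ∀ j, i < j → v j = 0, tripleFunctional 0 v 0 0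

theorem isStable_flagFunctional (k i : Fin 4) : IsStable 3 (flagFunctional k i) :=
  .sum fun v _ => isStable_tripleFunctional 0 v 0 0

theorem flagFunctional_X_mul_X_mul_X (k i a b c : Fin 4) :
    flagFunctional k i (X a * X b * X c) =
      ∑ v : Vec with v k = 0 ∧ ∀ j, i < j → v j = 0, v a * v b * v c := by
  simp only [flagFunctional, LinearMap.sum_apply, tripleFunctional_zero_X_mul_X_mul_X]

theorem flagFunctional_X_mul_self (k i : Fin 4) (f : P4) : flagFunctional k i (X k * f) = 0 := by
  simp only [flagFunctional, LinearMap.sum_apply]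
  refine Finset.sum_eq_zero fun v hv => ?_
  have hk : v k = 0 := (Finset.mem_filter.1 hv).2.1
  rw [tripleFunctional, LinearMap.comp_apply, AlgHom.toLinearMap_apply, map_mul,
    substM_ofColumns_X, hk]
  simp

theorem sum_flagFunctional_X_mul (k : Fin 4) (f : P4) : ∑ i, flagFunctional k i (X i * f) = 0 := by
  induction f using monomial_one_induction with
  | zero => simp
  | add f g hf hg => simp only [mul_add, map_add, Finset.sum_add_distrib, hf, hg, add_zero]
  | monomial a =>
    by_cases ha : a.degree = 2
    · obtain ⟨b, c, h⟩ := exists_monomial_eq_X_mul_X ha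
      simp only [h, ← mul_assoc, flagFunctional_X_mul_X_mul_X]
      clear h ha
      revert k b c
      decide +kernel
    · refine Finset.sum_eq_zero fun i _ => ?_
      rw [← (isStable_flagFunctional k i).map_homogeneousComponent,
        homogeneousComponent_of_mem_homog_of_ne (mul_mem_homog (X_mem_homog i)
          (monomial_mem_homog a)) (by omega), map_zero]

theorem sum_flagFunctional_X_cube (k : Fin 4) : ∑ i, flagFunctional k i (X i * X i * X i) = 1 := by
  simp only [flagFunctional_X_mul_X_mul_X]
  revert k
  decide +kernel

theorem exceptional_nil : exceptional [] = ∑ a, varProd {a}ᶜ * (X a * X a * X a) ^ 2 := by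
  have hdigits (a : Fin 4) : digits 4 (support a a a) = [a] := by revert a; decide
  refine Finset.sum_congr rfl fun a _ => ?_
  rw [List.nil_append, tripleWord_cons]
  change _ * cubic (digits 4 (support a a a)) ^ 2 = _
  rw [hdigits, cubic]

theorem exceptional_cons (k : Fin 4) (L : List (Fin 4)) :
    exceptional (k :: L) = varProd {k}ᶜ * exceptional L ^ 2 := by
  simp only [exceptional, List.cons_append, tripleWord_cons, CharTwo.sum_sq, Finset.mul_sum]

theorem assemble_exceptional_nil (φ : Fin 4 → P4 →ₗ[kk] kk) :
    assemble φ (exceptional []) = ∑ i, φ i (X i * X i * X i) := by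
  simp only [exceptional_nil, map_sum, assemble_varProd_compl_mul_sq]

theorem exceptional_nil_notMem_hitAt : exceptional [] ∉ hitAt (tripleDegree 2) := by
  intro h
  have hstable : IsStable (tripleDegree 2) (assemble (flagFunctional 0)) :=
    isStable_assemble (n := 1) (isStable_flagFunctional 0) (sum_flagFunctional_X_mul 0)
  have hzero := hstable.eq_zero_of_mem_hitAt h
  rw [assemble_exceptional_nil, sum_flagFunctional_X_cube] at hzero
  exact one_ne_zero hzero

/-- The functionals that detect `exceptional [k]` when they are assembled twice. They are
supported on the pairs of letters that contain `k`. -/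
def crossFunctional (k i j : Fin 4) : P4 →ₗ[kk] kk :=
  if i = k then flagFunctional k j else if j = k then flagFunctional k i else 0

theorem crossFunctional_comm (k i j : Fin 4) : crossFunctional k i j = crossFunctional k j i := by
  unfold crossFunctional
  split_ifs with hi hj <;> simp [*]

theorem isStable_crossFunctional (k i j : Fin 4) : IsStable 3 (crossFunctional k i j) := by
  unfold crossFunctional
  split_ifs
  · exact isStable_flagFunctional k j
  · exact isStable_flagFunctional k i
  · exact ⟨fun _ => rfl, fun _ => rfl⟩

theorem sum_crossFunctional_X_mul (k i : Fin 4) (f : P4) :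
    ∑ j, crossFunctional k i j (X j * f) = 0 := by
  obtain rfl | hik := eq_or_ne i k
  · simpa [crossFunctional] using sum_flagFunctional_X_mul i f
  · refine Finset.sum_eq_zero fun j _ => ?_
    obtain rfl | hjk := eq_or_ne j k
    · simp [crossFunctional, hik, flagFunctional_X_mul_self]
    · simp [crossFunctional, hik, hjk]

theorem exceptional_singleton_notMem_hitAt (k : Fin 4) :
    exceptional [k] ∉ hitAt (tripleDegree 3) := by
  intro h
  have hdiag (f : P4) : ∑ i, crossFunctional k i i (X i * f) = 0 := by
    refine Finset.sum_eq_zero fun i _ => ?_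
    obtain rfl | hik := eq_or_ne i k
    · simp [crossFunctional, flagFunctional_X_mul_self]
    · simp [crossFunctional, hik]
  have hstable : IsStable (tripleDegree 3) (assemble fun i => assemble (crossFunctional k i)) :=
    isStable_assemble (n := 2)
      (fun i => isStable_assemble (n := 1) (isStable_crossFunctional k i)
        (sum_crossFunctional_X_mul k i))
      (sum_assemble_X_mul (crossFunctional_comm k) hdiag)
  have hzero := hstable.eq_zero_of_mem_hitAt h
  rw [exceptional_cons, assemble_varProd_compl_mul_sq, assemble_exceptional_nil] at hzero
  simp only [crossFunctional, if_true, sum_flagFunctional_X_cube] at hzero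
  exact one_ne_zero hzero

end ExceptionalFunctionals

section KamekoUniv

variable {s : ℕ} {f g : P4}

theorem kameko_univ_sqTotal (f : P4) :
    kameko Finset.univ (sqTotal f) = sqTotal (kameko Finset.univ f) := by
  induction f using varProd_mul_sq_induction with
  | add f g hf hg => simp only [map_add, hf, hg]
  | varProd_mul_sq A q =>
    have hfilter : (A.powerset.filter fun B => A \ B = Finset.univ) =
        if A = Finset.univ then {∅} else ∅ := by
      revert A
      decide +kernel
    rw [kameko_sqTotal, ← Finset.sum_filter, hfilter, kameko_varProd_mul_sq]
    split_ifs <;> simp [varProd]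

theorem kameko_univ_mem_hitAt (hf : f ∈ hitAt (pairDegree (s + 1))) :
    kameko Finset.univ f ∈ hitAt (tripleDegree s) := by
  refine map_mem_hitAt kameko_univ_sqTotal (fun f => ?_) hf
  rw [pairDegree_succ_eq]
  exact kameko_homogeneousComponent Finset.univ _ f

theorem kameko_univ_edgeProd_mul_sq (a : Fin 6) (q : P4) :
    kameko Finset.univ (edgeProd a * q ^ 2) = 0 := by
  obtain ⟨hedge, huniv⟩ : (edge a).1 ≠ (edge a).2 ∧ {(edge a).1, (edge a).2} ≠ Finset.univ := by
    revert a
    decide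
  rw [edgeProd, ← varProd_pair hedge, kameko_varProd_mul_sq, if_neg huniv]

theorem kameko_univ_mem_hitAt_of_mem_wordSpan (hf : f ∈ pairWords.wordSpan (s + 1)) :
    kameko Finset.univ f ∈ hitAt (tripleDegree s) := by
  suffices hle : pairWords.wordSpan (s + 1) ≤
      (hitAt (tripleDegree s)).comap (kameko Finset.univ) from hle hf
  refine sup_le (fun g hg => kameko_univ_mem_hitAt hg) (Submodule.span_le.2 ?_)
  rintro _ ⟨_ | ⟨a, L⟩, k, hL, rfl⟩
  · exact absurd hL (Nat.succ_ne_zero s).symm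
  · rw [SetLike.mem_coe, Submodule.mem_comap, WordSystem.word, iterMulSq_cons]
    exact (kameko_univ_edgeProd_mul_sq a _).symm ▸ zero_mem _

theorem varProd_univ_mul_sq_mem_wordSpan (hg : g ∈ hitAt (tripleDegree s)) :
    varProd Finset.univ * g ^ 2 ∈ pairWords.wordSpan (s + 1) := by
  have hhit : hitAt (4 + 2 * tripleDegree s) ≤ pairWords.wordSpan (s + 1) := by
    rw [← pairDegree_succ_eq]
    exact WordSystem.hitAt_le_wordSpan (W := pairWords) (s + 1)
  refine mul_sq_mem_of_sqTotal (varProd_mem_homog Finset.univ) hhit (fun u => ?_) hg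
  convert add_varProd_univ_mul_kameko_sq_mem_wordSpan s
    (sqTotal (varProd Finset.univ * u ^ 2)) using 1
  rw [kameko_univ_sqTotal, kameko_varProd_mul_sq, if_pos rfl, map_mul, map_pow]
  ring

theorem mem_wordSpan_of_kameko_univ_mem_hitAt
    (hf : kameko Finset.univ f ∈ hitAt (tripleDegree s)) : f ∈ pairWords.wordSpan (s + 1) :=
  (Submodule.add_mem_iff_left _ (varProd_univ_mul_sq_mem_wordSpan hf)).1
    (add_varProd_univ_mul_kameko_sq_mem_wordSpan s f)

end KamekoUniv

section Invariants

theorem isUnit_induction {P : Mat → Prop} (one : P 1)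
    (transvection : ∀ i j, i ≠ j → P (Matrix.transvection i j 1))
    (mul : ∀ M N, P M → P N → P (M * N)) {M : Mat} (hM : IsUnit M) : P M := by
  refine Matrix.diagonal_transvection_induction_of_det_ne_zero P M
    ((Matrix.isUnit_iff_isUnit_det M).1 hM).ne_zero (fun D hD => ?_) ?_
    fun A B _ _ => mul A B
  · have hone : D = 1 := funext fun i => (zmod_two_eq_zero_or_one (D i)).resolve_left fun h =>
      hD (by rw [Matrix.det_diagonal, Finset.prod_eq_zero (Finset.mem_univ i) h])
    rwa [hone, Matrix.diagonal_one']
  · rintro ⟨i, j, hij, c⟩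
    rcases zmod_two_eq_zero_or_one c with rfl | rfl
    · simpa [Matrix.TransvectionStruct.toMatrix, Matrix.transvection_zero] using one
    · exact transvection i j hij

theorem kameko_univ_substM {M : Mat} (hM : IsUnit M) (f : P4) :
    kameko Finset.univ (substM M f) = substM M (kameko Finset.univ f) := by
  refine isUnit_induction (P := fun M => ∀ f, kameko Finset.univ (substM M f) =
    substM M (kameko Finset.univ f)) (by simp only [substM_one, implies_true])
    (fun i j hij => kameko_transvection (Finset.mem_univ i) hij) (fun M N hM hN f => ?_) hM f
  rw [← substM_substM, hN, hM, substM_substM]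

/-- The polynomials, not necessarily homogeneous, whose class in `Q_n` is fixed by `GL_4`. -/
def invariants (n : ℕ) : Submodule kk P4 :=
  ⨅ M ∈ glSet, (hitAt n).comap ((substM M).toLinearMap + LinearMap.id)

variable {n s : ℕ} {f g : P4}

theorem mem_invariants : f ∈ invariants n ↔ ∀ M, IsUnit M → substM M f + f ∈ hitAt n := by
  simp [invariants, glSet]

theorem hitAt_le_invariants (n : ℕ) : hitAt n ≤ invariants n := fun _ hf =>
  mem_invariants.2 fun M _ => add_mem (substM_mem_hitAt M hf) hf

theorem mem_invariants_of_transvection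
    (h : ∀ i j, i ≠ j → substM (Matrix.transvection i j 1) f + f ∈ hitAt n) :
    f ∈ invariants n := by
  refine mem_invariants.2 fun M => isUnit_induction (P := fun M => substM M f + f ∈ hitAt n)
    (by simp only [substM_one, CharTwo.add_self_eq_zero, zero_mem]) h fun M N hM hN => ?_
  convert add_mem (substM_mem_hitAt N hM) hN using 1
  rw [map_add, substM_substM, ← add_assoc, add_assoc (substM (M * N) f),
    CharTwo.add_self_eq_zero, add_zero]

theorem homogeneousComponent_mem_invariants (hf : f ∈ invariants n) :
    homogeneousComponent n f ∈ invariants n :=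
  (Submodule.add_mem_iff_left _ hf).1
    (hitAt_le_invariants n (homogeneousComponent_add_self_mem_hitAt n f))

theorem kameko_univ_mem_invariants (hf : f ∈ invariants (pairDegree (s + 1))) :
    kameko Finset.univ f ∈ invariants (tripleDegree s) := by
  refine mem_invariants.2 fun M hM => ?_
  rw [← kameko_univ_substM hM, ← map_add]
  exact kameko_univ_mem_hitAt (mem_invariants.1 hf M hM)

theorem Qmk_eq_zero_iff : Qmk n f = 0 ↔ f ∈ hitAt n := by
  rw [Qmk, LinearMap.comp_apply, Submodule.mkQ_apply, Submodule.Quotient.mk_eq_zero]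
  rfl

theorem QInv_glSet (n : ℕ) : QInv n glSet = (invariants n).map (Qmk n) := by
  have hmem {f : P4} (hf : f ∈ homog n) : f ∈ invPre n glSet ↔ f ∈ invariants n := by
    simp only [invPre, invariants, Submodule.mem_inf, hf, true_and, Submodule.mem_iInf,
      Submodule.mem_comap, LinearMap.sub_apply, LinearMap.add_apply, AlgHom.toLinearMap_apply,
      LinearMap.id_apply, CharTwo.sub_eq_add]
    exact forall₂_congr fun M _ => mem_hitSub_iff (add_mem (substM_mem_homog M hf) hf)
  refine le_antisymm ?_ ?_
  · rintro _ ⟨f, hf, rfl⟩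
    exact ⟨f, (hmem hf.1).1 hf, rfl⟩
  · rintro _ ⟨f, hf, rfl⟩
    refine ⟨homogeneousComponent n f, (hmem (homogeneousComponent_mem n f)).2
      (homogeneousComponent_mem_invariants hf), ?_⟩
    rw [← sub_eq_zero, ← map_sub, Qmk_eq_zero_iff, CharTwo.sub_eq_add]
    exact homogeneousComponent_add_self_mem_hitAt n f

theorem finrank_QInv_eq_zero (h : invariants n ≤ hitAt n) :
    Module.finrank kk (QInv n glSet) = 0 := by
  have hbot : QInv n glSet = ⊥ := by
    rw [QInv_glSet, eq_bot_iff, Submodule.map_le_iff_le_comap]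
    exact fun f hf => Qmk_eq_zero_iff.2 (h hf)
  rw [hbot, finrank_bot]

theorem finrank_QInv_eq_one (hg : g ∈ invariants n) (hne : g ∉ hitAt n)
    (h : ∀ f ∈ invariants n, ∃ c : kk, f + c • g ∈ hitAt n) :
    Module.finrank kk (QInv n glSet) = 1 := by
  have hspan : QInv n glSet = Submodule.span kk {Qmk n g} := by
    rw [QInv_glSet]
    refine le_antisymm ?_ ((Submodule.span_singleton_le_iff_mem _ _).2 ⟨g, hg, rfl⟩)
    rintro _ ⟨f, hf, rfl⟩
    obtain ⟨c, hc⟩ := h f hf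
    refine Submodule.mem_span_singleton.2 ⟨c, ?_⟩
    rw [← map_smul, ← sub_eq_zero, ← map_sub, Qmk_eq_zero_iff, CharTwo.sub_eq_add, add_comm]
    exact hc
  rw [hspan, finrank_span_singleton fun h => hne (Qmk_eq_zero_iff.1 h)]

theorem pluecker_ne_zero_iff {v w : Vec} : pluecker v w ≠ 0 ↔ ∃ u, minor v w u ≠ 0 := by
  revert v w
  decide +kernel

end Invariants

section PairInvariants

variable {s t : ℕ} {f g : P4} {v w : Vec}

theorem pairFunctional_eq_zero_of_mem_invariants (hf : f ∈ invariants (pairDegree s))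
    (h : pluecker v w ≠ 0) : pairFunctional s v w f = 0 := by
  let e (i : Fin 4) : Vec := Pi.single i 1
  have hconst {v w : Vec} (h : pluecker v w ≠ 0) :
      pairFunctional s v w f = pairFunctional s (e 0) (e 1) f := by
    obtain ⟨u, hu⟩ := pluecker_ne_zero_iff.1 h
    obtain ⟨M, hM, rfl, rfl, -⟩ := exists_isUnit_mulVec_single hu
    rw [← pairFunctional_substM, ← sub_eq_zero, ← map_sub, CharTwo.sub_eq_add]
    exact (isStable_pairFunctional s _ _).eq_zero_of_mem_hitAt (mem_invariants.1 hf M hM)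
  have hadd := pairFunctional_add_left s (e 0) (e 1) f
  rw [hconst (v := e 0 + e 1) (w := e 1) (by decide), hconst (v := e 1) (w := e 0) (by decide),
    CharTwo.add_self_eq_zero] at hadd
  rw [hconst h, hadd]

theorem mem_hitAt_of_kameko_univ_mem_hitAt (hf : kameko Finset.univ f ∈ hitAt (tripleDegree s))
    (h : ∀ v w, pluecker v w ≠ 0 → pairFunctional (s + 1) v w f = 0) :
    f ∈ hitAt (pairDegree (s + 1)) :=
  mem_hitAt_of_forall_pairFunctional_eq_zero (mem_wordSpan_of_kameko_univ_mem_hitAt hf) h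

theorem mem_hitAt_iff_kameko_univ_mem_hitAt (hf : f ∈ invariants (pairDegree (s + 1))) :
    f ∈ hitAt (pairDegree (s + 1)) ↔ kameko Finset.univ f ∈ hitAt (tripleDegree s) :=
  ⟨kameko_univ_mem_hitAt, fun h => mem_hitAt_of_kameko_univ_mem_hitAt h fun _ _ =>
    pairFunctional_eq_zero_of_mem_invariants hf⟩

theorem exists_mem_invariants_kameko_univ_add_mem_hitAt (ht : 2 ≤ t)
    (hg : g ∈ invariants (tripleDegree t)) :
    ∃ f ∈ invariants (pairDegree (t + 1)), kameko Finset.univ f + g ∈ hitAt (tripleDegree t) := by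
  obtain ⟨b, hb, hpair⟩ := exists_mem_wordSpan_forall_pairFunctional_eq (s := t + 1)
    (by omega) (varProd Finset.univ * g ^ 2)
  set f := varProd Finset.univ * g ^ 2 + b
  have hzero (v w : Vec) (h : pluecker v w ≠ 0) : pairFunctional (t + 1) v w f = 0 := by
    rw [map_add, hpair v w h, CharTwo.add_self_eq_zero]
  have hkameko : kameko Finset.univ f = g + kameko Finset.univ b := by
    rw [map_add, kameko_varProd_mul_sq, if_pos rfl]
  have hb : kameko Finset.univ b ∈ hitAt (tripleDegree t) :=
    kameko_univ_mem_hitAt_of_mem_wordSpan hb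
  refine ⟨f, mem_invariants.2 fun M hM => mem_hitAt_of_kameko_univ_mem_hitAt ?_ ?_, ?_⟩
  · rw [map_add, kameko_univ_substM hM, hkameko]
    exact mem_invariants.1 (add_mem hg (hitAt_le_invariants _ hb)) M hM
  · intro v w h
    obtain ⟨u, hu⟩ := pluecker_ne_zero_iff.1 h
    rw [map_add, pairFunctional_substM, hzero v w h, add_zero]
    exact hzero _ _ (pluecker_ne_zero_iff.2 ⟨_, minor_mulVec_ne_zero hM hu⟩)
  · rwa [hkameko, add_right_comm, CharTwo.add_self_eq_zero, zero_add]

theorem finrank_map_eq_of_forall_eq_zero_iff {K V A B : Type*} [Field K] [AddCommGroup V]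
    [Module K V] [AddCommGroup A] [Module K A] [AddCommGroup B] [Module K B] {p : Submodule K V}
    {f : V →ₗ[K] A} {g : V →ₗ[K] B} (h : ∀ x ∈ p, f x = 0 ↔ g x = 0) :
    Module.finrank K (p.map f) = Module.finrank K (p.map g) := by
  have hker : LinearMap.ker (f.domRestrict p) = LinearMap.ker (g.domRestrict p) := by
    ext x
    exact h x x.2
  rw [← LinearMap.range_domRestrict, ← LinearMap.range_domRestrict]
  exact ((f.domRestrict p).quotKerEquivRange.symm.trans
    ((Submodule.quotEquivOfEq _ _ hker).trans (g.domRestrict p).quotKerEquivRange)).finrank_eq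

theorem finrank_QInv_pairDegree_succ (ht : 2 ≤ t) :
    Module.finrank kk (QInv (pairDegree (t + 1)) glSet) =
      Module.finrank kk (QInv (tripleDegree t) glSet) := by
  have himage : QInv (tripleDegree t) glSet =
      (invariants (pairDegree (t + 1))).map (Qmk (tripleDegree t) ∘ₗ kameko Finset.univ) := by
    rw [QInv_glSet]
    refine le_antisymm ?_ ?_
    · rintro _ ⟨g, hg, rfl⟩
      obtain ⟨f, hf, hfg⟩ := exists_mem_invariants_kameko_univ_add_mem_hitAt ht hg
      refine ⟨f, hf, ?_⟩
      rw [LinearMap.comp_apply, ← sub_eq_zero, ← map_sub, Qmk_eq_zero_iff, CharTwo.sub_eq_add]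
      exact hfg
    · rintro _ ⟨f, hf, rfl⟩
      exact ⟨_, kameko_univ_mem_invariants hf, rfl⟩
  rw [himage, QInv_glSet]
  refine finrank_map_eq_of_forall_eq_zero_iff fun f hf => ?_
  rw [LinearMap.comp_apply, Qmk_eq_zero_iff, Qmk_eq_zero_iff]
  exact mem_hitAt_iff_kameko_univ_mem_hitAt hf

theorem invariants_pairDegree_succ_le
    (h : invariants (tripleDegree t) ≤ hitAt (tripleDegree t)) :
    invariants (pairDegree (t + 1)) ≤ hitAt (pairDegree (t + 1)) := fun _ hf =>
  (mem_hitAt_iff_kameko_univ_mem_hitAt hf).2 (h (kameko_univ_mem_invariants hf))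

end PairInvariants

section DegreeFour

variable {f : P4}

theorem mem_hitAt_zero_or_add_one_mem_hitAt_zero (f : P4) : f ∈ hitAt 0 ∨ f + 1 ∈ hitAt 0 := by
  rcases zmod_two_eq_zero_or_one (coeff 0 f) with h | h
  · exact Or.inl (mem_hitAt_of_homogeneousComponent_eq_zero (by simp [h]))
  · exact Or.inr (mem_hitAt_of_homogeneousComponent_eq_zero
      (by simp [h, CharTwo.add_self_eq_zero]))

theorem pairFunctional_one_varProd_univ {v : Vec} (hv : v 0 = 0) :
    pairFunctional 1 v (Pi.single 0 1) (varProd Finset.univ) = v 1 * v 2 * v 3 := by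
  have hsubst : substM (ofColumns v (Pi.single 0 1) 0 0) (varProd Finset.univ) =
      (v 1 * v 2 * v 3) • (varProd {0, 1} * (varProd {0} * 1 ^ 2) ^ 2) := by
    simp [varProd, Fin.prod_univ_four, hv, smul_eq_C_mul, -substM_X, substM_ofColumns_X]
    ring
  simp only [pairFunctional, LinearMap.comp_apply, AlgHom.toLinearMap_apply, hsubst, map_smul,
    List.replicate_one, List.cons_append, List.nil_append, spikeCoeff]
  rw [kameko_varProd_mul_sq, if_pos rfl, kameko_varProd_mul_sq, if_pos rfl]
  simp

/-- Representatives `v` of the planes spanned by `v` and the first unit vector. -/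
def planeReps : Finset Vec := Finset.univ.filter fun v => v 0 = 0 ∧ pluecker v (Pi.single 0 1) ≠ 0

theorem sum_pairFunctional_one_eq_zero_of_mem_wordSpan (hf : f ∈ pairWords.wordSpan 1) :
    ∑ v ∈ planeReps, pairFunctional 1 v (Pi.single 0 1) f = 0 := by
  rw [← LinearMap.sum_apply, ← LinearMap.mem_ker]
  suffices hle : pairWords.wordSpan 1 ≤ LinearMap.ker _ from hle hf
  refine sup_le (fun g hg => (IsStable.sum fun v _ =>
    isStable_pairFunctional 1 v (Pi.single 0 1)).eq_zero_of_mem_hitAt hg) (Submodule.span_le.2 ?_)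
  rintro _ ⟨L, k, hL, rfl⟩
  obtain ⟨a, rfl⟩ := List.length_eq_one_iff.1 hL
  have hword (v w : Vec) : pairFunctional 1 v w (pairWords.word [a] k) = pluecker v w a * v k := by
    simpa using pairFunctional_word v w [a] k
  rw [SetLike.mem_coe, LinearMap.mem_ker, LinearMap.sum_apply]
  simp only [hword]
  clear hL hword
  revert a k
  decide +kernel

theorem invariants_pairDegree_one_le : invariants (pairDegree 1) ≤ hitAt (pairDegree 1) := by
  intro f hf
  rw [mem_hitAt_iff_kameko_univ_mem_hitAt (s := 0) hf]
  refine (mem_hitAt_zero_or_add_one_mem_hitAt_zero _).resolve_right fun hone => ?_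
  have hspan : f + varProd Finset.univ ∈ pairWords.wordSpan 1 := by
    have hadd := varProd_univ_mul_sq_mem_wordSpan (s := 0) hone
    convert add_mem hadd (add_varProd_univ_mul_kameko_sq_mem_wordSpan 0 f) using 1
    linear_combination -varProd Finset.univ *
      (kameko Finset.univ f ^ 2 + kameko Finset.univ f) * two_eq_zero
  have hsum := sum_pairFunctional_one_eq_zero_of_mem_wordSpan hspan
  have hvalue : ∀ v ∈ planeReps, pairFunctional 1 v (Pi.single 0 1) (f + varProd Finset.univ) =
      v 1 * v 2 * v 3 := fun v hv => by
    obtain ⟨-, hv0, hv⟩ := Finset.mem_filter.1 hv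
    rw [map_add, pairFunctional_eq_zero_of_mem_invariants hf hv, zero_add,
      pairFunctional_one_varProd_univ hv0]
  rw [Finset.sum_congr rfl hvalue] at hsum
  revert hsum
  decide +kernel

end DegreeFour

section TripleInvariants

variable {n r : ℕ} {i j : Fin 4} {f g : P4}

theorem tripleFunctional_eq_of_mem_invariants (hf : f ∈ invariants (tripleDegree (n + 1)))
    {v w u : Vec} (h : minor v w u ≠ 0) : tripleFunctional n v w u f =
      tripleFunctional n (Pi.single 0 1) (Pi.single 1 1) (Pi.single 2 1) f := by
  obtain ⟨M, hM, rfl, rfl, rfl⟩ := exists_isUnit_mulVec_single h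
  rw [← tripleFunctional_substM, ← sub_eq_zero, ← map_sub, CharTwo.sub_eq_add]
  exact (isStable_tripleFunctional n _ _ _).eq_zero_of_mem_hitAt (mem_invariants.1 hf M hM)

theorem mem_exceptionalSpan_of_mem_invariants (hn : n ≤ 2)
    (hf : f ∈ invariants (tripleDegree (n + 1))) : f ∈ exceptionalSpan n :=
  mem_exceptionalSpan_of_forall_tripleFunctional_eq_zero fun _ _ _ h =>
    eq_zero_of_forall_tripleFunctional_eq hn fun _ _ _ h' =>
      (tripleFunctional_eq_of_mem_invariants hf h').trans
        (tripleFunctional_eq_of_mem_invariants hf h).symm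

theorem exceptionalSpan_eq_hitAt (h : exceptionalLists n = []) :
    exceptionalSpan n = hitAt (tripleDegree (n + 1)) := by
  simp [exceptionalSpan, h]

theorem exceptionalSpan_one :
    exceptionalSpan 1 = hitAt (tripleDegree 2) ⊔ Submodule.span kk {exceptional []} := by
  simp [exceptionalSpan, exceptionalLists]

theorem exceptionalSpan_two : exceptionalSpan 2 =
    hitAt (tripleDegree 3) ⊔ Submodule.span kk (Set.range fun k => exceptional [k]) := by
  rw [exceptionalSpan]
  congr 2
  ext f
  simp [exceptionalLists, Fin.exists_fin_succ, eq_comm (b := f)]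

theorem isUnit_transvection {ι R : Type*} [Fintype ι] [DecidableEq ι] [CommRing R] {i j : ι}
    (hij : i ≠ j) (c : R) : IsUnit (Matrix.transvection i j c) := by
  rw [Matrix.isUnit_iff_isUnit_det, Matrix.det_transvection_of_ne i j hij]
  exact isUnit_one

theorem substM_transvection_varProd_compl_mul_sq (r : ℕ) (hij : i ≠ j) (k : Fin 4) (f : P4) :
    substM (Matrix.transvection i j 1) (varProd {k}ᶜ) * f ^ 2 +
      (varProd {k}ᶜ * f ^ 2 + if k = j then varProd {i}ᶜ * f ^ 2 else 0) ∈
        hitAt (tripleDegree (r + 2)) := by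
  obtain rfl | hki := eq_or_ne k i
  · rw [substM_transvection_varProd_of_notMem j (by simp), if_neg hij, add_zero,
      CharTwo.add_self_eq_zero]
    exact zero_mem _
  rw [substM_transvection_varProd_of_mem j (by simpa using hki.symm), add_mul, add_add_add_comm,
    CharTwo.add_self_eq_zero, zero_add]
  obtain rfl | hkj := eq_or_ne k j
  · have hi : varProd {i}ᶜ = X k * varProd (({k}ᶜ : Finset (Fin 4)).erase i) := by
      have herase : ({k}ᶜ : Finset (Fin 4)).erase i = ({i}ᶜ : Finset (Fin 4)).erase k := by
        rw [← Finset.compl_insert, ← Finset.compl_insert, Finset.pair_comm]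
      rw [herase, varProd, varProd]
      exact (Finset.mul_prod_erase _ _ (by simpa using hki)).symm
    rw [if_pos rfl, hi, CharTwo.add_self_eq_zero]
    exact zero_mem _
  · obtain ⟨l, hjl, herase⟩ : ∃ l, j ≠ l ∧ ({k}ᶜ : Finset (Fin 4)).erase i = {j, l} := by
      revert i j k
      decide
    rw [if_neg hkj, add_zero, herase, varProd_pair hjl]
    convert X_mul_sq_mem_hitAt_tripleDegree r l (X j * f) using 1
    ring

theorem substM_transvection_varProd_compl_mul_sq_add_mem_hitAt (hij : i ≠ j) (k : Fin 4)
    (h : substM (Matrix.transvection i j 1) f + g ∈ hitAt (tripleDegree (r + 1))) :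
    substM (Matrix.transvection i j 1) (varProd {k}ᶜ * f ^ 2) +
      (varProd {k}ᶜ * g ^ 2 + if k = j then varProd {i}ᶜ * g ^ 2 else 0) ∈
        hitAt (tripleDegree (r + 2)) := by
  set T := substM (Matrix.transvection i j 1)
  have hT : T (varProd {k}ᶜ) * T f ^ 2 + (varProd {k}ᶜ * T f ^ 2 +
      if k = j then varProd {i}ᶜ * T f ^ 2 else 0) ∈ hitAt (tripleDegree (r + 2)) :=
    substM_transvection_varProd_compl_mul_sq r hij k (T f)
  have hk := varProd_compl_mul_sq_mem_hitAt k h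
  rw [map_mul, map_pow]
  split_ifs at hT ⊢
  · convert add_mem hT (add_mem hk (varProd_compl_mul_sq_mem_hitAt i h)) using 1
    linear_combination -(varProd {k}ᶜ + varProd {i}ᶜ) * (T f ^ 2 + T f * g) * two_eq_zero
  · convert add_mem hT hk using 1
    linear_combination -varProd {k}ᶜ * (T f ^ 2 + T f * g) * two_eq_zero

theorem substM_transvection_X_cube_add_mem_hitAt (hij : i ≠ j) (k : Fin 4) :
    substM (Matrix.transvection i j 1) (X k * X k * X k) +
      (X k * X k * X k + if k = i then X j * X j * X j else 0) ∈ hitAt n := by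
  simp only [map_mul]
  obtain rfl | hki := eq_or_ne k i
  · rw [substM_transvection_X_self, if_pos rfl]
    convert sq1_two_mem_hitAt n k j 1 using 1
    linear_combination (X k * X k * X k + X j * X j * X j + X k * X k * X j + X k * X j * X j) *
      two_eq_zero
  · rw [substM_transvection_X_of_ne j hki, if_neg hki, add_zero, CharTwo.add_self_eq_zero]
    exact zero_mem _

theorem exceptional_nil_mem_invariants : exceptional [] ∈ invariants (tripleDegree 2) := by
  refine mem_invariants_of_transvection fun i j hij => ?_
  convert sum_mem fun k (_ : k ∈ Finset.univ) =>
    substM_transvection_varProd_compl_mul_sq_add_mem_hitAt (r := 0) hij k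
      (substM_transvection_X_cube_add_mem_hitAt hij k) using 1
  simp only [CharTwo.add_sq, mul_add, Finset.sum_add_distrib, ← map_sum, ← exceptional_nil,
    ite_pow, mul_ite, ne_eq, OfNat.ofNat_ne_zero, not_false_eq_true, zero_pow, mul_zero,
    Finset.sum_ite_eq', Finset.mem_univ, if_true, hij.symm, if_false, add_zero]
  rw [add_assoc (exceptional []), CharTwo.add_self_eq_zero, add_zero]

theorem substM_transvection_exceptional_singleton_add_mem_hitAt (hij : i ≠ j) (k : Fin 4) :
    substM (Matrix.transvection i j 1) (exceptional [k]) +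
      (exceptional [k] + if k = j then exceptional [i] else 0) ∈ hitAt (tripleDegree 3) := by
  simp only [exceptional_cons]
  exact substM_transvection_varProd_compl_mul_sq_add_mem_hitAt (r := 1) hij k
    (mem_invariants.1 exceptional_nil_mem_invariants _ (isUnit_transvection hij 1))

theorem eq_zero_of_sum_smul_exceptional_mem_invariants {c : Fin 4 → kk}
    (h : ∑ k, c k • exceptional [k] ∈ invariants (tripleDegree 3)) : c = 0 := by
  ext j
  obtain ⟨i, hij⟩ := exists_ne j
  have hsum := sum_mem fun k (_ : k ∈ Finset.univ) => (hitAt (tripleDegree 3)).smul_mem (c k)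
    (substM_transvection_exceptional_singleton_add_mem_hitAt hij k)
  simp only [smul_add, smul_ite, smul_zero, Finset.sum_add_distrib, ← map_smul, ← map_sum,
    Finset.sum_ite_eq', Finset.mem_univ, if_true, ← add_assoc] at hsum
  have hsmul : c j • exceptional [i] ∈ hitAt (tripleDegree 3) :=
    (Submodule.add_mem_iff_right _ (mem_invariants.1 h _ (isUnit_transvection hij 1))).1 hsum
  by_contra hj
  exact exceptional_singleton_notMem_hitAt i ((Submodule.smul_mem_iff _ hj).1 hsmul)

theorem invariants_tripleDegree_one_le : invariants (tripleDegree 1) ≤ hitAt (tripleDegree 1) :=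
  fun f hf => by
    rw [← exceptionalSpan_eq_hitAt (n := 0) rfl]
    exact mem_exceptionalSpan_of_mem_invariants (by omega) hf

theorem finrank_QInv_tripleDegree_two : Module.finrank kk (QInv (tripleDegree 2) glSet) = 1 := by
  refine finrank_QInv_eq_one exceptional_nil_mem_invariants exceptional_nil_notMem_hitAt
    fun f hf => ?_
  have hmem := mem_exceptionalSpan_of_mem_invariants (n := 1) (by omega) hf
  rw [exceptionalSpan_one, Submodule.mem_sup] at hmem
  obtain ⟨h, hh, e, he, rfl⟩ := hmem
  obtain ⟨c, rfl⟩ := Submodule.mem_span_singleton.1 he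
  exact ⟨c, by rwa [add_assoc, CharTwo.add_self_eq_zero, add_zero]⟩

theorem invariants_tripleDegree_three_le :
    invariants (tripleDegree 3) ≤ hitAt (tripleDegree 3) := by
  intro f hf
  have hmem := mem_exceptionalSpan_of_mem_invariants (n := 2) le_rfl hf
  rw [exceptionalSpan_two, Submodule.mem_sup] at hmem
  obtain ⟨h, hh, e, he, rfl⟩ := hmem
  obtain ⟨c, rfl⟩ := (Submodule.mem_span_range_iff_exists_fun kk).1 he
  rw [Submodule.add_mem_iff_right _ (hitAt_le_invariants _ hh)] at hf
  rwa [eq_zero_of_sum_smul_exceptional_mem_invariants hf, Finset.sum_eq_zero (by simp), add_zero]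

theorem finrank_QInv_tripleDegree_succ (hn : 3 ≤ n) :
    Module.finrank kk (QInv (tripleDegree (n + 1)) glSet) = 1 := by
  obtain ⟨m, rfl⟩ := Nat.exists_eq_add_of_le' hn
  have hmem {f : P4} (h : ∀ v w u, minor v w u ≠ 0 → tripleFunctional (m + 3) v w u f = 0) :
      f ∈ hitAt (tripleDegree (m + 3 + 1)) := by
    rw [← exceptionalSpan_eq_hitAt (n := m + 3) rfl]
    exact mem_exceptionalSpan_of_forall_tripleFunctional_eq_zero h
  obtain ⟨g, hg⟩ := exists_forall_tripleFunctional_eq_one hn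
  let φ := tripleFunctional (m + 3) (Pi.single 0 1) (Pi.single 1 1) (Pi.single 2 1)
  refine finrank_QInv_eq_one (g := g) (mem_invariants.2 fun M hM => hmem fun v w u h => ?_)
    (fun hhit => ?_) fun f hf => ⟨φ f, hmem fun v w u h => ?_⟩
  · rw [map_add, tripleFunctional_substM, hg v w u h, hg _ _ _ (minor_mulVec_ne_zero hM h),
      CharTwo.add_self_eq_zero]
  · have hone : φ g = 1 := hg _ _ _ (by decide)
    have hzero : φ g = 0 := (isStable_tripleFunctional _ _ _ _).eq_zero_of_mem_hitAt hhit
    exact one_ne_zero (hone.symm.trans hzero)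
  · rw [map_add, map_smul, hg v w u h, smul_eq_mul, mul_one,
      tripleFunctional_eq_of_mem_invariants hf h, CharTwo.add_self_eq_zero]

end TripleInvariants

theorem pairDegree_eq (s : ℕ) : pairDegree s = 2 * (2 ^ s - 1) + 2 ^ s := by
  induction s with
  | zero => rfl
  | succ s ih =>
    have hpos : 0 < 2 ^ s := by positivity
    rw [pairDegree, ih, pow_succ]
    omega

/-- In degree `n = 2(2^s-1) + 2^s = 3·2^s - 2` (`s ≥ 1`), the space of
`GL_4(F_2)`-invariants of `Q_n` has dimension `0` if `s ∈ {1,2,4}` and `1` otherwise. -/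
theorem statement_4 (s n : ℕ) (hs : 1 ≤ s)
    (hn : n = 2 * (2 ^ s - 1) + 2 ^ s) :
    (s = 1 ∨ s = 2 ∨ s = 4 → Module.finrank kk ↥(QInv n glSet) = 0) ∧
    (s ≠ 1 → s ≠ 2 → s ≠ 4 → Module.finrank kk ↥(QInv n glSet) = 1) := by
  rw [← pairDegree_eq] at hn
  subst hn
  refine ⟨?_, fun h1 h2 h4 => ?_⟩
  · rintro (rfl | rfl | rfl)
    · exact finrank_QInv_eq_zero invariants_pairDegree_one_le
    · exact finrank_QInv_eq_zero (invariants_pairDegree_succ_le invariants_tripleDegree_one_le)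
    · exact finrank_QInv_eq_zero (invariants_pairDegree_succ_le invariants_tripleDegree_three_le)
  · obtain ⟨t, rfl⟩ := Nat.exists_eq_add_of_le' hs
    rw [finrank_QInv_pairDegree_succ (by omega)]
    obtain rfl | ht := eq_or_ne t 2
    · exact finrank_QInv_tripleDegree_two
    · obtain ⟨n, rfl⟩ := Nat.exists_eq_succ_of_ne_zero (n := t) (by omega)
      exact finrank_QInv_tripleDegree_succ (by omega)

end
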